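/- arXiv:1110.4085 — 2 statements merged into one kernel-verified Lean document; each statement's English description precedes it below -/
import Mathlib

section
/- Let n ≥ 1 be an integer, Ω ⊂ ℝⁿ a bounded open set, T > 0, x₀ ∈ ℝⁿ \ cl(Ω), and β ∈ (0,1) with sup_{x∈Ω}|x−x₀| < βT. Let C₀ > 0 be such that ψ ≥ 1 on Ω × (−T,T), where ψ(x,t) = |x−x₀|² − βt² + C₀. Then there exists λ > 0, independent of m, such that for every m > 0 there exist s₀(m) > 0 and M(m) > 0 with the following property: with φ = e^{λψ}, for every measurable potential p : Ω × (−T,T) → ℝ with |p| ≤ m almost everywhere, every s ≥ s₀(m), and every smooth function z : ℝⁿ × ℝ → ℝ vanishing for x outside a compact subset of Ω and satisfying z(x,0) = 0 for all x ∈ Ω: s^{1/2} ∫_Ω e^{2sφ(x,0)} |∂ₜz(x,0)|² dx ≤ M ∫_{−T}^{T} ∫_Ω e^{2sφ} |∂ₜ²z − Δz + pz|² dx dt. -/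
open MeasureTheory Real Set
open scoped RealInnerProductSpace

/-- The Laplacian of a real-valued function on Euclidean space. -/
noncomputable def lap {n : ℕ} (f : EuclideanSpace ℝ (Fin n) → ℝ) (x : EuclideanSpace ℝ (Fin n)) : ℝ :=
  ∑ i : Fin n, fderiv ℝ (fun y => fderiv ℝ f y (EuclideanSpace.single i 1)) x (EuclideanSpace.single i 1)

/-- The weight `ψ(x,t) = |x - x₀|² - β t² + C₀`. -/
noncomputable def psi {n : ℕ} (x₀ : EuclideanSpace ℝ (Fin n)) (β C₀ : ℝ)
    (x : EuclideanSpace ℝ (Fin n)) (t : ℝ) : ℝ :=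
  ‖x - x₀‖ ^ 2 - β * t ^ 2 + C₀

/-- The Carleman weight `φ = e^{λψ}`. -/
noncomputable def phi {n : ℕ} (x₀ : EuclideanSpace ℝ (Fin n)) (β C₀ l : ℝ)
    (x : EuclideanSpace ℝ (Fin n)) (t : ℝ) : ℝ :=
  Real.exp (l * psi x₀ β C₀ x t)

/-! ### Calculus layer -/

/-- directional derivative -/
noncomputable def DD {n : ℕ} (v : EuclideanSpace ℝ (Fin n) × ℝ)
    (u : EuclideanSpace ℝ (Fin n) × ℝ → ℝ) (q : EuclideanSpace ℝ (Fin n) × ℝ) : ℝ :=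
  fderiv ℝ u q v

/-- time direction -/
noncomputable def et {n : ℕ} : EuclideanSpace ℝ (Fin n) × ℝ := (0, 1)

/-- space directions -/
noncomputable def ex {n : ℕ} (i : Fin n) : EuclideanSpace ℝ (Fin n) × ℝ :=
  (EuclideanSpace.single i 1, 0)

/-- smoothness -/
def Sm {n : ℕ} (u : EuclideanSpace ℝ (Fin n) × ℝ → ℝ) : Prop := ContDiff ℝ (⊤ : ℕ∞) u

/-- support in the space variable -/
def XS {n : ℕ} (K : Set (EuclideanSpace ℝ (Fin n))) (u : EuclideanSpace ℝ (Fin n) × ℝ → ℝ) : Prop :=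
  ∀ x ∉ K, ∀ t : ℝ, u (x, t) = 0

section calculus
variable {n : ℕ}
local notation "EV" => EuclideanSpace ℝ (Fin n) × ℝ

theorem Sm.diff {u : EV → ℝ} (hu : Sm u) : Differentiable ℝ u :=
  ContDiff.differentiable hu (by simp)

theorem Sm.cont {u : EV → ℝ} (hu : Sm u) : Continuous u := ContDiff.continuous hu

theorem Sm.DD {u : EV → ℝ} (hu : Sm u) (v : EV) : Sm (DD v u) := by
  unfold Sm at *
  have : ContDiff ℝ (⊤ : ℕ∞) (fderiv ℝ u) := hu.fderiv_right (by simp)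
  exact this.clm_apply contDiff_const

theorem Sm.add {u w : EV → ℝ} (hu : Sm u) (hw : Sm w) : Sm (fun q => u q + w q) :=
  ContDiff.add hu hw
theorem Sm.sub {u w : EV → ℝ} (hu : Sm u) (hw : Sm w) : Sm (fun q => u q - w q) :=
  ContDiff.sub hu hw
theorem Sm.mul {u w : EV → ℝ} (hu : Sm u) (hw : Sm w) : Sm (fun q => u q * w q) :=
  ContDiff.mul hu hw
theorem Sm.pow {u : EV → ℝ} (hu : Sm u) (k : ℕ) : Sm (fun q => u q ^ k) :=
  ContDiff.pow hu k
theorem Sm.neg {u : EV → ℝ} (hu : Sm u) : Sm (fun q => - u q) :=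
  ContDiff.neg hu
theorem Sm.cst (c : ℝ) : Sm (fun _ : EV => c) := contDiff_const
theorem Sm.exp {u : EV → ℝ} (hu : Sm u) : Sm (fun q => Real.exp (u q)) :=
  ContDiff.exp hu
theorem Sm.sum {ι : Type*} {u : ι → EV → ℝ} {S : Finset ι} (hu : ∀ i, Sm (u i)) :
    Sm (fun q => ∑ i ∈ S, u i q) :=
  ContDiff.sum (fun i _ => hu i)

theorem XS.DD {K : Set (EuclideanSpace ℝ (Fin n))} (hK : IsClosed K) {u : EV → ℝ} (hu : XS K u)
    (v : EV) : XS K (DD v u) := by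
  intro x hx t
  have : u =ᶠ[nhds (x, t)] (fun _ => (0:ℝ)) := by
    have h1 : (Kᶜ ×ˢ univ : Set (EuclideanSpace ℝ (Fin n) × ℝ)) ∈ nhds (x, t) :=
      (hK.isOpen_compl.prod isOpen_univ).mem_nhds ⟨hx, mem_univ _⟩
    filter_upwards [h1] with q hq
    exact hu q.1 hq.1 q.2
  unfold _root_.DD
  rw [this.fderiv_eq]; simp

/-- directional derivative relation -/
def HD (v : EV) (u : EV → ℝ) (u' : ℝ) (q : EV) : Prop :=
  HasDerivAt (fun τ : ℝ => u (q + τ • v)) u' 0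

theorem Sm.hd {u : EV → ℝ} (hu : Sm u) (v q : EV) : HD v u (_root_.DD v u q) q :=
  (hu.diff q).hasFDerivAt.hasLineDerivAt v

theorem HD.DD_eq {u : EV → ℝ} {v q : EV} {c : ℝ} (h : HD v u c q) (hu : Sm u) :
    _root_.DD v u q = c := HasDerivAt.unique (hu.hd v q) h

theorem HD.add {u w : EV → ℝ} {v q : EV} {a b : ℝ} (hu : HD v u a q) (hw : HD v w b q) :
    HD v (fun q => u q + w q) (a + b) q := HasDerivAt.add hu hw
theorem HD.sub {u w : EV → ℝ} {v q : EV} {a b : ℝ} (hu : HD v u a q) (hw : HD v w b q) :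
    HD v (fun q => u q - w q) (a - b) q := HasDerivAt.sub hu hw
theorem HD.mul {u w : EV → ℝ} {v q : EV} {a b : ℝ} (hu : HD v u a q) (hw : HD v w b q) :
    HD v (fun q => u q * w q) (a * w q + u q * b) q := by
  have := HasDerivAt.fun_mul hu hw
  simpa [HD] using this
theorem HD.cmul {w : EV → ℝ} {v q : EV} {b : ℝ} (c : ℝ) (hw : HD v w b q) :
    HD v (fun q => c * w q) (c * b) q := HasDerivAt.const_mul c hw
theorem HD.cst {v q : EV} (c : ℝ) :
    HD v (fun _ => c) 0 q := hasDerivAt_const _ _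
theorem HD.sq {u : EV → ℝ} {v q : EV} {a : ℝ} (hu : HD v u a q) :
    HD v (fun q => u q ^ 2) (2 * u q * a) q := by
  have := HasDerivAt.fun_pow hu 2
  simpa [HD] using this
theorem HD.cube {u : EV → ℝ} {v q : EV} {a : ℝ} (hu : HD v u a q) :
    HD v (fun q => u q ^ 3) (3 * u q ^ 2 * a) q := by
  have := HasDerivAt.fun_pow hu 3
  simpa [HD] using this
theorem HD.exp {u : EV → ℝ} {v q : EV} {a : ℝ} (hu : HD v u a q) :
    HD v (fun q => Real.exp (u q)) (Real.exp (u q) * a) q := by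
  have := HasDerivAt.exp hu
  simpa [HD] using this
theorem HD.sum {ι : Type*} {u : ι → EV → ℝ} {S : Finset ι} {v q : EV} {a : ι → ℝ}
    (hu : ∀ i, HD v (u i) (a i) q) :
    HD v (fun q => ∑ i ∈ S, u i q) (∑ i ∈ S, a i) q := by
  have := HasDerivAt.fun_sum (u := S) (fun i _ => hu i)
  simpa [HD, Finset.sum_apply] using this
theorem HD.eq {u : EV → ℝ} {v q : EV} {a b : ℝ} (hu : HD v u a q) (h : a = b) : HD v u b q := h ▸ hu

theorem DD_comm {u : EV → ℝ} (hu : Sm u) (v v' q : EV) : DD v (DD v' u) q = DD v' (DD v u) q := by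
  have hs : IsSymmSndFDerivAt ℝ u q := by
    refine ContDiffAt.isSymmSndFDerivAt (n := (⊤ : ℕ∞)) (ContDiff.contDiffAt hu) ?_
    simp only [minSmoothness_of_isRCLikeNormedField]
    exact WithTop.coe_le_coe.2 (le_top (a := (2 : ℕ∞)))
  have hd : Differentiable ℝ (fderiv ℝ u) :=
    (ContDiff.fderiv_right (m := (⊤ : ℕ∞)) hu (by simp)).differentiable (by simp)
  have key : ∀ a b : EV, DD a (DD b u) q = fderiv ℝ (fderiv ℝ u) q a b := by
    intro a b
    unfold DD
    rw [fderiv_clm_apply (hd q) (differentiableAt_const b)]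
    simp
  rw [key, key]; exact hs.eq v v'

/-- space-time slab measure -/
noncomputable def mu (n : ℕ) (T : ℝ) : Measure (EuclideanSpace ℝ (Fin n) × ℝ) :=
  (volume : Measure (EuclideanSpace ℝ (Fin n))).prod (volume.restrict (Ioo 0 T))

theorem integrable_slice {K : Set (EuclideanSpace ℝ (Fin n))} (hK : IsCompact K) {u : EV → ℝ}
    (hu : Continuous u) (hs : XS K u) (t : ℝ) : Integrable (fun x => u (x, t)) := by
  apply Continuous.integrable_of_hasCompactSupport (by fun_prop)
  exact HasCompactSupport.intro hK (fun x hx => hs x hx t)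

theorem integrable_prod_gen {K : Set (EuclideanSpace ℝ (Fin n))} (hK : IsCompact K) {u : EV → ℝ}
    (hu : Continuous u) (hs : XS K u) (a b : ℝ) : Integrable u
    ((volume : Measure (EuclideanSpace ℝ (Fin n))).prod (volume.restrict (Ioo a b))) := by
  have h1 : IntegrableOn u (K ×ˢ Icc a b) volume :=
    hu.continuousOn.integrableOn_compact (hK.prod isCompact_Icc)
  have h2 : IntegrableOn u (univ ×ˢ Ioo a b) volume := by
    have h3 : IntegrableOn u (K ×ˢ Ioo a b) volume :=
      h1.mono_set (prod_mono_right Ioo_subset_Icc_self)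
    refine h3.of_forall_sdiff_eq_zero (MeasurableSet.univ.prod measurableSet_Ioo) ?_
    rintro ⟨x, t⟩ ⟨h, h'⟩
    apply hs
    intro hx
    exact h' ⟨hx, h.2⟩
  unfold IntegrableOn at h2
  rw [Measure.volume_eq_prod, ← Measure.prod_restrict, Measure.restrict_univ] at h2
  exact h2

theorem integrable_mu {K : Set (EuclideanSpace ℝ (Fin n))} (hK : IsCompact K) {u : EV → ℝ}
    (hu : Continuous u) (hs : XS K u) (T : ℝ) : Integrable u (mu n T) :=
  integrable_prod_gen hK hu hs 0 T

theorem int_Dx {K : Set (EuclideanSpace ℝ (Fin n))} (hK : IsCompact K) {u : EV → ℝ}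
    (hu : Sm u) (hs : XS K u) (T : ℝ) (i : Fin n) : ∫ q, DD (ex i) u q ∂(mu n T) = 0 := by
  have hI := integrable_mu hK (hu.DD (ex i)).cont (hs.DD hK.isClosed (ex i)) T
  unfold mu at *
  rw [integral_prod_symm _ hI]
  have : ∀ t : ℝ, ∫ x, DD (ex i) u (x, t) = 0 := by
    intro t
    have hd : ∀ x : EuclideanSpace ℝ (Fin n), HasFDerivAt (fun x => u (x, t))
        ((fderiv ℝ u (x, t)).comp (ContinuousLinearMap.inl ℝ _ ℝ)) x := by
      intro x
      exact (hu.diff (x, t)).hasFDerivAt.comp x (hasFDerivAt_prodMk_left x t)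
    have he : ∀ x, DD (ex i) u (x, t) = fderiv ℝ (fun x => u (x, t)) x (EuclideanSpace.single i 1) := by
      intro x
      rw [(hd x).fderiv]; simp [DD, ex]
    have h := integral_mul_fderiv_eq_neg_fderiv_mul_of_integrable (𝕜 := ℝ)
      (μ := (volume : Measure (EuclideanSpace ℝ (Fin n))))
      (f := fun _ => (1:ℝ)) (g := fun x => u (x, t)) (v := EuclideanSpace.single i 1)
      (by simp) (by
        simp only [← he, one_mul]
        exact integrable_slice hK (hu.DD (ex i)).cont (hs.DD hK.isClosed (ex i)) t)
      (by simpa using integrable_slice hK hu.cont hs t)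
      (fun x _ => differentiableAt_const _) (fun x _ => (hd x).differentiableAt)
    simp only [← he, one_mul] at h
    rw [h]; simp
  simp [this]

theorem hasDerivAt_slice {u : EV → ℝ} (hu : Sm u) (x : EuclideanSpace ℝ (Fin n)) (t : ℝ) :
    HasDerivAt (fun t => u (x, t)) (DD et u (x, t)) t := by
  have := (hu.diff (x, t)).hasFDerivAt.comp_hasDerivAt t
    ((hasDerivAt_const t x).prodMk (hasDerivAt_id t))
  exact this

theorem int_Dt {K : Set (EuclideanSpace ℝ (Fin n))} (hK : IsCompact K) {u : EV → ℝ}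
    (hu : Sm u) (hs : XS K u) {T : ℝ} (hT : 0 ≤ T) :
    ∫ q, DD et u q ∂(mu n T) = (∫ x, u (x, T)) - ∫ x, u (x, 0) := by
  have hI := integrable_mu hK (hu.DD et).cont (hs.DD hK.isClosed et) T
  unfold mu at *
  rw [integral_prod _ hI, ← integral_sub (integrable_slice hK hu.cont hs T)
    (integrable_slice hK hu.cont hs 0)]
  congr 1
  ext x
  rw [← integral_Ioc_eq_integral_Ioo, ← intervalIntegral.integral_of_le hT]
  refine intervalIntegral.integral_eq_sub_of_hasDerivAt (fun t _ => hasDerivAt_slice hu x t) ?_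
  have := (hu.DD (et (n := n))).cont
  exact Continuous.intervalIntegrable (by fun_prop) _ _

end calculus

/-! ### The weights and the fundamental pointwise identity -/
section weights
variable {n : ℕ}
local notation "EV" => EuclideanSpace ℝ (Fin n) × ℝ

/-- coordinates of `x - x₀` -/
noncomputable def yy (x₀ : EuclideanSpace ℝ (Fin n)) (i : Fin n) (q : EV) : ℝ := q.1 i - x₀ i
/-- squared distance -/
noncomputable def rr (x₀ : EuclideanSpace ℝ (Fin n)) (q : EV) : ℝ := ∑ i, yy x₀ i q ^ 2
/-- one quarter of the Lorentzian square of the gradient of `ψ` -/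
noncomputable def EE (x₀ : EuclideanSpace ℝ (Fin n)) (β : ℝ) (q : EV) : ℝ :=
  β ^ 2 * q.2 ^ 2 - rr x₀ q
/-- the weight as a function on space-time -/
noncomputable def ph (x₀ : EuclideanSpace ℝ (Fin n)) (β C₀ l : ℝ) (q : EV) : ℝ :=
  Real.exp (l * (rr x₀ q - β * q.2 ^ 2 + C₀))
/-- `2 s l φ` -/
noncomputable def aa (x₀ : EuclideanSpace ℝ (Fin n)) (β C₀ l s : ℝ) (q : EV) : ℝ :=
  2 * s * l * ph x₀ β C₀ l q
/-- zero order multiplier -/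
noncomputable def gg (x₀ : EuclideanSpace ℝ (Fin n)) (β C₀ l s : ℝ) (q : EV) : ℝ :=
  aa x₀ β C₀ l s q * (2 * l * EE x₀ β q + 1 - n)

theorem sm_t : Sm (fun q : EV => q.2) := contDiff_snd
theorem sm_yy (x₀ : EuclideanSpace ℝ (Fin n)) (i : Fin n) : Sm (yy x₀ i) := by
  unfold Sm yy
  exact ContDiff.sub (by fun_prop) contDiff_const
theorem sm_rr (x₀ : EuclideanSpace ℝ (Fin n)) : Sm (rr x₀) := Sm.sum (fun i => (sm_yy x₀ i).pow 2)
theorem sm_EE (x₀ : EuclideanSpace ℝ (Fin n)) (β : ℝ) : Sm (EE x₀ β) :=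
  ((Sm.cst _).mul (sm_t.pow 2)).sub (sm_rr x₀)
theorem sm_ph (x₀ : EuclideanSpace ℝ (Fin n)) (β C₀ l : ℝ) : Sm (ph x₀ β C₀ l) :=
  ((Sm.cst l).mul (((sm_rr x₀).sub ((Sm.cst β).mul (sm_t.pow 2))).add (Sm.cst C₀))).exp
theorem sm_aa (x₀ : EuclideanSpace ℝ (Fin n)) (β C₀ l s : ℝ) : Sm (aa x₀ β C₀ l s) :=
  (Sm.cst _).mul (sm_ph x₀ β C₀ l)
theorem sm_gg (x₀ : EuclideanSpace ℝ (Fin n)) (β C₀ l s : ℝ) : Sm (gg x₀ β C₀ l s) :=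
  (sm_aa x₀ β C₀ l s).mul ((((Sm.cst _).mul (sm_EE x₀ β)).add (Sm.cst _)).sub (Sm.cst _))

theorem hd_t_t (q : EV) : HD et (fun q : EV => q.2) 1 q := by
  have : HasDerivAt (fun τ : ℝ => q.2 + τ * 1) 1 0 := by
    simpa using (hasDerivAt_id (0:ℝ)).const_add q.2
  simpa [HD, et] using this
theorem hd_x_t (i : Fin n) (q : EV) : HD (ex i) (fun q : EV => q.2) 0 q := by
  simpa [HD, ex] using hasDerivAt_const (0:ℝ) q.2
theorem hd_t_y (x₀ : EuclideanSpace ℝ (Fin n)) (i : Fin n) (q : EV) : HD et (yy x₀ i) 0 q := by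
  simpa [HD, et, yy] using hasDerivAt_const (0:ℝ) (q.1 i - x₀ i)
theorem hd_x_y (x₀ : EuclideanSpace ℝ (Fin n)) (i j : Fin n) (q : EV) :
    HD (ex i) (yy x₀ j) (if j = i then 1 else 0) q := by
  unfold HD
  have : (fun τ : ℝ => yy x₀ j (q + τ • ex i)) = fun τ => (q.1 j - x₀ j) + τ * (if j = i then 1 else 0) := by
    ext τ
    simp [yy, ex]; split_ifs <;> ring
  rw [this]
  simpa using ((hasDerivAt_id (0:ℝ)).mul_const (if j = i then (1:ℝ) else 0)).const_add (q.1 j - x₀ j)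
theorem hd_t_r (x₀ : EuclideanSpace ℝ (Fin n)) (q : EV) : HD et (rr x₀) 0 q :=
  (HD.sum (fun i => (hd_t_y x₀ i q).sq)).eq (by simp)
theorem hd_x_r (x₀ : EuclideanSpace ℝ (Fin n)) (i : Fin n) (q : EV) :
    HD (ex i) (rr x₀) (2 * yy x₀ i q) q :=
  (HD.sum (fun j => (hd_x_y x₀ i j q).sq)).eq (by simp)
theorem hd_t_E (x₀ : EuclideanSpace ℝ (Fin n)) (β : ℝ) (q : EV) :
    HD et (EE x₀ β) (2 * β ^ 2 * q.2) q :=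
  (((hd_t_t q).sq.cmul (β ^ 2)).sub (hd_t_r x₀ q)).eq (by ring)
theorem hd_x_E (x₀ : EuclideanSpace ℝ (Fin n)) (β : ℝ) (i : Fin n) (q : EV) :
    HD (ex i) (EE x₀ β) (- 2 * yy x₀ i q) q :=
  (((hd_x_t i q).sq.cmul (β ^ 2)).sub (hd_x_r x₀ i q)).eq (by ring)
theorem hd_t_ph (x₀ : EuclideanSpace ℝ (Fin n)) (β C₀ l : ℝ) (q : EV) :
    HD et (ph x₀ β C₀ l) (- 2 * l * β * q.2 * ph x₀ β C₀ l q) q :=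
  (((((hd_t_r x₀ q).sub ((hd_t_t q).sq.cmul β)).add (HD.cst C₀)).cmul l).exp).eq
    (by simp only [ph]; ring)
theorem hd_x_ph (x₀ : EuclideanSpace ℝ (Fin n)) (β C₀ l : ℝ) (i : Fin n) (q : EV) :
    HD (ex i) (ph x₀ β C₀ l) (2 * l * yy x₀ i q * ph x₀ β C₀ l q) q :=
  (((((hd_x_r x₀ i q).sub ((hd_x_t i q).sq.cmul β)).add (HD.cst C₀)).cmul l).exp).eq
    (by simp only [ph]; ring)
theorem hd_t_a (x₀ : EuclideanSpace ℝ (Fin n)) (β C₀ l s : ℝ) (q : EV) :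
    HD et (aa x₀ β C₀ l s) (- 2 * l * β * q.2 * aa x₀ β C₀ l s q) q :=
  ((hd_t_ph x₀ β C₀ l q).cmul (2 * s * l)).eq (by simp only [aa]; ring)
theorem hd_x_a (x₀ : EuclideanSpace ℝ (Fin n)) (β C₀ l s : ℝ) (i : Fin n) (q : EV) :
    HD (ex i) (aa x₀ β C₀ l s) (2 * l * yy x₀ i q * aa x₀ β C₀ l s q) q :=
  ((hd_x_ph x₀ β C₀ l i q).cmul (2 * s * l)).eq (by simp only [aa]; ring)

/-- radial derivative -/
noncomputable def YW (x₀ : EuclideanSpace ℝ (Fin n)) (w : EV → ℝ) (q : EV) : ℝ :=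
  ∑ j, yy x₀ j q * DD (ex j) w q
/-- squared norm of the space gradient -/
noncomputable def W2 (w : EV → ℝ) (q : EV) : ℝ := ∑ j, DD (ex j) w q ^ 2
/-- Lorentzian multiplier field -/
noncomputable def XX (x₀ : EuclideanSpace ℝ (Fin n)) (β : ℝ) (w : EV → ℝ) (q : EV) : ℝ :=
  YW x₀ w q + β * (q.2 * DD et w q)
/-- wave operator -/
noncomputable def box (w : EV → ℝ) (q : EV) : ℝ :=
  DD et (DD et w) q - ∑ i, DD (ex i) (DD (ex i) w) q

theorem sm_YW (x₀ : EuclideanSpace ℝ (Fin n)) {w : EV → ℝ} (hw : Sm w) : Sm (YW x₀ w) :=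
  Sm.sum (fun i => (sm_yy x₀ i).mul (hw.DD _))
theorem sm_W2 {w : EV → ℝ} (hw : Sm w) : Sm (W2 w) := Sm.sum (fun _ => (hw.DD _).pow 2)
theorem sm_XX (x₀ : EuclideanSpace ℝ (Fin n)) (β : ℝ) {w : EV → ℝ} (hw : Sm w) : Sm (XX x₀ β w) :=
  (sm_YW x₀ hw).add ((Sm.cst _).mul (sm_t.mul (hw.DD _)))
theorem sm_box {w : EV → ℝ} (hw : Sm w) : Sm (box w) :=
  ((hw.DD _).DD _).sub (Sm.sum (fun _ => (hw.DD _).DD _))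

theorem hd_t_YW (x₀ : EuclideanSpace ℝ (Fin n)) {w : EV → ℝ} (hw : Sm w) (q : EV) :
    HD et (YW x₀ w) (∑ j, yy x₀ j q * DD et (DD (ex j) w) q) q :=
  (HD.sum (fun j => (hd_t_y x₀ j q).mul ((hw.DD (ex j)).hd et q))).eq (by simp)
theorem hd_x_YW (x₀ : EuclideanSpace ℝ (Fin n)) {w : EV → ℝ} (hw : Sm w) (i : Fin n) (q : EV) :
    HD (ex i) (YW x₀ w) (DD (ex i) w q + ∑ j, yy x₀ j q * DD (ex i) (DD (ex j) w) q) q :=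
  (HD.sum (fun j => (hd_x_y x₀ i j q).mul ((hw.DD (ex j)).hd (ex i) q))).eq
    (by simp [Finset.sum_add_distrib])
theorem hd_W2 {w : EV → ℝ} (hw : Sm w) (v q : EV) :
    HD v (W2 w) (2 * ∑ j, DD (ex j) w q * DD v (DD (ex j) w) q) q :=
  (HD.sum (fun j => ((hw.DD (ex j)).hd v q).sq)).eq (by simp [Finset.mul_sum, mul_assoc])
theorem hd_x_XX (x₀ : EuclideanSpace ℝ (Fin n)) (β : ℝ) {w : EV → ℝ} (hw : Sm w) (i : Fin n) (q : EV) :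
    HD (ex i) (XX x₀ β w) (DD (ex i) w q + ∑ j, yy x₀ j q * DD (ex i) (DD (ex j) w) q +
      β * (q.2 * DD et (DD (ex i) w) q)) q :=
  ((hd_x_YW x₀ hw i q).add (((hd_x_t i q).mul ((hw.DD et).hd (ex i) q)).cmul β)).eq
    (by rw [DD_comm hw (ex i) et]; ring)

/-- time flux -/
noncomputable def NN (x₀ : EuclideanSpace ℝ (Fin n)) (β C₀ l s : ℝ) (w : EV → ℝ) (q : EV) : ℝ :=
  aa x₀ β C₀ l s q * (β * q.2) * (DD et w q ^ 2 + W2 w q)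
  + 2 * (aa x₀ β C₀ l s q * DD et w q * YW x₀ w q)
  + aa x₀ β C₀ l s q ^ 3 * EE x₀ β q * (β * q.2) * w q ^ 2
  - gg x₀ β C₀ l s q * w q * DD et w q
  + 1 / 2 * (DD et (gg x₀ β C₀ l s) q * w q ^ 2)

/-- space flux -/
noncomputable def VV (x₀ : EuclideanSpace ℝ (Fin n)) (β C₀ l s : ℝ) (w : EV → ℝ) (i : Fin n)
    (q : EV) : ℝ :=
  -2 * (aa x₀ β C₀ l s q * DD (ex i) w q * XX x₀ β w q)
  - aa x₀ β C₀ l s q * yy x₀ i q * (DD et w q ^ 2 - W2 w q)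
  + aa x₀ β C₀ l s q ^ 3 * EE x₀ β q * yy x₀ i q * w q ^ 2
  + gg x₀ β C₀ l s q * w q * DD (ex i) w q
  - 1 / 2 * (DD (ex i) (gg x₀ β C₀ l s) q * w q ^ 2)

/-- conjugated operator, second order part -/
noncomputable def P1 (x₀ : EuclideanSpace ℝ (Fin n)) (β C₀ l s : ℝ) (w : EV → ℝ) (q : EV) : ℝ :=
  box w q + aa x₀ β C₀ l s q ^ 2 * EE x₀ β q * w q

/-- conjugated operator, first order part -/
noncomputable def P2 (x₀ : EuclideanSpace ℝ (Fin n)) (β C₀ l s : ℝ) (w : EV → ℝ) (q : EV) : ℝ :=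
  2 * aa x₀ β C₀ l s q * XX x₀ β w q - gg x₀ β C₀ l s q * w q

/-- bulk term -/
noncomputable def bulk (x₀ : EuclideanSpace ℝ (Fin n)) (β C₀ l s : ℝ) (w : EV → ℝ) (q : EV) : ℝ :=
  aa x₀ β C₀ l s q * (1 - β) * (DD et w q ^ 2 + W2 w q)
  + 4 * l * aa x₀ β C₀ l s q * XX x₀ β w q ^ 2
  + aa x₀ β C₀ l s q ^ 3 * w q ^ 2 *
    (4 * l * EE x₀ β q ^ 2 - (1 + 3 * β) * EE x₀ β q + 2 * (1 - β) * rr x₀ q)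
  - 1 / 2 * (box (gg x₀ β C₀ l s) q * w q ^ 2)

theorem sm_NN (x₀ : EuclideanSpace ℝ (Fin n)) (β C₀ l s : ℝ) {w : EV → ℝ} (hw : Sm w) :
    Sm (NN x₀ β C₀ l s w) := by
  have ha := sm_aa x₀ β C₀ l s
  have hg := sm_gg x₀ β C₀ l s
  have hβt : Sm (fun q : EV => β * q.2) := (Sm.cst β).mul sm_t
  exact (((((ha.mul hβt).mul (((hw.DD et).pow 2).add (sm_W2 hw))).add
    ((Sm.cst 2).mul ((ha.mul (hw.DD et)).mul (sm_YW x₀ hw)))).add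
    ((((ha.pow 3).mul (sm_EE x₀ β)).mul hβt).mul (hw.pow 2))).sub
    ((hg.mul hw).mul (hw.DD et))).add ((Sm.cst (1/2)).mul ((hg.DD et).mul (hw.pow 2)))

theorem sm_VV (x₀ : EuclideanSpace ℝ (Fin n)) (β C₀ l s : ℝ) {w : EV → ℝ} (hw : Sm w) (i : Fin n) :
    Sm (VV x₀ β C₀ l s w i) := by
  have ha := sm_aa x₀ β C₀ l s
  have hg := sm_gg x₀ β C₀ l s
  exact (((((Sm.cst (-2)).mul ((ha.mul (hw.DD (ex i))).mul (sm_XX x₀ β hw))).sub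
    ((ha.mul (sm_yy x₀ i)).mul (((hw.DD et).pow 2).sub (sm_W2 hw)))).add
    ((((ha.pow 3).mul (sm_EE x₀ β)).mul (sm_yy x₀ i)).mul (hw.pow 2))).add
    ((hg.mul hw).mul (hw.DD (ex i)))).sub
    ((Sm.cst (1/2)).mul ((hg.DD (ex i)).mul (hw.pow 2)))

theorem main_identity (x₀ : EuclideanSpace ℝ (Fin n)) (β C₀ l s : ℝ) {w : EV → ℝ} (hw : Sm w)
    (q : EV) :
    P1 x₀ β C₀ l s w q * P2 x₀ β C₀ l s w q
      = DD et (NN x₀ β C₀ l s w) q + ∑ i, DD (ex i) (VV x₀ β C₀ l s w i) q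
        + bulk x₀ β C₀ l s w q := by
  have hg := sm_gg x₀ β C₀ l s
  have hcomm : ∀ i, DD (ex i) (DD et w) q = DD et (DD (ex i) w) q := fun i => DD_comm hw _ _ _
  have hgv : gg x₀ β C₀ l s q = aa x₀ β C₀ l s q * (2 * l * EE x₀ β q + 1 - n) := rfl
  set a := aa x₀ β C₀ l s q with ha
  set E := EE x₀ β q with hE
  set X := XX x₀ β w q with hX
  set wt := DD et w q with hwt
  set W := W2 w q with hW
  set w0 := w q with hw0
  set t := q.2 with ht
  set g := gg x₀ β C₀ l s q with hgd
  have hN : HD et (NN x₀ β C₀ l s w) _ q :=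
    (((((((hd_t_a x₀ β C₀ l s q).mul ((hd_t_t q).cmul β)).mul
      (((hw.DD et).hd et q).sq.add (hd_W2 hw et q))).add
      ((((hd_t_a x₀ β C₀ l s q).mul ((hw.DD et).hd et q)).mul (hd_t_YW x₀ hw q)).cmul 2)).add
      (((((hd_t_a x₀ β C₀ l s q).cube).mul (hd_t_E x₀ β q)).mul ((hd_t_t q).cmul β)).mul
        ((hw.hd et q).sq))).sub
      (((hg.hd et q).mul (hw.hd et q)).mul ((hw.DD et).hd et q))).add
      ((((hg.DD et).hd et q).mul ((hw.hd et q).sq)).cmul (1/2)))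
  have hV : ∀ i, HD (ex i) (VV x₀ β C₀ l s w i) ((-4 * l * a * X) * (yy x₀ i q * DD (ex i) w q) + (-2 * a * X) * DD (ex i) (DD (ex i) w) q
      + (-2 * a) * DD (ex i) w q ^ 2 + (-2 * a) * (DD (ex i) w q * ∑ j, yy x₀ j q * DD (ex i) (DD (ex j) w) q)
      + (-2 * a * β * t) * (DD (ex i) w q * DD et (DD (ex i) w) q)
      + (-(wt ^ 2 - W) * 2 * l * a) * yy x₀ i q ^ 2 + (-(wt ^ 2 - W) * a) * 1
      + (-2 * a * wt) * (yy x₀ i q * DD et (DD (ex i) w) q)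
      + (2 * a) * (yy x₀ i q * ∑ j, DD (ex j) w q * DD (ex i) (DD (ex j) w) q)
      + (6 * l * a ^ 3 * E * w0 ^ 2 - 2 * a ^ 3 * w0 ^ 2) * yy x₀ i q ^ 2 + (a ^ 3 * E * w0 ^ 2) * 1
      + (2 * a ^ 3 * E * w0) * (yy x₀ i q * DD (ex i) w q)
      + g * DD (ex i) w q ^ 2 + g * w0 * DD (ex i) (DD (ex i) w) q
      + (-1/2 * w0 ^ 2) * DD (ex i) (DD (ex i) (gg x₀ β C₀ l s)) q) q := fun i =>
    HD.eq ((((((((hd_x_a x₀ β C₀ l s i q).mul ((hw.DD (ex i)).hd (ex i) q)).mul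
      (hd_x_XX x₀ β hw i q)).cmul (-2)).sub
      (((hd_x_a x₀ β C₀ l s i q).mul (hd_x_y x₀ i i q)).mul
        (((hw.DD et).hd (ex i) q).sq.sub (hd_W2 hw (ex i) q)))).add
      (((((hd_x_a x₀ β C₀ l s i q).cube).mul (hd_x_E x₀ β i q)).mul (hd_x_y x₀ i i q)).mul
        ((hw.hd (ex i) q).sq))).add
      (((hg.hd (ex i) q).mul (hw.hd (ex i) q)).mul ((hw.DD (ex i)).hd (ex i) q))).sub
      ((((hg.DD (ex i)).hd (ex i) q).mul ((hw.hd (ex i) q).sq)).cmul (1/2)))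
      (by simp only [hcomm, if_true]; ring)
  rw [hN.DD_eq (sm_NN x₀ β C₀ l s hw)]
  rw [Finset.sum_congr rfl (fun i _ => (hV i).DD_eq (sm_VV x₀ β C₀ l s hw i))]
  have hsw : ∑ i, yy x₀ i q * ∑ j, DD (ex j) w q * DD (ex i) (DD (ex j) w) q
      = ∑ i, DD (ex i) w q * ∑ j, yy x₀ j q * DD (ex i) (DD (ex j) w) q := by
    simp only [Finset.mul_sum]
    rw [Finset.sum_comm]
    refine Finset.sum_congr rfl (fun i _ => Finset.sum_congr rfl (fun j _ => ?_))
    rw [DD_comm hw (ex j) (ex i)]; ring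
  simp only [Finset.sum_add_distrib, ← Finset.mul_sum]
  rw [hsw]
  have e1 : ∑ i, yy x₀ i q * DD (ex i) w q = X - β * (t * wt) := by
    rw [hX]; simp only [XX, YW]; ring
  have e2 : ∑ i, DD (ex i) w q ^ 2 = W := rfl
  have e3 : ∑ i, yy x₀ i q ^ 2 = β ^ 2 * t ^ 2 - E := by rw [hE]; simp only [EE, rr]; ring
  have e4 : ∑ i : Fin n, (1:ℝ) = n := by simp
  have e5 : rr x₀ q = β ^ 2 * t ^ 2 - E := e3
  have e6 : YW x₀ w q = X - β * (t * wt) := e1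
  rw [e1, e2, e3, e4]
  simp only [P1, P2, bulk, box, ← ha, ← hE, ← hX, ← hW, e5, e6, ← hwt, ← hw0, ← ht, ← hgd]
  rw [hgv]
  ring
end weights

section conj
variable {n : ℕ}
local notation "EV" => EuclideanSpace ℝ (Fin n) × ℝ

/-- conjugated function -/
noncomputable def ww (x₀ : EuclideanSpace ℝ (Fin n)) (β C₀ l s : ℝ) (z : EV → ℝ) (q : EV) : ℝ :=
  Real.exp (s * ph x₀ β C₀ l q) * z q

theorem sm_ww (x₀ : EuclideanSpace ℝ (Fin n)) (β C₀ l s : ℝ) {z : EV → ℝ} (hz : Sm z) :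
    Sm (ww x₀ β C₀ l s z) := (((Sm.cst s).mul (sm_ph x₀ β C₀ l)).exp).mul hz

theorem hd_t_e (x₀ : EuclideanSpace ℝ (Fin n)) (β C₀ l s : ℝ) (q : EV) :
    HD et (fun q => Real.exp (s * ph x₀ β C₀ l q))
      (Real.exp (s * ph x₀ β C₀ l q) * (- β * q.2 * aa x₀ β C₀ l s q)) q :=
  (((hd_t_ph x₀ β C₀ l q).cmul s).exp).eq (by simp only [aa]; ring)
theorem hd_x_e (x₀ : EuclideanSpace ℝ (Fin n)) (β C₀ l s : ℝ) (i : Fin n) (q : EV) :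
    HD (ex i) (fun q => Real.exp (s * ph x₀ β C₀ l q))
      (Real.exp (s * ph x₀ β C₀ l q) * (yy x₀ i q * aa x₀ β C₀ l s q)) q :=
  (((hd_x_ph x₀ β C₀ l i q).cmul s).exp).eq (by simp only [aa]; ring)

theorem ww_t (x₀ : EuclideanSpace ℝ (Fin n)) (β C₀ l s : ℝ) {z : EV → ℝ} (hz : Sm z) :
    DD et (ww x₀ β C₀ l s z) = fun q =>
      Real.exp (s * ph x₀ β C₀ l q) * (DD et z q - β * (q.2 * (aa x₀ β C₀ l s q * z q))) := by
  ext q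
  exact (((hd_t_e x₀ β C₀ l s q).mul (hz.hd et q)).eq (by ring)).DD_eq (sm_ww x₀ β C₀ l s hz)

theorem ww_x (x₀ : EuclideanSpace ℝ (Fin n)) (β C₀ l s : ℝ) {z : EV → ℝ} (hz : Sm z) (i : Fin n) :
    DD (ex i) (ww x₀ β C₀ l s z) = fun q =>
      Real.exp (s * ph x₀ β C₀ l q) * (DD (ex i) z q + yy x₀ i q * (aa x₀ β C₀ l s q * z q)) := by
  ext q
  exact (((hd_x_e x₀ β C₀ l s i q).mul (hz.hd (ex i) q)).eq (by ring)).DD_eq (sm_ww x₀ β C₀ l s hz)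

theorem ww_tt (x₀ : EuclideanSpace ℝ (Fin n)) (β C₀ l s : ℝ) {z : EV → ℝ} (hz : Sm z) (q : EV) :
    DD et (DD et (ww x₀ β C₀ l s z)) q =
      Real.exp (s * ph x₀ β C₀ l q) * (DD et (DD et z) q
        - 2 * (β * q.2 * aa x₀ β C₀ l s q) * DD et z q
        + (β * q.2 * aa x₀ β C₀ l s q) ^ 2 * z q
        - (β - 2 * l * β ^ 2 * q.2 ^ 2) * aa x₀ β C₀ l s q * z q) := by
  have h := (hd_t_e x₀ β C₀ l s q).mul (((hz.DD et).hd et q).sub (((hd_t_t q).mul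
    ((hd_t_a x₀ β C₀ l s q).mul (hz.hd et q))).cmul β))
  have hs := (sm_ww x₀ β C₀ l s hz).DD et
  rw [ww_t x₀ β C₀ l s hz] at hs ⊢
  rw [h.DD_eq hs]
  ring

theorem ww_xx (x₀ : EuclideanSpace ℝ (Fin n)) (β C₀ l s : ℝ) {z : EV → ℝ} (hz : Sm z) (i : Fin n)
    (q : EV) :
    DD (ex i) (DD (ex i) (ww x₀ β C₀ l s z)) q =
      Real.exp (s * ph x₀ β C₀ l q) * (DD (ex i) (DD (ex i) z) q
        + 2 * (yy x₀ i q * aa x₀ β C₀ l s q) * DD (ex i) z q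
        + (yy x₀ i q * aa x₀ β C₀ l s q) ^ 2 * z q
        + (1 + 2 * l * yy x₀ i q ^ 2) * aa x₀ β C₀ l s q * z q) := by
  have h := (hd_x_e x₀ β C₀ l s i q).mul (((hz.DD (ex i)).hd (ex i) q).add ((hd_x_y x₀ i i q).mul
    ((hd_x_a x₀ β C₀ l s i q).mul (hz.hd (ex i) q))))
  have hs := (sm_ww x₀ β C₀ l s hz).DD (ex i)
  rw [ww_x x₀ β C₀ l s hz] at hs ⊢
  rw [h.DD_eq hs]
  simp only [if_true]
  ring

theorem conj_identity (x₀ : EuclideanSpace ℝ (Fin n)) (β C₀ l s : ℝ) {z : EV → ℝ} (hz : Sm z)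
    (q : EV) :
    Real.exp (s * ph x₀ β C₀ l q) * box z q =
      P1 x₀ β C₀ l s (ww x₀ β C₀ l s z) q + P2 x₀ β C₀ l s (ww x₀ β C₀ l s z) q
      + (1 + β) * aa x₀ β C₀ l s q * ww x₀ β C₀ l s z q := by
  simp only [P1, P2, box, XX, YW, ww_tt x₀ β C₀ l s hz, ww_xx x₀ β C₀ l s hz]
  simp only [ww_t x₀ β C₀ l s hz, ww_x x₀ β C₀ l s hz]
  have hgv : gg x₀ β C₀ l s q = aa x₀ β C₀ l s q * (2 * l * EE x₀ β q + 1 - n) := rfl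
  have hr : ∑ i, yy x₀ i q ^ 2 = β ^ 2 * q.2 ^ 2 - EE x₀ β q := by simp only [EE, rr]; ring
  rw [hgv]
  simp only [ww]
  set a := aa x₀ β C₀ l s q
  set e := Real.exp (s * ph x₀ β C₀ l q)
  have h1 : ∑ i, e * (DD (ex i) (DD (ex i) z) q + 2 * (yy x₀ i q * a) * DD (ex i) z q
        + (yy x₀ i q * a) ^ 2 * z q + (1 + 2 * l * yy x₀ i q ^ 2) * a * z q)
      = e * (∑ i, DD (ex i) (DD (ex i) z) q) + 2 * a * e * (∑ i, yy x₀ i q * DD (ex i) z q)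
        + (a ^ 2 * z q * e + 2 * l * a * z q * e) * (∑ i, yy x₀ i q ^ 2) + a * z q * e * n := by
    have : (n : ℝ) = ∑ i : Fin n, (1:ℝ) := by simp
    rw [this]
    simp only [Finset.mul_sum, ← Finset.sum_add_distrib]
    exact Finset.sum_congr rfl (fun i _ => by ring)
  have h2 : ∑ i, yy x₀ i q * (e * (DD (ex i) z q + yy x₀ i q * (a * z q)))
      = e * (∑ i, yy x₀ i q * DD (ex i) z q) + e * a * z q * ∑ i, yy x₀ i q ^ 2 := by
    simp only [Finset.mul_sum, ← Finset.sum_add_distrib]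
    exact Finset.sum_congr rfl (fun i _ => by ring)
  rw [h1, h2, hr]
  ring

/-- energy density -/
noncomputable def en (x₀ : EuclideanSpace ℝ (Fin n)) (β C₀ l s : ℝ) (w : EV → ℝ) (q : EV) : ℝ :=
  1 / 2 * (DD et w q ^ 2 + W2 w q + aa x₀ β C₀ l s q ^ 2 * EE x₀ β q * w q ^ 2)

theorem sm_en (x₀ : EuclideanSpace ℝ (Fin n)) (β C₀ l s : ℝ) {w : EV → ℝ} (hw : Sm w) :
    Sm (en x₀ β C₀ l s w) :=
  (Sm.cst (1/2)).mul ((((hw.DD et).pow 2).add (sm_W2 hw)).add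
    ((((sm_aa x₀ β C₀ l s).pow 2).mul (sm_EE x₀ β)).mul (hw.pow 2)))

theorem sm_Tt (T : ℝ) : Sm (fun q : EV => T - q.2) := (Sm.cst T).sub sm_t

theorem energy_identity (x₀ : EuclideanSpace ℝ (Fin n)) (β C₀ l s T : ℝ) {w : EV → ℝ} (hw : Sm w)
    (q : EV) :
    DD et (fun q => (T - q.2) * en x₀ β C₀ l s w q) q
      = (∑ i, DD (ex i) (fun q => (T - q.2) * (DD (ex i) w q * DD et w q)) q)
        - en x₀ β C₀ l s w q + (T - q.2) * (P1 x₀ β C₀ l s w q * DD et w q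
          + 1 / 2 * (aa x₀ β C₀ l s q ^ 2 * (2 * β ^ 2 * q.2 - 4 * l * β * q.2 * EE x₀ β q)) * w q ^ 2) := by
  have hT : ∀ v c, HD v (fun q : EV => q.2) c q → HD v (fun q : EV => T - q.2) (0 - c) q :=
    fun v c h => (HD.cst T).sub h
  have h1 := (hT et 1 (hd_t_t q)).mul ((((((hw.DD et).hd et q).sq).add (hd_W2 hw et q)).add
    ((((hd_t_a x₀ β C₀ l s q).sq.mul (hd_t_E x₀ β q)).mul (hw.hd et q).sq))).cmul (1/2))
  have h2 : ∀ i, HD (ex i) (fun q => (T - q.2) * (DD (ex i) w q * DD et w q))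
      ((T - q.2) * (DD (ex i) (DD (ex i) w) q * DD et w q) +
        (T - q.2) * (DD (ex i) w q * DD et (DD (ex i) w) q)) q := fun i =>
    ((hT (ex i) 0 (hd_x_t i q)).mul (((hw.DD (ex i)).hd (ex i) q).mul ((hw.DD et).hd (ex i) q))).eq
      (by rw [DD_comm hw (ex i) et]; ring)
  rw [show DD et (fun q => (T - q.2) * en x₀ β C₀ l s w q) q = _ from
    h1.DD_eq ((sm_Tt T).mul (sm_en x₀ β C₀ l s hw))]
  rw [Finset.sum_congr rfl (fun i _ => (h2 i).DD_eq ((sm_Tt T).mul ((hw.DD _).mul (hw.DD _))))]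
  simp only [Finset.sum_add_distrib, ← Finset.mul_sum, ← Finset.sum_mul]
  simp only [en, P1, box]
  ring
end conj

section core
variable {n : ℕ}
local notation "EV" => EuclideanSpace ℝ (Fin n) × ℝ

theorem DD_cmul (c : ℝ) {u : EV → ℝ} (hu : Sm u) (v : EV) :
    DD v (fun q => c * u q) = fun q => c * DD v u q := by
  ext q
  exact ((hu.hd v q).cmul c).DD_eq ((Sm.cst c).mul hu)

theorem aa_scale (x₀ : EuclideanSpace ℝ (Fin n)) (β C₀ l s : ℝ) (q : EV) :
    aa x₀ β C₀ l s q = s * aa x₀ β C₀ l 1 q := by simp only [aa]; ring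
theorem gg_scale (x₀ : EuclideanSpace ℝ (Fin n)) (β C₀ l s : ℝ) :
    gg x₀ β C₀ l s = fun q => s * gg x₀ β C₀ l 1 q := by
  ext q; simp only [gg, aa]; ring
theorem ggt_scale (x₀ : EuclideanSpace ℝ (Fin n)) (β C₀ l s : ℝ) (q : EV) :
    DD et (gg x₀ β C₀ l s) q = s * DD et (gg x₀ β C₀ l 1) q := by
  rw [gg_scale, DD_cmul s (sm_gg x₀ β C₀ l 1)]
theorem ggbox_scale (x₀ : EuclideanSpace ℝ (Fin n)) (β C₀ l s : ℝ) (q : EV) :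
    box (gg x₀ β C₀ l s) q = s * box (gg x₀ β C₀ l 1) q := by
  have h := sm_gg x₀ β C₀ l 1
  rw [gg_scale]
  simp only [box, DD_cmul s h]
  simp only [DD_cmul s (h.DD _), mul_sub, Finset.mul_sum]

theorem rr_eq (x₀ : EuclideanSpace ℝ (Fin n)) (q : EV) : rr x₀ q = ‖q.1 - x₀‖ ^ 2 := by
  rw [EuclideanSpace.norm_sq_eq]; simp [rr, yy]

theorem region_consts (Ω : Set (EuclideanSpace ℝ (Fin n))) (hΩb : Bornology.IsBounded Ω)
    (T : ℝ) (x₀ : EuclideanSpace ℝ (Fin n)) (β C₀ l : ℝ) (hβ : 0 < β) (hl : 0 < l) :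
    ∃ a0 > (0:ℝ), ∃ A > (0:ℝ), ∀ q : EV, q.1 ∈ Ω → q.2 ∈ Icc 0 T →
      a0 ≤ aa x₀ β C₀ l 1 q ∧ aa x₀ β C₀ l 1 q ≤ A ∧ |gg x₀ β C₀ l 1 q| ≤ A ∧
      |DD et (gg x₀ β C₀ l 1) q| ≤ A ∧ |box (gg x₀ β C₀ l 1) q| ≤ A ∧
      |aa x₀ β C₀ l 1 q ^ 2 * EE x₀ β q| ≤ A ∧
      |aa x₀ β C₀ l 1 q ^ 2 * (2 * β ^ 2 * q.2 - 4 * l * β * q.2 * EE x₀ β q)| ≤ A := by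
  have ca := (sm_aa x₀ β C₀ l 1).cont
  have cg := (sm_gg x₀ β C₀ l 1).cont
  have cgt := ((sm_gg x₀ β C₀ l 1).DD et).cont
  have cgb := (sm_box (sm_gg x₀ β C₀ l 1)).cont
  have cE := (sm_EE x₀ β).cont
  let F : EV → ℝ := fun q => |aa x₀ β C₀ l 1 q| + |gg x₀ β C₀ l 1 q| + |DD et (gg x₀ β C₀ l 1) q|
    + |box (gg x₀ β C₀ l 1) q| + |aa x₀ β C₀ l 1 q ^ 2 * EE x₀ β q| +
    |aa x₀ β C₀ l 1 q ^ 2 * (2 * β ^ 2 * q.2 - 4 * l * β * q.2 * EE x₀ β q)|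
  have cF : Continuous F := by fun_prop
  obtain ⟨A, hA⟩ := (hΩb.isCompact_closure.prod (isCompact_Icc (a := 0) (b := T))).exists_bound_of_continuousOn
    cF.continuousOn
  refine ⟨2 * l * Real.exp (l * (- β * T ^ 2 + C₀)), by positivity, |A| + 1, by positivity, ?_⟩
  intro q hq ht
  have h := hA q ⟨subset_closure hq, ht⟩
  rw [Real.norm_eq_abs] at h
  have h2 := (le_abs_self _).trans (h.trans (le_abs_self A))
  simp only [F] at h2
  have p1 := abs_nonneg (aa x₀ β C₀ l 1 q)
  have p2 := abs_nonneg (gg x₀ β C₀ l 1 q)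
  have p3 := abs_nonneg (DD et (gg x₀ β C₀ l 1) q)
  have p4 := abs_nonneg (box (gg x₀ β C₀ l 1) q)
  have p5 := abs_nonneg (aa x₀ β C₀ l 1 q ^ 2 * EE x₀ β q)
  have p6 := abs_nonneg (aa x₀ β C₀ l 1 q ^ 2 * (2 * β ^ 2 * q.2 - 4 * l * β * q.2 * EE x₀ β q))
  have p7 := le_abs_self (aa x₀ β C₀ l 1 q)
  refine ⟨?_, by linarith, by linarith, by linarith, by linarith, by linarith, by linarith⟩
  simp only [aa, ph]
  have hr : 0 ≤ rr x₀ q := Finset.sum_nonneg (fun i _ => sq_nonneg _)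
  have htt : q.2 ^ 2 ≤ T ^ 2 := pow_le_pow_left₀ ht.1 ht.2 2
  have : l * (- β * T ^ 2 + C₀) ≤ l * (rr x₀ q - β * q.2 ^ 2 + C₀) := by
    apply mul_le_mul_of_nonneg_left _ hl.le
    nlinarith
  have := Real.exp_le_exp.2 this
  rw [mul_one]
  exact mul_le_mul_of_nonneg_left this (by positivity)

theorem ae_mu (T : ℝ) : ∀ᵐ q ∂(mu n T), q.2 ∈ Ioo 0 T := by
  have : mu n T = (volume : Measure EV).restrict (univ ×ˢ Ioo 0 T) := by
    rw [Measure.volume_eq_prod, ← Measure.prod_restrict, Measure.restrict_univ]; rfl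
  rw [this]
  filter_upwards [ae_restrict_mem (MeasurableSet.univ.prod measurableSet_Ioo)] with q hq
  exact hq.2

/-- lower bound of the bulk term -/
theorem bulk_lower (β δ l s a0 A a E r w wt W X B : ℝ) (hβ : β ∈ Ioo (0:ℝ) 1) (hl : 0 < l)
    (hl2 : 1 ≤ l * ((1 - β) * δ ^ 2)) (hr : δ ^ 2 ≤ r) (ha0 : 0 < a0) (hs : 1 ≤ s)
    (ha : s * a0 ≤ a) (hB : |B| ≤ s * A) (hW : 0 ≤ W)
    (hs2 : A ≤ s * (a0 ^ 3 * ((1 - β) * δ ^ 2))) :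
    s * (a0 * (1 - β)) * (wt ^ 2 + W) + s ^ 3 * (a0 ^ 3 * ((1 - β) * δ ^ 2) / 2) * w ^ 2 ≤
    a * (1 - β) * (wt ^ 2 + W) + 4 * l * a * X ^ 2
      + a ^ 3 * w ^ 2 * (4 * l * E ^ 2 - (1 + 3 * β) * E + 2 * (1 - β) * r) - 1 / 2 * (B * w ^ 2) := by
  obtain ⟨hb0, hb1⟩ := hβ
  have hs0 : 0 < s := by linarith
  have hsa : 0 < s * a0 := by positivity
  have ha' : 0 < a := by linarith
  set c0 := (1 - β) * δ ^ 2 with hc0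
  have hc0n : 0 ≤ c0 := by have := sq_nonneg δ; nlinarith
  have h1 : c0 ≤ 4 * l * E ^ 2 - (1 + 3 * β) * E + 2 * (1 - β) * r := by
    have e1 : (1 + 3 * β) * E ≤ 4 * |E| := by
      have := abs_nonneg E
      have := le_abs_self E
      nlinarith
    have e2 : 0 ≤ 4 * l * E ^ 2 - 4 * |E| + c0 := by
      have : 0 ≤ l * (4 * l * E ^ 2 - 4 * |E| + c0) := by
        rw [← sq_abs E]
        nlinarith [sq_nonneg (2 * l * |E| - 1)]
      exact nonneg_of_mul_nonneg_right this hl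
    nlinarith
  have h2 : (s * a0) ^ 3 ≤ a ^ 3 := pow_le_pow_left₀ hsa.le ha 3
  have hw := sq_nonneg w
  have h3 : (s * a0) ^ 3 * w ^ 2 * c0 ≤
      a ^ 3 * w ^ 2 * (4 * l * E ^ 2 - (1 + 3 * β) * E + 2 * (1 - β) * r) := by
    have : (s * a0) ^ 3 * w ^ 2 ≤ a ^ 3 * w ^ 2 := mul_le_mul_of_nonneg_right h2 hw
    exact mul_le_mul this h1 hc0n (by positivity)
  have h4 : s * (a0 * (1 - β)) * (wt ^ 2 + W) ≤ a * (1 - β) * (wt ^ 2 + W) := by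
    have : s * a0 * ((1 - β) * (wt ^ 2 + W)) ≤ a * ((1 - β) * (wt ^ 2 + W)) :=
      mul_le_mul_of_nonneg_right ha (mul_nonneg (by linarith) (by positivity))
    linarith
  have h5 : 0 ≤ 4 * l * a * X ^ 2 := by positivity
  have h6 : B * w ^ 2 ≤ s * A * w ^ 2 :=
    mul_le_mul_of_nonneg_right ((le_abs_self B).trans hB) hw
  have h7 : s * A * w ^ 2 ≤ s ^ 3 * (a0 ^ 3 * c0) * w ^ 2 := by
    apply mul_le_mul_of_nonneg_right _ hw
    have hq : 0 ≤ a0 ^ 3 * c0 := by positivity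
    have : s * (a0 ^ 3 * c0) ≤ s ^ 2 * (a0 ^ 3 * c0) := by
      apply mul_le_mul_of_nonneg_right _ hq
      nlinarith
    calc s * A ≤ s * (s ^ 2 * (a0 ^ 3 * c0)) := mul_le_mul_of_nonneg_left (hs2.trans this) hs0.le
      _ = _ := by ring
  nlinarith

/-- nonnegativity of the time flux at the final time -/
theorem flux_nonneg (κ s a0 A a E w wt W Y g gt ρ bT : ℝ) (hκ : κ = bT - ρ) (hκ0 : 0 < κ)
    (hρ : 0 ≤ ρ) (ha0 : 0 < a0) (hs : 1 ≤ s) (ha : s * a0 ≤ a) (hg : |g| ≤ s * A) (hgt : |gt| ≤ s * A)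
    (hW : 0 ≤ W) (hY : Y ^ 2 ≤ ρ ^ 2 * W) (hE : κ ^ 2 ≤ E) (hA : 0 < A)
    (hs2 : A ^ 2 / (a0 * κ) + A ≤ s * (a0 ^ 3 * κ ^ 3)) :
    0 ≤ a * bT * (wt ^ 2 + W) + 2 * (a * wt * Y) + a ^ 3 * E * bT * w ^ 2 - g * w * wt
      + 1 / 2 * (gt * w ^ 2) := by
  have hs0 : 0 < s := by linarith
  have hsa : 0 < s * a0 := by positivity
  have ha' : 0 < a := by linarith
  have hw := sq_nonneg w
  have hwt := sq_nonneg wt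
  have y1 : |Y| ≤ ρ * Real.sqrt W := by
    refine abs_le_of_sq_le_sq ?_ (by positivity)
    rw [mul_pow, Real.sq_sqrt hW]; exact hY
  have y2 : - (ρ * (wt ^ 2 + W)) ≤ 2 * (wt * Y) := by
    have e1 : |wt * Y| ≤ |wt| * (ρ * Real.sqrt W) := by
      rw [abs_mul]; exact mul_le_mul_of_nonneg_left y1 (abs_nonneg _)
    have e2 : 2 * (|wt| * Real.sqrt W) ≤ wt ^ 2 + W := by
      have := sq_nonneg (|wt| - Real.sqrt W)
      rw [sub_sq, sq_abs, Real.sq_sqrt hW] at this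
      linarith
    have e3 := neg_abs_le (wt * Y)
    have e4 := mul_le_mul_of_nonneg_left e2 hρ
    nlinarith
  have h1 : s * a0 * κ * wt ^ 2 ≤ a * bT * (wt ^ 2 + W) + 2 * (a * wt * Y) := by
    have e1 : a * (κ * (wt ^ 2 + W)) ≤ a * (bT * (wt ^ 2 + W) + 2 * (wt * Y)) := by
      apply mul_le_mul_of_nonneg_left _ ha'.le
      rw [hκ]; linarith
    have e2 : s * a0 * (κ * wt ^ 2) ≤ a * (κ * (wt ^ 2 + W)) := by
      apply mul_le_mul ha _ (by positivity) ha'.le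
      exact mul_le_mul_of_nonneg_left (by linarith) hκ0.le
    linarith
  have h2 : s ^ 3 * (a0 ^ 3 * κ ^ 3) * w ^ 2 ≤ a ^ 3 * E * bT * w ^ 2 := by
    apply mul_le_mul_of_nonneg_right _ hw
    have e1 : (s * a0) ^ 3 ≤ a ^ 3 := pow_le_pow_left₀ hsa.le ha 3
    have e2 : (s * a0) ^ 3 * κ ^ 2 ≤ a ^ 3 * E := mul_le_mul e1 hE (by positivity) (by positivity)
    have e3 : (s * a0) ^ 3 * κ ^ 2 * κ ≤ a ^ 3 * E * bT :=
      mul_le_mul e2 (by linarith) hκ0.le (le_trans (by positivity) e2)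
    calc _ = (s * a0) ^ 3 * κ ^ 2 * κ := by ring
      _ ≤ _ := e3
  have h3 : g * w * wt ≤ s * A * |w| * |wt| := by
    calc g * w * wt ≤ |g * w * wt| := le_abs_self _
      _ = |g| * |w| * |wt| := by rw [abs_mul, abs_mul]
      _ ≤ _ := by gcongr
  have h4 : - (s * A * w ^ 2) ≤ gt * w ^ 2 := by
    have := neg_abs_le gt
    nlinarith
  have h5 : A * |w| * |wt| ≤ a0 * κ * wt ^ 2 + A ^ 2 / (a0 * κ) * w ^ 2 := by
    have hk : 0 < a0 * κ := by positivity
    rw [← sq_abs w, ← sq_abs wt]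
    have : 0 ≤ (a0 * κ) * (a0 * κ * |wt| ^ 2 + A ^ 2 / (a0 * κ) * |w| ^ 2 - A * |w| * |wt|) := by
      have e : (a0 * κ) * (a0 * κ * |wt| ^ 2 + A ^ 2 / (a0 * κ) * |w| ^ 2 - A * |w| * |wt|)
        = (a0 * κ * |wt|) ^ 2 + (A * |w|) ^ 2 - (a0 * κ * |wt|) * (A * |w|) := by
        field_simp
      rw [e]
      nlinarith [sq_nonneg (a0 * κ * |wt| - A * |w|), sq_nonneg (a0 * κ * |wt|), sq_nonneg (A * |w|)]
    linarith [nonneg_of_mul_nonneg_right this hk]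
  have h6 : s * (A * |w| * |wt|) ≤ s * (a0 * κ * wt ^ 2 + A ^ 2 / (a0 * κ) * w ^ 2) :=
    mul_le_mul_of_nonneg_left h5 hs0.le
  have h7 : s * (A ^ 2 / (a0 * κ) + A) * w ^ 2 ≤ s ^ 3 * (a0 ^ 3 * κ ^ 3) * w ^ 2 := by
    apply mul_le_mul_of_nonneg_right _ hw
    have hq : 0 ≤ a0 ^ 3 * κ ^ 3 := by positivity
    have : s * (a0 ^ 3 * κ ^ 3) ≤ s ^ 2 * (a0 ^ 3 * κ ^ 3) := by
      apply mul_le_mul_of_nonneg_right _ hq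
      nlinarith
    calc s * (A ^ 2 / (a0 * κ) + A) ≤ s * (s ^ 2 * (a0 ^ 3 * κ ^ 3)) :=
          mul_le_mul_of_nonneg_left (hs2.trans this) hs0.le
      _ = _ := by ring
  have h8 : 0 ≤ s * A * w ^ 2 := by positivity
  nlinarith

/-- pointwise bound for the energy identity -/
theorem energy_bound (s A T t a2E a2F w wt W P : ℝ) (hs : 1 ≤ s) (hA : 0 < A)
    (h0 : 0 ≤ t) (h1 : t ≤ T) (hE : |a2E| ≤ s ^ 2 * A) (hF : |a2F| ≤ s ^ 2 * A) (hW : 0 ≤ W) :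
    Real.sqrt s * (1 / 2 * (wt ^ 2 + W + a2E * w ^ 2) - (T - t) * (P * wt + 1 / 2 * a2F * w ^ 2))
      ≤ (1 + T) * (1 + A) * (P ^ 2 + s * (wt ^ 2 + W) + s ^ 3 * w ^ 2) := by
  have hs0 : 0 < s := by linarith
  set σ := Real.sqrt s with hσ
  have hσ1 : 1 ≤ σ := Real.one_le_sqrt.2 hs
  have hσs : σ ^ 2 = s := Real.sq_sqrt hs0.le
  have hσle : σ ≤ s := by nlinarith
  have hw := sq_nonneg w
  have hwt := sq_nonneg wt
  have hT : 0 ≤ T - t := by linarith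
  have hT0 : 0 ≤ T := by linarith
  have b1 : σ * (wt ^ 2 + W) ≤ s * (wt ^ 2 + W) := mul_le_mul_of_nonneg_right hσle (by positivity)
  have b2 : ∀ c : ℝ, |c| ≤ s ^ 2 * A → σ * |c| * w ^ 2 ≤ A * (s ^ 3 * w ^ 2) := by
    intro c hc
    have : σ * |c| ≤ s * (s ^ 2 * A) := mul_le_mul hσle hc (abs_nonneg _) hs0.le
    calc σ * |c| * w ^ 2 ≤ s * (s ^ 2 * A) * w ^ 2 := mul_le_mul_of_nonneg_right this hw
      _ = _ := by ring
  have b3 : σ * (a2E * w ^ 2) ≤ A * (s ^ 3 * w ^ 2) := by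
    refine le_trans ?_ (b2 a2E hE)
    rw [mul_assoc]
    exact mul_le_mul_of_nonneg_left (mul_le_mul_of_nonneg_right (le_abs_self _) hw) (by positivity)
  have b4 : - (σ * (a2F * w ^ 2)) ≤ A * (s ^ 3 * w ^ 2) := by
    refine le_trans ?_ (b2 a2F hF)
    rw [mul_assoc, ← mul_neg, ← neg_mul]
    exact mul_le_mul_of_nonneg_left (mul_le_mul_of_nonneg_right (neg_le_abs _) hw) (by positivity)
  have b5 : - (σ * (P * wt)) ≤ 1 / 2 * (P ^ 2 + s * wt ^ 2) := by
    rw [← hσs]; nlinarith [sq_nonneg (P + σ * wt)]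
  set Q := P ^ 2 + s * (wt ^ 2 + W) + s ^ 3 * w ^ 2 with hQ
  have q1 : 0 ≤ s * W := by positivity
  have q2 : 0 ≤ s ^ 3 * w ^ 2 := by positivity
  have q3 : 0 ≤ s * wt ^ 2 := by positivity
  have q4 := sq_nonneg P
  have b6 : - (σ * (P * wt)) - 1 / 2 * (σ * (a2F * w ^ 2)) ≤ (1 + A) * Q := by
    nlinarith [mul_nonneg hA.le q1, mul_nonneg hA.le q3, mul_nonneg hA.le q4, mul_nonneg hA.le q2]
  have b7 : σ * (1 / 2 * (wt ^ 2 + W + a2E * w ^ 2)) ≤ (1 + A) * Q := by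
    nlinarith [mul_nonneg hA.le q1, mul_nonneg hA.le q3, mul_nonneg hA.le q4, mul_nonneg hA.le q2]
  have hQ0 : 0 ≤ (1 + A) * Q := by positivity
  have b8 : (T - t) * (- (σ * (P * wt)) - 1 / 2 * (σ * (a2F * w ^ 2))) ≤ T * ((1 + A) * Q) :=
    (mul_le_mul_of_nonneg_left b6 hT).trans (mul_le_mul_of_nonneg_right (by linarith) hQ0)
  nlinarith
end core

section core2
variable {n : ℕ}
local notation "EV" => EuclideanSpace ℝ (Fin n) × ℝ

theorem DDx_zero {w : EV → ℝ} (hw : Sm w) (h0 : ∀ x, w (x, 0) = 0) (i : Fin n)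
    (x : EuclideanSpace ℝ (Fin n)) : DD (ex i) w (x, 0) = 0 := by
  have h : HD (ex i) w 0 (x, 0) := by
    unfold HD
    have : (fun τ : ℝ => w ((x, 0) + τ • ex i)) = fun _ => 0 := by
      ext τ
      simpa [ex] using h0 (x + τ • EuclideanSpace.single i 1)
    rw [this]; exact hasDerivAt_const _ _
  exact h.DD_eq hw

theorem W2_nonneg (w : EV → ℝ) (q : EV) : 0 ≤ W2 w q := Finset.sum_nonneg (fun _ _ => sq_nonneg _)

theorem YW_sq (x₀ : EuclideanSpace ℝ (Fin n)) (w : EV → ℝ) (q : EV) :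
    YW x₀ w q ^ 2 ≤ rr x₀ q * W2 w q := Finset.sum_mul_sq_le_sq_mul_sq _ _ _

theorem W2_XS {K : Set (EuclideanSpace ℝ (Fin n))} (hK : IsClosed K) {w : EV → ℝ} (hs : XS K w) :
    XS K (W2 w) := by
  intro x hx t
  simp [W2, (hs.DD hK (ex _)) x hx t]
theorem YW_XS (x₀ : EuclideanSpace ℝ (Fin n)) {K : Set (EuclideanSpace ℝ (Fin n))} (hK : IsClosed K) {w : EV → ℝ} (hs : XS K w) :
    XS K (YW x₀ w) := by
  intro x hx t
  simp [YW, (hs.DD hK (ex _)) x hx t]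
theorem box_XS {K : Set (EuclideanSpace ℝ (Fin n))} (hK : IsClosed K) {w : EV → ℝ} (hs : XS K w) :
    XS K (box w) := by
  intro x hx t
  simp [box, ((hs.DD hK (ex _)).DD hK _) x hx t, ((hs.DD hK et).DD hK _) x hx t]
theorem P1_XS (x₀ : EuclideanSpace ℝ (Fin n)) (β C₀ l s : ℝ) {K : Set (EuclideanSpace ℝ (Fin n))}
    (hK : IsClosed K) {w : EV → ℝ} (hs : XS K w) : XS K (P1 x₀ β C₀ l s w) := by
  intro x hx t
  simp [P1, hs x hx t, box_XS hK hs x hx t]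
theorem P2_XS (x₀ : EuclideanSpace ℝ (Fin n)) (β C₀ l s : ℝ) {K : Set (EuclideanSpace ℝ (Fin n))}
    (hK : IsClosed K) {w : EV → ℝ} (hs : XS K w) : XS K (P2 x₀ β C₀ l s w) := by
  intro x hx t
  simp [P2, XX, hs x hx t, YW_XS x₀ hK hs x hx t, hs.DD hK et x hx t]
theorem NN_XS (x₀ : EuclideanSpace ℝ (Fin n)) (β C₀ l s : ℝ) {K : Set (EuclideanSpace ℝ (Fin n))}
    (hK : IsClosed K) {w : EV → ℝ} (hs : XS K w) : XS K (NN x₀ β C₀ l s w) := by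
  intro x hx t
  simp [NN, hs x hx t, YW_XS x₀ hK hs x hx t, hs.DD hK et x hx t, W2_XS hK hs x hx t]
theorem VV_XS (x₀ : EuclideanSpace ℝ (Fin n)) (β C₀ l s : ℝ) {K : Set (EuclideanSpace ℝ (Fin n))}
    (hK : IsClosed K) {w : EV → ℝ} (hs : XS K w) (i : Fin n) : XS K (VV x₀ β C₀ l s w i) := by
  intro x hx t
  simp [VV, hs x hx t, hs.DD hK et x hx t, W2_XS hK hs x hx t, hs.DD hK (ex i) x hx t]
theorem sm_P1 (x₀ : EuclideanSpace ℝ (Fin n)) (β C₀ l s : ℝ) {w : EV → ℝ} (hw : Sm w) :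
    Sm (P1 x₀ β C₀ l s w) :=
  (sm_box hw).add ((((sm_aa x₀ β C₀ l s).pow 2).mul (sm_EE x₀ β)).mul hw)
theorem sm_P2 (x₀ : EuclideanSpace ℝ (Fin n)) (β C₀ l s : ℝ) {w : EV → ℝ} (hw : Sm w) :
    Sm (P2 x₀ β C₀ l s w) :=
  (((Sm.cst 2).mul (sm_aa x₀ β C₀ l s)).mul (sm_XX x₀ β hw)).sub ((sm_gg x₀ β C₀ l s).mul hw)

/-- the uniform bounds on the weights -/
def Reg (Ω : Set (EuclideanSpace ℝ (Fin n))) (T : ℝ) (x₀ : EuclideanSpace ℝ (Fin n))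
    (β C₀ l a0 A : ℝ) : Prop := ∀ q : EV, q.1 ∈ Ω → q.2 ∈ Icc 0 T →
      a0 ≤ aa x₀ β C₀ l 1 q ∧ aa x₀ β C₀ l 1 q ≤ A ∧ |gg x₀ β C₀ l 1 q| ≤ A ∧
      |DD et (gg x₀ β C₀ l 1) q| ≤ A ∧ |box (gg x₀ β C₀ l 1) q| ≤ A ∧
      |aa x₀ β C₀ l 1 q ^ 2 * EE x₀ β q| ≤ A ∧
      |aa x₀ β C₀ l 1 q ^ 2 * (2 * β ^ 2 * q.2 - 4 * l * β * q.2 * EE x₀ β q)| ≤ A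

/-- the quadratic quantity controlled by the Carleman estimate -/
noncomputable def SS (s : ℝ) (w : EV → ℝ) (q : EV) : ℝ :=
  s * (DD et w q ^ 2 + W2 w q) + s ^ 3 * w q ^ 2

theorem sm_SS (s : ℝ) {w : EV → ℝ} (hw : Sm w) : Sm (SS s w) :=
  ((Sm.cst s).mul (((hw.DD et).pow 2).add (sm_W2 hw))).add ((Sm.cst (s ^ 3)).mul (hw.pow 2))
theorem SS_XS (s : ℝ) {K : Set (EuclideanSpace ℝ (Fin n))}
    (hK : IsClosed K) {w : EV → ℝ} (hs : XS K w) : XS K (SS s w) := by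
  intro x hx t
  simp [SS, hs x hx t, hs.DD hK et x hx t, W2_XS hK hs x hx t]

theorem core1 (Ω : Set (EuclideanSpace ℝ (Fin n))) {T : ℝ} (hT : 0 < T)
    (x₀ : EuclideanSpace ℝ (Fin n)) {β δ ρ C₀ l a0 A s : ℝ} (hβ : β ∈ Ioo (0:ℝ) 1) (hδ : 0 < δ)
    (hΩ : ∀ x ∈ Ω, δ ≤ ‖x - x₀‖ ∧ ‖x - x₀‖ ≤ ρ) (hρ : 0 ≤ ρ) (hρT : ρ < β * T)
    (hl : 0 < l) (hl2 : 1 ≤ l * ((1 - β) * δ ^ 2)) (ha0 : 0 < a0) (hA : 0 < A)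
    (hreg : Reg Ω T x₀ β C₀ l a0 A) (hs1 : 1 ≤ s)
    (hs2 : A ≤ s * (a0 ^ 3 * ((1 - β) * δ ^ 2)))
    (hs3 : A ^ 2 / (a0 * (β * T - ρ)) + A ≤ s * (a0 ^ 3 * (β * T - ρ) ^ 3))
    {K : Set (EuclideanSpace ℝ (Fin n))} (hK : IsCompact K) (hKΩ : K ⊆ Ω)
    {w : EV → ℝ} (hw : Sm w) (hs : XS K w) (h0 : ∀ x, w (x, 0) = 0) {c : ℝ}
    (hc1 : c ≤ 2 * (a0 * (1 - β))) (hc2 : c ≤ a0 ^ 3 * ((1 - β) * δ ^ 2)) :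
    ∫ q, (P1 x₀ β C₀ l s w q ^ 2 + c * SS s w q) ∂(mu n T) ≤
      ∫ q, (P1 x₀ β C₀ l s w q + P2 x₀ β C₀ l s w q) ^ 2 ∂(mu n T) := by
  have hKc := hK.isClosed
  have hs0 : 0 < s := by linarith
  have sP1 := sm_P1 x₀ β C₀ l s hw
  have sP2 := sm_P2 x₀ β C₀ l s hw
  have sSS := sm_SS s hw
  have xP1 := P1_XS x₀ β C₀ l s hKc hs
  have xP2 := P2_XS x₀ β C₀ l s hKc hs
  have xSS := SS_XS s hKc hs
  have xN := NN_XS x₀ β C₀ l s hKc hs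
  have xV := VV_XS x₀ β C₀ l s hKc hs
  have sN := sm_NN x₀ β C₀ l s hw
  have sV := sm_VV x₀ β C₀ l s hw
  have I1 : Integrable (fun q => P1 x₀ β C₀ l s w q ^ 2 + c * SS s w q) (mu n T) :=
    integrable_mu hK ((sP1.pow 2).add ((Sm.cst c).mul sSS)).cont
      (fun x hx t => by simp [xP1 x hx t, xSS x hx t]) T
  have I2 : Integrable (fun q => (P1 x₀ β C₀ l s w q + P2 x₀ β C₀ l s w q) ^ 2) (mu n T) :=
    integrable_mu hK ((sP1.add sP2).pow 2).cont
      (fun x hx t => by simp [xP1 x hx t, xP2 x hx t]) T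
  have I3 : Integrable (DD et (NN x₀ β C₀ l s w)) (mu n T) :=
    integrable_mu hK (sN.DD et).cont (xN.DD hKc et) T
  have I4 : ∀ i, Integrable (DD (ex i) (VV x₀ β C₀ l s w i)) (mu n T) := fun i =>
    integrable_mu hK ((sV i).DD (ex i)).cont ((xV i).DD hKc (ex i)) T
  have I5 : Integrable (fun q => ∑ i, DD (ex i) (VV x₀ β C₀ l s w i) q) (mu n T) :=
    integrable_finsetSum _ (fun i _ => I4 i)
  have I6 : Integrable (fun q => 2 * (DD et (NN x₀ β C₀ l s w) q
      + ∑ i, DD (ex i) (VV x₀ β C₀ l s w i) q)) (mu n T) := (I3.add I5).const_mul 2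
  have hN0 : ∫ x, NN x₀ β C₀ l s w (x, 0) = 0 := by
    have : (fun x => NN x₀ β C₀ l s w (x, 0)) = fun _ => 0 := by
      ext x
      simp [NN, YW, W2, h0 x, DDx_zero hw h0]
    rw [this]; simp
  have hNT : 0 ≤ ∫ x, NN x₀ β C₀ l s w (x, T) := by
    apply integral_nonneg
    intro x
    by_cases hx : x ∈ K
    · obtain ⟨r1, r2, r3, r4, r5, r6, r7⟩ := hreg (x, T) (hKΩ hx) ⟨hT.le, le_rfl⟩
      have hd := hΩ x (hKΩ hx)
      have hrr : rr x₀ ((x, T) : EV) ≤ ρ ^ 2 := by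
        rw [rr_eq]; exact pow_le_pow_left₀ (norm_nonneg _) hd.2 2
      have hW := W2_nonneg w (x, T)
      refine flux_nonneg (β * T - ρ) s a0 A _ _ _ _ _ _ _ _ ρ (β * T) rfl (by linarith) hρ ha0 hs1
        ?_ ?_ ?_ hW ?_ ?_ hA hs3
      · rw [aa_scale]; exact mul_le_mul_of_nonneg_left r1 hs0.le
      · rw [gg_scale, abs_mul, abs_of_pos hs0]; exact mul_le_mul_of_nonneg_left r3 hs0.le
      · rw [ggt_scale, abs_mul, abs_of_pos hs0]; exact mul_le_mul_of_nonneg_left r4 hs0.le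
      · exact (YW_sq x₀ w _).trans (mul_le_mul_of_nonneg_right hrr hW)
      · simp only [EE]
        nlinarith
    · exact (xN x hx T).ge
  have key : ∫ q, (P1 x₀ β C₀ l s w q ^ 2 + c * SS s w q) ∂(mu n T) ≤
      ∫ q, ((P1 x₀ β C₀ l s w q + P2 x₀ β C₀ l s w q) ^ 2 - 2 * (DD et (NN x₀ β C₀ l s w) q
        + ∑ i, DD (ex i) (VV x₀ β C₀ l s w i) q)) ∂(mu n T) := by
    apply integral_mono_ae I1 (I2.sub I6)
    filter_upwards [ae_mu (n := n) T] with q hq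
    by_cases hx : q.1 ∈ K
    · obtain ⟨r1, r2, r3, r4, r5, r6, r7⟩ := hreg q (hKΩ hx) ⟨hq.1.le, hq.2.le⟩
      have hd := hΩ q.1 (hKΩ hx)
      have hrr : δ ^ 2 ≤ rr x₀ q := by
        rw [rr_eq]; exact pow_le_pow_left₀ hδ.le hd.1 2
      have hW := W2_nonneg w q
      have hb := bulk_lower β δ l s a0 A (aa x₀ β C₀ l s q) (EE x₀ β q) (rr x₀ q) (w q) (DD et w q)
        (W2 w q) (XX x₀ β w q) (box (gg x₀ β C₀ l s) q) hβ hl hl2 hrr ha0 hs1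
        (by rw [aa_scale]; exact mul_le_mul_of_nonneg_left r1 hs0.le)
        (by rw [ggbox_scale, abs_mul, abs_of_pos hs0]; exact mul_le_mul_of_nonneg_left r5 hs0.le)
        hW hs2
      have hm := main_identity x₀ β C₀ l s hw q
      have hbd : c * SS s w q ≤ 2 * bulk x₀ β C₀ l s w q := by
        have e1 : c * (s * (DD et w q ^ 2 + W2 w q)) ≤
            2 * (a0 * (1 - β)) * (s * (DD et w q ^ 2 + W2 w q)) :=
          mul_le_mul_of_nonneg_right hc1 (by positivity)
        have e2 : c * (s ^ 3 * w q ^ 2) ≤ a0 ^ 3 * ((1 - β) * δ ^ 2) * (s ^ 3 * w q ^ 2) :=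
          mul_le_mul_of_nonneg_right hc2 (by positivity)
        have e3 : bulk x₀ β C₀ l s w q = _ := rfl
        simp only [bulk] at e3
        simp only [SS]
        rw [bulk]
        linarith
      have := sq_nonneg (P2 x₀ β C₀ l s w q)
      show P1 x₀ β C₀ l s w q ^ 2 + c * SS s w q ≤ (P1 x₀ β C₀ l s w q + P2 x₀ β C₀ l s w q) ^ 2
        - 2 * (DD et (NN x₀ β C₀ l s w) q + ∑ i, DD (ex i) (VV x₀ β C₀ l s w i) q)
      have e4 : (P1 x₀ β C₀ l s w q + P2 x₀ β C₀ l s w q) ^ 2 = P1 x₀ β C₀ l s w q ^ 2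
        + 2 * (P1 x₀ β C₀ l s w q * P2 x₀ β C₀ l s w q) + P2 x₀ β C₀ l s w q ^ 2 := by ring
      rw [e4, hm]
      linarith
    · obtain ⟨x, t⟩ := q
      simp only at hx
      simp [xP1 x hx t, xP2 x hx t, xSS x hx t, xN.DD hKc et x hx t,
        fun i => (xV i).DD hKc (ex i) x hx t]
  rw [integral_sub I2 I6, integral_const_mul, integral_add I3 I5,
    integral_finsetSum _ (fun i _ => I4 i), int_Dt hK sN xN hT.le, hN0] at key
  rw [Finset.sum_eq_zero (fun i _ => int_Dx hK (sV i) (xV i) T i)] at key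
  linarith

theorem core2 (Ω : Set (EuclideanSpace ℝ (Fin n))) {T : ℝ} (hT : 0 < T)
    (x₀ : EuclideanSpace ℝ (Fin n)) {β C₀ l a0 A s : ℝ} (hA : 0 < A)
    (hreg : Reg Ω T x₀ β C₀ l a0 A) (hs1 : 1 ≤ s)
    {K : Set (EuclideanSpace ℝ (Fin n))} (hK : IsCompact K) (hKΩ : K ⊆ Ω)
    {w : EV → ℝ} (hw : Sm w) (hs : XS K w) (h0 : ∀ x, w (x, 0) = 0) :
    √s * (T * (1 / 2 * ∫ x, DD et w (x, 0) ^ 2)) ≤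
      (1 + T) * (1 + A) * ∫ q, (P1 x₀ β C₀ l s w q ^ 2 + SS s w q) ∂(mu n T) := by
  have hKc := hK.isClosed
  have hs0 : 0 < s := by linarith
  have sP1 := sm_P1 x₀ β C₀ l s hw
  have sSS := sm_SS s hw
  have xP1 := P1_XS x₀ β C₀ l s hKc hs
  have xSS := SS_XS s hKc hs
  have sE := sm_en x₀ β C₀ l s hw
  have xE : XS K (en x₀ β C₀ l s w) := fun x hx t => by
    simp [en, hs x hx t, hs.DD hKc et x hx t, W2_XS hKc hs x hx t]
  have sF : Sm (fun q => (T - q.2) * en x₀ β C₀ l s w q) := (sm_Tt T).mul sE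
  have xF : XS K (fun q => (T - q.2) * en x₀ β C₀ l s w q) := fun x hx t => by simp [xE x hx t]
  have sG : ∀ i, Sm (fun q => (T - q.2) * (DD (ex i) w q * DD et w q)) := fun i =>
    (sm_Tt T).mul ((hw.DD _).mul (hw.DD _))
  have xG : ∀ i, XS K (fun q => (T - q.2) * (DD (ex i) w q * DD et w q)) := fun i x hx t => by
    simp [hs.DD hKc et x hx t]
  have I1 : Integrable (fun q => P1 x₀ β C₀ l s w q ^ 2 + SS s w q) (mu n T) :=
    integrable_mu hK ((sP1.pow 2).add sSS).cont
      (fun x hx t => by simp [xP1 x hx t, xSS x hx t]) T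
  have IF := integrable_mu hK (sF.DD et).cont (xF.DD hKc et) T
  have IG := fun i => integrable_mu hK ((sG i).DD (ex i)).cont ((xG i).DD hKc (ex i)) T
  have IGs := integrable_finsetSum Finset.univ (fun i _ => IG i)
  have h1 := int_Dt hK sF xF hT.le
  have h2 : ∫ x, (T - (x, (0:ℝ)).2) * en x₀ β C₀ l s w (x, 0) = T * (1 / 2 * ∫ x, DD et w (x, 0) ^ 2) := by
    rw [← integral_const_mul, ← integral_const_mul]
    congr 1; ext x
    simp [en, W2, h0 x, DDx_zero hw h0]
  have h3 : ∫ x, (T - (x, T).2) * en x₀ β C₀ l s w (x, T) = 0 := by simp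
  have key : ∫ q, √s * ((∑ i, DD (ex i) (fun q => (T - q.2) * (DD (ex i) w q * DD et w q)) q) -
        DD et (fun q => (T - q.2) * en x₀ β C₀ l s w q) q) ∂(mu n T)
      ≤ ∫ q, (1 + T) * (1 + A) * (P1 x₀ β C₀ l s w q ^ 2 + SS s w q) ∂(mu n T) := by
    apply integral_mono_ae ((IGs.sub IF).const_mul _) (I1.const_mul _)
    filter_upwards [ae_mu (n := n) T] with q hq
    by_cases hx : q.1 ∈ K
    · obtain ⟨r1, r2, r3, r4, r5, r6, r7⟩ := hreg q (hKΩ hx) ⟨hq.1.le, hq.2.le⟩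
      have hb := energy_bound s A T q.2 (aa x₀ β C₀ l s q ^ 2 * EE x₀ β q)
        (aa x₀ β C₀ l s q ^ 2 * (2 * β ^ 2 * q.2 - 4 * l * β * q.2 * EE x₀ β q)) (w q) (DD et w q)
        (W2 w q) (P1 x₀ β C₀ l s w q) hs1 hA hq.1.le hq.2.le
        (by rw [aa_scale, mul_pow, mul_assoc, abs_mul, abs_of_pos (pow_pos hs0 2)]
            exact mul_le_mul_of_nonneg_left r6 (by positivity))
        (by rw [aa_scale, mul_pow, mul_assoc, abs_mul, abs_of_pos (pow_pos hs0 2)]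
            exact mul_le_mul_of_nonneg_left r7 (by positivity))
        (W2_nonneg w q)
      rw [Pi.sub_apply, energy_identity x₀ β C₀ l s T hw q]
      simp only [en, SS]
      refine le_trans (le_of_eq ?_) (hb.trans (le_of_eq ?_)) <;> ring
    · obtain ⟨x, t⟩ := q
      simp only at hx
      simp [xP1 x hx t, xSS x hx t, xF.DD hKc et x hx t, fun i => (xG i).DD hKc (ex i) x hx t]
  rw [integral_const_mul, integral_const_mul, integral_sub IGs IF, integral_finsetSum _ (fun i _ => IG i),
    Finset.sum_eq_zero (fun i _ => int_Dx hK (sG i) (xG i) T i), h1, h2, h3] at key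
  simpa using key

theorem core (Ω : Set (EuclideanSpace ℝ (Fin n))) (hΩb : Bornology.IsBounded Ω) {T : ℝ} (hT : 0 < T)
    (x₀ : EuclideanSpace ℝ (Fin n)) {β δ ρ C₀ l : ℝ} (hβ : β ∈ Ioo (0:ℝ) 1) (hδ : 0 < δ)
    (hΩ : ∀ x ∈ Ω, δ ≤ ‖x - x₀‖ ∧ ‖x - x₀‖ ≤ ρ) (hρ : 0 ≤ ρ) (hρT : ρ < β * T)
    (hl : 0 < l) (hl2 : 1 ≤ l * ((1 - β) * δ ^ 2)) :
    ∃ s1 ≥ (1:ℝ), ∃ M > (0:ℝ), ∃ A > (0:ℝ),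
      (∀ q : EV, q.1 ∈ Ω → q.2 ∈ Icc 0 T → |aa x₀ β C₀ l 1 q| ≤ A) ∧
      ∀ s ≥ s1, ∀ K : Set (EuclideanSpace ℝ (Fin n)), IsCompact K → K ⊆ Ω →
      ∀ w : EV → ℝ, Sm w → XS K w → (∀ x, w (x, 0) = 0) →
      √s * (∫ x, DD et w (x, 0) ^ 2) ≤
        M * ∫ q, (P1 x₀ β C₀ l s w q + P2 x₀ β C₀ l s w q) ^ 2 ∂(mu n T) ∧
      s ^ 3 * (∫ q, w q ^ 2 ∂(mu n T)) ≤
        M * ∫ q, (P1 x₀ β C₀ l s w q + P2 x₀ β C₀ l s w q) ^ 2 ∂(mu n T) := by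
  obtain ⟨a0, ha0, A, hA, hreg⟩ := region_consts Ω hΩb T x₀ β C₀ l hβ.1 hl
  have hb1 : 0 < 1 - β := by linarith [hβ.2]
  have hκ : 0 < β * T - ρ := by linarith
  set c1 := a0 ^ 3 * ((1 - β) * δ ^ 2) with hc1
  set c2 := a0 ^ 3 * (β * T - ρ) ^ 3 with hc2
  have c1p : 0 < c1 := by positivity
  have c2p : 0 < c2 := by positivity
  set B := A ^ 2 / (a0 * (β * T - ρ)) + A with hB
  have Bp : 0 < B := by positivity
  obtain ⟨c, hc0, hca, hcb, hcc⟩ : ∃ c : ℝ, 0 < c ∧ c ≤ 2 * (a0 * (1 - β)) ∧ c ≤ c1 ∧ c ≤ 1 :=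
    ⟨min (2 * (a0 * (1 - β))) (min c1 1), by positivity, min_le_left _ _,
      (min_le_right _ _).trans (min_le_left _ _), (min_le_right _ _).trans (min_le_right _ _)⟩
  refine ⟨1 + A / c1 + B / c2, by have : 0 < A / c1 + B / c2 := by positivity
                                  linarith, (2 / T * ((1 + T) * (1 + A)) + 1) / c, by positivity, A, hA, ?_, ?_⟩
  · intro q hq ht
    obtain ⟨r1, r2, -⟩ := hreg q hq ht
    rw [abs_le]; constructor <;> linarith
  intro s hs K hK hKΩ w hw hsw h0
  have p1 : 0 < A / c1 := by positivity
  have p2 : 0 < B / c2 := by positivity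
  have hs1 : 1 ≤ s := by linarith
  have hs0 : 0 < s := by linarith
  have hs2 : A ≤ s * c1 := by rw [← div_le_iff₀ c1p]; linarith
  have hs3 : B ≤ s * c2 := by rw [← div_le_iff₀ c2p]; linarith
  have k1 := core1 Ω hT x₀ hβ hδ hΩ hρ hρT hl hl2 ha0 hA hreg hs1 hs2 hs3 hK hKΩ hw hsw h0 hca hcb
  have k2 := core2 Ω hT x₀ hA hreg hs1 hK hKΩ hw hsw h0
  set R := ∫ q, (P1 x₀ β C₀ l s w q + P2 x₀ β C₀ l s w q) ^ 2 ∂(mu n T) with hR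
  have hKc := hK.isClosed
  have sP1 := sm_P1 x₀ β C₀ l s hw
  have sSS := sm_SS s hw
  have xP1 := P1_XS x₀ β C₀ l s hKc hsw
  have xSS := SS_XS s hKc hsw
  have I0 : ∀ c : ℝ, Integrable (fun q => P1 x₀ β C₀ l s w q ^ 2 + c * SS s w q) (mu n T) := fun c =>
    integrable_mu hK ((sP1.pow 2).add ((Sm.cst c).mul sSS)).cont
      (fun x hx t => by simp [xP1 x hx t, xSS x hx t]) T
  have I1 : Integrable (fun q => P1 x₀ β C₀ l s w q ^ 2 + SS s w q) (mu n T) := by simpa using I0 1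
  have Iw : Integrable (fun q => w q ^ 2) (mu n T) :=
    integrable_mu hK (hw.pow 2).cont (fun x hx t => by simp [hsw x hx t]) T
  have k3 : c * ∫ q, (P1 x₀ β C₀ l s w q ^ 2 + SS s w q) ∂(mu n T) ≤ R := by
    refine le_trans ?_ k1
    rw [← integral_const_mul]
    apply integral_mono (I1.const_mul c) (I0 c)
    intro q
    have := sq_nonneg (P1 x₀ β C₀ l s w q)
    show c * (P1 x₀ β C₀ l s w q ^ 2 + SS s w q) ≤ P1 x₀ β C₀ l s w q ^ 2 + c * SS s w q
    nlinarith
  have k4 : s ^ 3 * (∫ q, w q ^ 2 ∂(mu n T)) ≤ ∫ q, (P1 x₀ β C₀ l s w q ^ 2 + SS s w q) ∂(mu n T) := by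
    rw [← integral_const_mul]
    apply integral_mono (Iw.const_mul _) I1
    intro q
    have e1 := sq_nonneg (P1 x₀ β C₀ l s w q)
    have e2 := W2_nonneg w q
    have e3 : 0 ≤ s * (DD et w q ^ 2 + W2 w q) := by positivity
    show s ^ 3 * w q ^ 2 ≤ P1 x₀ β C₀ l s w q ^ 2 + (s * (DD et w q ^ 2 + W2 w q) + s ^ 3 * w q ^ 2)
    linarith
  have hR0 : 0 ≤ R := integral_nonneg (fun q => sq_nonneg _)
  have k5 : ∫ q, (P1 x₀ β C₀ l s w q ^ 2 + SS s w q) ∂(mu n T) ≤ R / c := by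
    rw [le_div_iff₀ hc0]; linarith
  have hRc : 0 ≤ R / c := by positivity
  have e : (2 / T * ((1 + T) * (1 + A)) + 1) / c * R = 2 / T * ((1 + T) * (1 + A)) * (R / c) + R / c := by
    field_simp
  have hp : 0 ≤ 2 / T * ((1 + T) * (1 + A)) := by positivity
  rw [e]
  constructor
  · have k6 : √s * (T * (1 / 2 * ∫ x, DD et w (x, 0) ^ 2)) ≤ (1 + T) * (1 + A) * (R / c) :=
      k2.trans (mul_le_mul_of_nonneg_left k5 (by positivity))
    have k7 := mul_le_mul_of_nonneg_left k6 (show (0:ℝ) ≤ 2 / T by positivity)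
    have e2 : 2 / T * (√s * (T * (1 / 2 * ∫ x, DD et w (x, 0) ^ 2))) = √s * ∫ x, DD et w (x, 0) ^ 2 := by
      field_simp
    rw [e2, ← mul_assoc] at k7
    linarith
  · have := mul_nonneg hp hRc
    linarith
end core2

section final
variable {n : ℕ}
local notation "EV" => EuclideanSpace ℝ (Fin n) × ℝ

theorem fderiv_slice {u : EV → ℝ} (hu : Sm u) (x : EuclideanSpace ℝ (Fin n)) (t : ℝ) (i : Fin n) :
    fderiv ℝ (fun y => u (y, t)) x (EuclideanSpace.single i 1) = DD (ex i) u (x, t) := by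
  have h := (hu.diff (x, t)).hasFDerivAt.comp x (hasFDerivAt_prodMk_left (𝕜 := ℝ) x t)
  have h2 : fderiv ℝ (fun y => u (y, t)) x = _ := h.fderiv
  rw [h2]
  simp [DD, ex]

theorem lap_slice {u : EV → ℝ} (hu : Sm u) (x : EuclideanSpace ℝ (Fin n)) (t : ℝ) :
    lap (fun y => u (y, t)) x = ∑ i, DD (ex i) (DD (ex i) u) (x, t) := by
  unfold lap
  refine Finset.sum_congr rfl (fun i _ => ?_)
  simp_rw [fderiv_slice hu _ t i]
  exact fderiv_slice (hu.DD (ex i)) x t i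

theorem deriv_slice {u : EV → ℝ} (hu : Sm u) (x : EuclideanSpace ℝ (Fin n)) :
    deriv (fun t => u (x, t)) = fun t => DD et u (x, t) := by
  ext t; exact (hasDerivAt_slice hu x t).deriv

theorem phi_eq (x₀ : EuclideanSpace ℝ (Fin n)) (β C₀ l : ℝ) (x : EuclideanSpace ℝ (Fin n)) (t : ℝ) :
    phi x₀ β C₀ l x t = ph x₀ β C₀ l (x, t) := by
  simp [phi, psi, ph, rr_eq]

/-- The whole-cylinder measure is a restriction of Lebesgue measure. -/
theorem nu_eq (a b : ℝ) : (volume : Measure (EuclideanSpace ℝ (Fin n))).prod (volume.restrict (Ioo a b))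
    = (volume : Measure EV).restrict (univ ×ˢ Ioo a b) := by
  rw [Measure.volume_eq_prod, ← Measure.prod_restrict, Measure.restrict_univ]

theorem absorb (Ω : Set (EuclideanSpace ℝ (Fin n))) {T : ℝ}
    (x₀ : EuclideanSpace ℝ (Fin n)) {β C₀ l A s m : ℝ} (hβ : β ∈ Ioo (0:ℝ) 1)
    (hA : ∀ q : EV, q.1 ∈ Ω → q.2 ∈ Icc 0 T → |aa x₀ β C₀ l 1 q| ≤ A) (hs1 : 1 ≤ s)
    {K : Set (EuclideanSpace ℝ (Fin n))} (hK : IsCompact K) (hKΩ : K ⊆ Ω)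
    {z : EV → ℝ} (hz : Sm z) (hzK : XS K z) (p : EV → ℝ)
    (hp : ∀ᵐ q ∂(mu n T), q.1 ∈ Ω → |p q| ≤ m)
    (hI : Integrable (fun q => (Real.exp (s * ph x₀ β C₀ l q) * (box z q + p q * z q)) ^ 2) (mu n T)) :
    ∫ q, (P1 x₀ β C₀ l s (ww x₀ β C₀ l s z) q + P2 x₀ β C₀ l s (ww x₀ β C₀ l s z) q) ^ 2 ∂(mu n T) ≤
      3 * (∫ q, (Real.exp (s * ph x₀ β C₀ l q) * (box z q + p q * z q)) ^ 2 ∂(mu n T))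
        + 3 * (m ^ 2 + 4 * A ^ 2) * s ^ 2 * ∫ q, ww x₀ β C₀ l s z q ^ 2 ∂(mu n T) := by
  set w := ww x₀ β C₀ l s z with hwdef
  have hs0 : 0 < s := by linarith
  have hw : Sm w := sm_ww x₀ β C₀ l s hz
  have xw : XS K w := fun x hx t => by simp [hwdef, ww, hzK x hx t]
  have hKc := hK.isClosed
  have xP1 := P1_XS x₀ β C₀ l s hKc xw
  have xP2 := P2_XS x₀ β C₀ l s hKc xw
  have I2 : Integrable (fun q => (P1 x₀ β C₀ l s w q + P2 x₀ β C₀ l s w q) ^ 2) (mu n T) :=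
    integrable_mu hK (((sm_P1 x₀ β C₀ l s hw).add (sm_P2 x₀ β C₀ l s hw)).pow 2).cont
      (fun x hx t => by simp [xP1 x hx t, xP2 x hx t]) T
  have Iw : Integrable (fun q => w q ^ 2) (mu n T) :=
    integrable_mu hK (hw.pow 2).cont (fun x hx t => by simp [xw x hx t]) T
  rw [← integral_const_mul, ← integral_const_mul, ← integral_add (hI.const_mul _) (Iw.const_mul _)]
  apply integral_mono_ae I2 ((hI.const_mul _).add (Iw.const_mul _))
  filter_upwards [ae_mu (n := n) T, hp] with q hq hpq
  show (P1 x₀ β C₀ l s w q + P2 x₀ β C₀ l s w q) ^ 2 ≤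
    3 * (Real.exp (s * ph x₀ β C₀ l q) * (box z q + p q * z q)) ^ 2
      + 3 * (m ^ 2 + 4 * A ^ 2) * s ^ 2 * w q ^ 2
  by_cases hx : q.1 ∈ K
  · have hpm := hpq (hKΩ hx)
    have ha := hA q (hKΩ hx) ⟨hq.1.le, hq.2.le⟩
    have hci := conj_identity x₀ β C₀ l s hz q
    rw [← hwdef] at hci
    have hww : w q = Real.exp (s * ph x₀ β C₀ l q) * z q := rfl
    have e : Real.exp (s * ph x₀ β C₀ l q) * (box z q + p q * z q) =
        P1 x₀ β C₀ l s w q + P2 x₀ β C₀ l s w q + (1 + β) * aa x₀ β C₀ l s q * w q + p q * w q := by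
      rw [← hci, hww]; ring
    set D := Real.exp (s * ph x₀ β C₀ l q) * (box z q + p q * z q) with hD
    set P := P1 x₀ β C₀ l s w q + P2 x₀ β C₀ l s w q with hP
    have eP : P = D - (1 + β) * (s * aa x₀ β C₀ l 1 q) * w q - p q * w q := by
      rw [e, aa_scale x₀ β C₀ l s q]; ring
    have b1 : p q ^ 2 ≤ m ^ 2 := by
      rw [← sq_abs]; exact pow_le_pow_left₀ (abs_nonneg _) hpm 2
    have b2 : aa x₀ β C₀ l 1 q ^ 2 ≤ A ^ 2 := by
      rw [← sq_abs]; exact pow_le_pow_left₀ (abs_nonneg _) ha 2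
    have b3 : (1 + β) ^ 2 ≤ 4 := by nlinarith [hβ.1, hβ.2]
    set a := aa x₀ β C₀ l 1 q
    have c1 : P ^ 2 ≤ 3 * D ^ 2 + 3 * (((1 + β) * (s * a)) * w q) ^ 2 + 3 * (p q * w q) ^ 2 := by
      rw [eP]
      nlinarith [sq_nonneg (D + (1 + β) * (s * a) * w q), sq_nonneg (D + p q * w q),
        sq_nonneg ((1 + β) * (s * a) * w q - p q * w q)]
    have c2 : (((1 + β) * (s * a)) * w q) ^ 2 ≤ 4 * A ^ 2 * s ^ 2 * w q ^ 2 := by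
      have : (1 + β) ^ 2 * a ^ 2 ≤ 4 * A ^ 2 := mul_le_mul b3 b2 (sq_nonneg _) (by norm_num)
      calc (((1 + β) * (s * a)) * w q) ^ 2 = (1 + β) ^ 2 * a ^ 2 * (s ^ 2 * w q ^ 2) := by ring
        _ ≤ 4 * A ^ 2 * (s ^ 2 * w q ^ 2) := mul_le_mul_of_nonneg_right this (by positivity)
        _ = _ := by ring
    have c3 : (p q * w q) ^ 2 ≤ m ^ 2 * s ^ 2 * w q ^ 2 := by
      rw [mul_pow]
      apply mul_le_mul_of_nonneg_right _ (sq_nonneg _)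
      have : (1:ℝ) ≤ s ^ 2 := by nlinarith
      nlinarith [sq_nonneg m]
    linarith
  · obtain ⟨x, t⟩ := q
    simp only at hx
    rw [xP1 x hx t, xP2 x hx t, xw x hx t]
    simp only [add_zero, ne_eq, OfNat.ofNat_ne_zero, not_false_eq_true, zero_pow, mul_zero]
    positivity

theorem integrable_D (Ω : Set (EuclideanSpace ℝ (Fin n))) (hΩm : MeasurableSet Ω) {a b m : ℝ}
    {K : Set (EuclideanSpace ℝ (Fin n))} (hK : IsCompact K) (hKΩ : K ⊆ Ω)
    {f w : EV → ℝ} (hf : Continuous f) (xf : XS K f) (hw : Continuous w) (xw : XS K w)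
    (p : EV → ℝ) (hp : Measurable p)
    (hpm : ∀ᵐ q ∂((volume : Measure EV).restrict (Ω ×ˢ Ioo a b)), |p q| ≤ m) :
    Integrable (fun q => (f q + p q * w q) ^ 2)
      ((volume : Measure (EuclideanSpace ℝ (Fin n))).prod (volume.restrict (Ioo a b))) := by
  set ν := (volume : Measure (EuclideanSpace ℝ (Fin n))).prod (volume.restrict (Ioo a b)) with hν
  set p' : EV → ℝ := (Ω ×ˢ univ).indicator p with hp'
  have hp'm : Measurable p' := hp.indicator (hΩm.prod MeasurableSet.univ)
  have hm0 : ∀ᵐ q ∂ν, ‖p' q‖ ≤ |m| := by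
    rw [hν, nu_eq, ae_restrict_iff' (MeasurableSet.univ.prod measurableSet_Ioo)]
    rw [ae_restrict_iff' (hΩm.prod measurableSet_Ioo)] at hpm
    filter_upwards [hpm] with q hq ht
    by_cases hx : q.1 ∈ Ω
    · have : p' q = p q := indicator_of_mem (by exact ⟨hx, trivial⟩) _
      rw [this]
      exact (hq ⟨hx, ht.2⟩).trans (le_abs_self m)
    · have : p' q = 0 := indicator_of_notMem (fun h => hx h.1) _
      rw [this]; simp
  have hpw : ∀ q, p q * w q = p' q * w q := by
    intro q
    by_cases hx : q.1 ∈ Ω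
    · have : p' q = p q := indicator_of_mem (by exact ⟨hx, trivial⟩) _
      rw [this]
    · have : w q = 0 := xw q.1 (fun h => hx (hKΩ h)) q.2
      rw [this]; simp
  have e : (fun q => (f q + p q * w q) ^ 2) =
      fun q => f q ^ 2 + (p' q * (2 * f q * w q) + p' q * (p' q * w q ^ 2)) := by
    ext q; rw [hpw]; ring
  rw [e]
  have I1 : Integrable (fun q => f q ^ 2) ν :=
    integrable_prod_gen hK (by fun_prop) (fun x hx t => by simp [xf x hx t]) a b
  have I2 : Integrable (fun q => 2 * f q * w q) ν :=
    integrable_prod_gen hK (by fun_prop) (fun x hx t => by simp [xf x hx t]) a b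
  have I3 : Integrable (fun q => w q ^ 2) ν :=
    integrable_prod_gen hK (by fun_prop) (fun x hx t => by simp [xw x hx t]) a b
  have hsm := hp'm.aestronglyMeasurable (μ := ν)
  exact I1.add ((I2.bdd_mul hsm hm0).add ((I3.bdd_mul hsm hm0).bdd_mul hsm hm0))
end final

/-- **Carleman estimate with a pointwise velocity term at time `0`** (estimate (1.8) of
Theorem 1.2 / Theorem 2.10), specialized to functions supported, in the space variable, in a
compact subset of `Ω` and satisfying `z(·,0) = 0` on `Ω`:
`s^{1/2}∫_Ω e^{2sφ(0)}|∂ₜz(0)|² ≤ M∫∫ e^{2sφ}|∂ₜ²z - Δz + pz|²`. -/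
theorem carleman_pointwise_at_zero
    (n : ℕ) (hn : 1 ≤ n)
    (Ω : Set (EuclideanSpace ℝ (Fin n))) (hΩo : IsOpen Ω) (hΩb : Bornology.IsBounded Ω)
    (T : ℝ) (hT : 0 < T)
    (x₀ : EuclideanSpace ℝ (Fin n)) (hx₀ : x₀ ∉ closure Ω)
    (β : ℝ) (hβ : β ∈ Set.Ioo (0:ℝ) 1)
    (htime : sSup ((fun x => ‖x - x₀‖) '' Ω) < β * T)
    (C₀ : ℝ) (hC₀ : 0 < C₀)
    (hψ : ∀ x ∈ Ω, ∀ t ∈ Set.Ioo (-T) T, 1 ≤ psi x₀ β C₀ x t) :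
    ∃ l > (0:ℝ), ∀ m > (0:ℝ), ∃ s₀ > (0:ℝ), ∃ M > (0:ℝ),
      ∀ p : EuclideanSpace ℝ (Fin n) × ℝ → ℝ, Measurable p →
        (∀ᵐ q ∂((volume : Measure (EuclideanSpace ℝ (Fin n) × ℝ)).restrict
            (Ω ×ˢ Set.Ioo (-T) T)), |p q| ≤ m) →
      ∀ s ≥ s₀,
      ∀ z : EuclideanSpace ℝ (Fin n) → ℝ → ℝ,
        ContDiff ℝ (⊤ : ℕ∞) (fun q : EuclideanSpace ℝ (Fin n) × ℝ => z q.1 q.2) →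
        (∃ K : Set (EuclideanSpace ℝ (Fin n)), IsCompact K ∧ K ⊆ Ω ∧
          ∀ x ∉ K, ∀ t : ℝ, z x t = 0) →
        (∀ x ∈ Ω, z x 0 = 0) →
        Real.sqrt s * (∫ x in Ω,
            Real.exp (2 * s * phi x₀ β C₀ l x 0) * (deriv (z x) 0) ^ 2)
        ≤ M * ∫ t in Set.Ioo (-T) T, ∫ x in Ω, Real.exp (2 * s * phi x₀ β C₀ l x t) *
            (deriv (deriv (z x)) t - lap (fun y => z y t) x + p (x, t) * z x t) ^ 2 := by
  have hΩm : MeasurableSet Ω := hΩo.measurableSet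
  obtain ⟨δ, hδ, hδΩ⟩ : ∃ δ > (0:ℝ), ∀ x ∈ Ω, δ ≤ ‖x - x₀‖ := by
    rw [Metric.mem_closure_iff] at hx₀
    push Not at hx₀
    obtain ⟨ε, hε, h⟩ := hx₀
    exact ⟨ε, hε, fun x hx => by rw [← dist_eq_norm, dist_comm]; exact h x hx⟩
  have hbdd : BddAbove ((fun x => ‖x - x₀‖) '' Ω) := by
    obtain ⟨R, hR⟩ := hΩb.subset_closedBall x₀
    refine ⟨R, ?_⟩
    rintro _ ⟨x, hx, rfl⟩
    have := hR hx
    rwa [Metric.mem_closedBall, dist_eq_norm] at this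
  have hβT : 0 < β * T := mul_pos hβ.1 hT
  have hb1 : 0 < 1 - β := by linarith [hβ.2]
  set ρ := max 0 (sSup ((fun x => ‖x - x₀‖) '' Ω)) with hρ
  have hρ0 : 0 ≤ ρ := le_max_left _ _
  have hρT : ρ < β * T := max_lt hβT htime
  have hΩ : ∀ x ∈ Ω, δ ≤ ‖x - x₀‖ ∧ ‖x - x₀‖ ≤ ρ := fun x hx =>
    ⟨hδΩ x hx, (le_csSup hbdd (mem_image_of_mem _ hx)).trans (le_max_right _ _)⟩
  set l : ℝ := 1 / ((1 - β) * δ ^ 2) with hl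
  have hlp : 0 < l := by positivity
  have hl2 : 1 ≤ l * ((1 - β) * δ ^ 2) := by
    rw [hl, one_div, inv_mul_cancel₀ (by positivity)]
  obtain ⟨s1, hs1, M, hM, A, hA, hAa, hcore⟩ :=
    core (C₀ := C₀) Ω hΩb hT x₀ hβ hδ hΩ hρ0 hρT hlp hl2
  refine ⟨l, hlp, ?_⟩
  intro m hm
  have hq : 0 < 6 * (m ^ 2 + 4 * A ^ 2) * M := by positivity
  refine ⟨s1 + 6 * (m ^ 2 + 4 * A ^ 2) * M, by linarith, 6 * M, by positivity, ?_⟩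
  intro p hp hpm s hs z hz hzK hz0
  obtain ⟨K, hK, hKΩ, hzK⟩ := hzK
  have hss1 : s ≥ s1 := by linarith
  have hsone : 1 ≤ s := by linarith
  have hs0 : 0 < s := by linarith
  have hKc := hK.isClosed
  set Z : EuclideanSpace ℝ (Fin n) × ℝ → ℝ := fun q => z q.1 q.2 with hZ
  have sZ : Sm Z := hz
  have xZ : XS K Z := fun x hx t => hzK x hx t
  have Z0 : ∀ x, Z (x, 0) = 0 := fun x => by
    by_cases hx : x ∈ Ω
    · exact hz0 x hx
    · exact hzK x (fun h => hx (hKΩ h)) 0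
  set w := ww x₀ β C₀ l s Z with hw
  have sw : Sm w := sm_ww x₀ β C₀ l s sZ
  have xw : XS K w := fun x hx t => by simp [hw, ww, xZ x hx t]
  have w0 : ∀ x, w (x, 0) = 0 := fun x => by simp [hw, ww, Z0 x]
  obtain ⟨k1, k2⟩ := hcore s hss1 K hK hKΩ w sw xw w0
  set D : EuclideanSpace ℝ (Fin n) × ℝ → ℝ :=
    fun q => Real.exp (s * ph x₀ β C₀ l q) * (box Z q + p q * Z q) with hD
  have hexp : ∀ q : EuclideanSpace ℝ (Fin n) × ℝ,
      Real.exp (2 * s * ph x₀ β C₀ l q) = Real.exp (s * ph x₀ β C₀ l q) ^ 2 := fun q => by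
    rw [← Real.exp_nat_mul]; congr 1; push_cast; ring
  have xD : XS K D := fun x hx t => by
    simp [hD, xZ x hx t, box_XS hKc xZ x hx t]
  -- integrability on the whole cylinder
  have cf : Continuous (fun q => Real.exp (s * ph x₀ β C₀ l q) * box Z q) :=
    ((((Sm.cst s).mul (sm_ph x₀ β C₀ l)).exp).mul (sm_box sZ)).cont
  have ID : Integrable (fun q => D q ^ 2)
      ((volume : Measure (EuclideanSpace ℝ (Fin n))).prod (volume.restrict (Ioo (-T) T))) := by
    have := integrable_D Ω hΩm hK hKΩ cf
      (fun x hx t => by simp [box_XS hKc xZ x hx t]) sw.cont xw p hp hpm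
    refine this.congr (Filter.Eventually.of_forall fun q => ?_)
    simp only [hD, hw, ww]; ring
  have hle : mu n T ≤ (volume : Measure (EuclideanSpace ℝ (Fin n))).prod
      (volume.restrict (Ioo (-T) T)) := by
    unfold mu
    rw [nu_eq, nu_eq]
    exact Measure.restrict_mono (prod_mono le_rfl (Ioo_subset_Ioo_left (by linarith))) le_rfl
  have IDmu : Integrable (fun q => D q ^ 2) (mu n T) := ID.mono_measure hle
  have hDle : ∫ q, D q ^ 2 ∂(mu n T) ≤ ∫ q, D q ^ 2 ∂((volume : Measure (EuclideanSpace ℝ (Fin n))).prod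
      (volume.restrict (Ioo (-T) T))) :=
    integral_mono_measure hle (Filter.Eventually.of_forall fun q => sq_nonneg _) ID
  have hpmu : ∀ᵐ q ∂(mu n T), q.1 ∈ Ω → |p q| ≤ m := by
    unfold mu
    rw [nu_eq, ae_restrict_iff' (MeasurableSet.univ.prod measurableSet_Ioo)]
    rw [ae_restrict_iff' (hΩm.prod measurableSet_Ioo)] at hpm
    filter_upwards [hpm] with q hq ht hx
    exact hq ⟨hx, by linarith [ht.2.1], ht.2.2⟩
  have hab := absorb Ω x₀ hβ hAa hsone hK hKΩ sZ xZ p hpmu IDmu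
  rw [← hw] at hab
  change _ ≤ 3 * (∫ q, D q ^ 2 ∂(mu n T)) + _ at hab
  -- the right-hand side
  have hRHS : ∫ t in Set.Ioo (-T) T, ∫ x in Ω, Real.exp (2 * s * phi x₀ β C₀ l x t) *
      (deriv (deriv (z x)) t - lap (fun y => z y t) x + p (x, t) * z x t) ^ 2 =
      ∫ q, D q ^ 2 ∂((volume : Measure (EuclideanSpace ℝ (Fin n))).prod
        (volume.restrict (Ioo (-T) T))) := by
    rw [integral_prod_symm _ ID]
    congr 1; ext t
    have e : ∀ x, Real.exp (2 * s * phi x₀ β C₀ l x t) *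
        (deriv (deriv (z x)) t - lap (fun y => z y t) x + p (x, t) * z x t) ^ 2 = D (x, t) ^ 2 := by
      intro x
      have h1 : deriv (deriv (z x)) t = DD et (DD et Z) (x, t) := by
        have : deriv (z x) = fun t => DD et Z (x, t) := deriv_slice sZ x
        rw [this, deriv_slice (sZ.DD et) x]
      have h2 : lap (fun y => z y t) x = ∑ i, DD (ex i) (DD (ex i) Z) (x, t) := lap_slice sZ x t
      rw [h1, h2, phi_eq, hexp]
      simp only [hD, box, hZ]
      ring
    simp_rw [e]
    exact setIntegral_eq_integral_of_forall_compl_eq_zero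
      (fun x hx => by rw [xD x (fun h => hx (hKΩ h)) t]; simp)
  -- the left-hand side
  have hLHS : ∫ x in Ω, Real.exp (2 * s * phi x₀ β C₀ l x 0) * (deriv (z x) 0) ^ 2 =
      ∫ x, DD et w (x, 0) ^ 2 := by
    have e : ∀ x, Real.exp (2 * s * phi x₀ β C₀ l x 0) * (deriv (z x) 0) ^ 2 =
        DD et w (x, 0) ^ 2 := by
      intro x
      have : deriv (z x) = fun t => DD et Z (x, t) := deriv_slice sZ x
      rw [this, phi_eq, hexp, hw, ww_t x₀ β C₀ l s sZ]
      simp [mul_pow]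
    simp_rw [e]
    exact setIntegral_eq_integral_of_forall_compl_eq_zero
      (fun x hx => by rw [xw.DD hKc et x (fun h => hx (hKΩ h)) 0]; simp)
  rw [hRHS, hLHS]
  set R := ∫ q, (P1 x₀ β C₀ l s w q + P2 x₀ β C₀ l s w q) ^ 2 ∂(mu n T) with hR
  set Iw := ∫ q, w q ^ 2 ∂(mu n T) with hIw
  have hR0 : 0 ≤ R := integral_nonneg (fun q => sq_nonneg _)
  have habs : 3 * (m ^ 2 + 4 * A ^ 2) * s ^ 2 * Iw ≤ R / 2 := by
    have hc : 0 ≤ 3 * (m ^ 2 + 4 * A ^ 2) := by positivity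
    have e1 := mul_le_mul_of_nonneg_left k2 hc
    have e2 : 6 * (m ^ 2 + 4 * A ^ 2) * M ≤ s := by linarith
    have e3 := mul_le_mul_of_nonneg_right e2 hR0
    have e4 : s * (3 * (m ^ 2 + 4 * A ^ 2) * s ^ 2 * Iw) ≤ s * (R / 2) := by
      calc s * (3 * (m ^ 2 + 4 * A ^ 2) * s ^ 2 * Iw)
          = 3 * (m ^ 2 + 4 * A ^ 2) * (s ^ 3 * Iw) := by ring
        _ ≤ 3 * (m ^ 2 + 4 * A ^ 2) * (M * R) := e1
        _ = (6 * (m ^ 2 + 4 * A ^ 2) * M * R) / 2 := by ring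
        _ ≤ (s * R) / 2 := by linarith
        _ = s * (R / 2) := by ring
    exact le_of_mul_le_mul_left e4 hs0
  have hfin : R ≤ 6 * ∫ q, D q ^ 2 ∂((volume : Measure (EuclideanSpace ℝ (Fin n))).prod
      (volume.restrict (Ioo (-T) T))) := by linarith
  calc √s * ∫ x, DD et w (x, 0) ^ 2 ≤ M * R := k1
    _ ≤ M * _ := mul_le_mul_of_nonneg_left hfin hM.le
    _ = _ := by ring
end

section
/- Let n ≥ 1 be an integer, Ω ⊂ ℝⁿ a bounded open set, T > 0, x₀ ∈ ℝⁿ \ cl(Ω), and β ∈ (0,1) with sup_{x∈Ω}|x−x₀| < βT. Let C₀ > 0 be such that ψ ≥ 1 on Ω × (−T,T), where ψ(x,t) = |x−x₀|² − βt² + C₀. Then there exists λ > 0, independent of m, such that for every m > 0 there exist s₀(m) > 0 and M(m) > 0 with the following property: with φ = e^{λψ}, for every measurable time-independent potential q : Ω → ℝ with |q| ≤ m almost everywhere, every s ≥ s₀(m), and every smooth function z : ℝⁿ × [0,T] → ℝ vanishing for x outside a compact subset of Ω and satisfying z(x,0) = 0 for all x ∈ Ω: s^{1/2} ∫_Ω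 e^{2sφ(x,0)} |∂ₜz(x,0)|² dx + s ∫_{0}^{T} ∫_Ω e^{2sφ} (|∂ₜz|² + |∇z|²) dx dt + s³ ∫_{0}^{T} ∫_Ω e^{2sφ} |z|² dx dt ≤ M ∫_{0}^{T} ∫_Ω e^{2sφ} |∂ₜ²z − Δz + qz|² dx dt. -/
open MeasureTheory Real Set
open scoped RealInnerProductSpace

namespace Carl

abbrev X (n : ℕ) := ℝ × EuclideanSpace ℝ (Fin n)

noncomputable def e {n : ℕ} : Option (Fin n) → X n
  | none => (1, 0)
  | some i => (0, EuclideanSpace.single i 1)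

def ep {n : ℕ} : Option (Fin n) → ℝ
  | none => 1
  | some _ => -1

noncomputable def D {n : ℕ} (a : Option (Fin n)) (f : X n → ℝ) : X n → ℝ :=
  fun p => fderiv ℝ f p (e a)

abbrev Sm {n : ℕ} (f : X n → ℝ) : Prop := ContDiff ℝ (⊤ : ℕ∞) f

lemma Sm.da {n : ℕ} {f : X n → ℝ} (h : Sm f) (p : X n) : DifferentiableAt ℝ f p :=
  (h.differentiable (by simp)) p

lemma Sm.D {n : ℕ} {f : X n → ℝ} (h : Sm f) (a : Option (Fin n)) : Sm (D a f) := by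
  unfold Carl.D
  exact (h.fderiv_right (m := (⊤ : ℕ∞)) (by simp)).clm_apply contDiff_const

lemma D_mul {n : ℕ} {f g : X n → ℝ} (hf : Sm f) (hg : Sm g) (a : Option (Fin n)) (p : X n) :
    D a (fun p => f p * g p) p = D a f p * g p + f p * D a g p := by
  unfold D
  rw [fderiv_fun_mul (hf.da p) (hg.da p)]
  simp; ring

lemma D_add {n : ℕ} {f g : X n → ℝ} (hf : Sm f) (hg : Sm g) (a : Option (Fin n)) (p : X n) :
    D a (fun p => f p + g p) p = D a f p + D a g p := by
  unfold D
  rw [fderiv_fun_add (hf.da p) (hg.da p)]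
  simp

lemma D_sub {n : ℕ} {f g : X n → ℝ} (hf : Sm f) (hg : Sm g) (a : Option (Fin n)) (p : X n) :
    D a (fun p => f p - g p) p = D a f p - D a g p := by
  unfold D
  rw [fderiv_fun_sub (hf.da p) (hg.da p)]
  simp

lemma D_cmul {n : ℕ} {f : X n → ℝ} (hf : Sm f) (c : ℝ) (a : Option (Fin n)) (p : X n) :
    D a (fun p => c * f p) p = c * D a f p := by
  unfold D
  rw [fderiv_const_mul (hf.da p)]
  simp

lemma D_sq {n : ℕ} {f : X n → ℝ} (hf : Sm f) (a : Option (Fin n)) (p : X n) :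
    D a (fun p => f p ^ 2) p = 2 * f p * D a f p := by
  have : (fun p => f p ^ 2) = (fun p => f p * f p) := by funext p; ring
  rw [this, D_mul hf hf]; ring

lemma D_sum {n : ℕ} {ι : Type} (u : Finset ι) {f : ι → X n → ℝ} (hf : ∀ i, Sm (f i))
    (a : Option (Fin n)) (p : X n) :
    D a (fun p => ∑ i ∈ u, f i p) p = ∑ i ∈ u, D a (f i) p := by
  unfold D
  rw [fderiv_fun_sum (fun i _ => (hf i).da p)]
  simp

lemma D_exp {n : ℕ} {f : X n → ℝ} (hf : Sm f) (a : Option (Fin n)) (p : X n) :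
    D a (fun p => Real.exp (f p)) p = Real.exp (f p) * D a f p := by
  unfold D
  rw [fderiv_exp (hf.da p)]
  simp

lemma D_comm {n : ℕ} {f : X n → ℝ} (hf : Sm f) (a b : Option (Fin n)) (p : X n) :
    D a (D b f) p = D b (D a f) p := by
  have hs : IsSymmSndFDerivAt ℝ f p :=
    ContDiffAt.isSymmSndFDerivAt (n := (⊤ : ℕ∞)) hf.contDiffAt (by simp; exact WithTop.coe_le_coe.2 (le_top : (2 : ℕ∞) ≤ ⊤))
  have key : ∀ a b : Option (Fin n), D a (D b f) p = fderiv ℝ (fderiv ℝ f) p (e a) (e b) := by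
    intro a b
    unfold D
    have hd : DifferentiableAt ℝ (fderiv ℝ f) p :=
      ((hf.fderiv_right (m := (⊤ : ℕ∞)) (by simp)).differentiable (by simp)) p
    rw [fderiv_clm_apply hd (differentiableAt_const _)]
    simp
  rw [key, key, hs.eq]

noncomputable def box {n : ℕ} (f : X n → ℝ) : X n → ℝ := fun p => ∑ a, ep a * D a (D a f) p
noncomputable def GG {n : ℕ} (f : X n → ℝ) : X n → ℝ := fun p => ∑ a, ep a * (D a f p) ^ 2
noncomputable def MM {n : ℕ} (V : Option (Fin n) → X n → ℝ) (f : X n → ℝ) : X n → ℝ :=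
  fun p => ∑ a, ep a * (V a p * D a f p)
noncomputable def dv {n : ℕ} (V : Option (Fin n) → X n → ℝ) : X n → ℝ :=
  fun p => ∑ a, ep a * D a (V a) p

lemma Sm.box {n : ℕ} {f : X n → ℝ} (h : Sm f) : Sm (box f) := by
  unfold Carl.box
  exact ContDiff.sum fun a _ => contDiff_const.mul ((h.D a).D a)

lemma Sm.GG {n : ℕ} {f : X n → ℝ} (h : Sm f) : Sm (GG f) := by
  unfold Carl.GG
  exact ContDiff.sum fun a _ => contDiff_const.mul ((h.D a).pow 2)

lemma Sm.MM {n : ℕ} {V : Option (Fin n) → X n → ℝ} (hV : ∀ a, Sm (V a)) {f : X n → ℝ}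
    (h : Sm f) : Sm (MM V f) := by
  unfold Carl.MM
  exact ContDiff.sum fun a _ => contDiff_const.mul ((hV a).mul (h.D a))

lemma D_GG {n : ℕ} {f : X n → ℝ} (h : Sm f) (a : Option (Fin n)) (p : X n) :
    D a (GG f) p = ∑ b, ep b * (2 * D b f p * D a (D b f) p) := by
  unfold GG
  rw [D_sum _ (fun b => contDiff_const.mul ((h.D b).pow 2))]
  refine Finset.sum_congr rfl fun b _ => ?_
  rw [D_cmul ((h.D b).pow 2), D_sq (h.D b)]

lemma D_MM {n : ℕ} {V : Option (Fin n) → X n → ℝ} (hV : ∀ a, Sm (V a)) {f : X n → ℝ}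
    (h : Sm f) (a : Option (Fin n)) (p : X n) :
    D a (MM V f) p = ∑ b, ep b * (D a (V b) p * D b f p + V b p * D a (D b f) p) := by
  unfold MM
  rw [D_sum _ (fun b => contDiff_const.mul ((hV b).mul (h.D b)))]
  refine Finset.sum_congr rfl fun b _ => ?_
  rw [D_cmul ((hV b).mul (h.D b)), D_mul (hV b) (h.D b)]

/-- first divergence identity -/
lemma idA {n : ℕ} {V : Option (Fin n) → X n → ℝ} (hV : ∀ a, Sm (V a)) {w : X n → ℝ}
    (h : Sm w) (p : X n) :
    ∑ a, D a (fun p => ep a * (D a w p * MM V w p - 1 / 2 * (V a p * GG w p))) p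
      = box w p * MM V w p + ∑ a, ∑ b, ep a * ep b * (D a (V b) p * D a w p * D b w p)
        - 1 / 2 * (dv V p * GG w p) := by
  have hM := Sm.MM hV h
  have hG := h.GG
  have h1 : ∀ a, D a (fun p => ep a * (D a w p * MM V w p - 1 / 2 * (V a p * GG w p))) p
      = ep a * D a (D a w) p * MM V w p - 1 / 2 * (ep a * D a (V a) p * GG w p)
        + ∑ b, ep a * ep b * (D a (V b) p * D a w p * D b w p)
        + ((∑ b, ep a * ep b * (D a w p * V b p * D a (D b w) p))
          - ∑ b, ep a * ep b * (V a p * D b w p * D a (D b w) p)) := by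
    intro a
    rw [D_cmul (((h.D a).mul hM).sub (contDiff_const.mul ((hV a).mul hG))),
      D_sub ((h.D a).mul hM) (contDiff_const.mul ((hV a).mul hG)),
      D_mul (h.D a) hM, D_cmul ((hV a).mul hG), D_mul (hV a) hG, D_MM hV h, D_GG h]
    have e1 : ∑ b, ep a * ep b * (D a (V b) p * D a w p * D b w p)
        + ((∑ b, ep a * ep b * (D a w p * V b p * D a (D b w) p))
          - ∑ b, ep a * ep b * (V a p * D b w p * D a (D b w) p))
        = ep a * D a w p * (∑ b, ep b * (D a (V b) p * D b w p + V b p * D a (D b w) p))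
          - 1 / 2 * ep a * V a p * (∑ b, ep b * (2 * D b w p * D a (D b w) p)) := by
      rw [Finset.mul_sum, Finset.mul_sum, ← Finset.sum_sub_distrib, ← Finset.sum_add_distrib,
        ← Finset.sum_sub_distrib]
      refine Finset.sum_congr rfl fun b _ => ?_
      ring
    linear_combination -e1
  have h2 : ∑ a, ∑ b, ep a * ep b * (D a w p * V b p * D a (D b w) p)
      = ∑ a, ∑ b, ep a * ep b * (V a p * D b w p * D a (D b w) p) := by
    rw [Finset.sum_comm]
    refine Finset.sum_congr rfl fun b _ => Finset.sum_congr rfl fun a _ => ?_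
    rw [D_comm h a b]; ring
  simp_rw [h1]
  rw [Finset.sum_add_distrib, Finset.sum_add_distrib, Finset.sum_sub_distrib,
    Finset.sum_sub_distrib, h2, ← Finset.sum_mul, ← Finset.mul_sum, ← Finset.sum_mul]
  unfold box dv
  ring

lemma idB {n : ℕ} {θ : X n → ℝ} (hθ : Sm θ) {w : X n → ℝ} (h : Sm w) (p : X n) :
    ∑ a, D a (fun p => ep a * (D a w p * (θ p * w p) - 1 / 2 * (D a θ p * w p ^ 2))) p
      = box w p * (θ p * w p) + θ p * GG w p - 1 / 2 * (box θ p * w p ^ 2) := by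
  unfold box GG
  rw [Finset.sum_mul, Finset.sum_mul, Finset.mul_sum, Finset.mul_sum, ← Finset.sum_add_distrib,
    ← Finset.sum_sub_distrib]
  refine Finset.sum_congr rfl fun a _ => ?_
  rw [D_cmul (((h.D a).mul (hθ.mul h)).sub (contDiff_const.mul ((hθ.D a).mul (h.pow 2)))),
      D_sub ((h.D a).mul (hθ.mul h)) (contDiff_const.mul ((hθ.D a).mul (h.pow 2))),
      D_mul (h.D a) (hθ.mul h), D_mul hθ h, D_cmul ((hθ.D a).mul (h.pow 2)),
      D_mul (hθ.D a) (h.pow 2), D_sq h]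
  ring

lemma idC {n : ℕ} {V : Option (Fin n) → X n → ℝ} (hV : ∀ a, Sm (V a)) {Q : X n → ℝ} (hQ : Sm Q)
    {w : X n → ℝ} (h : Sm w) (p : X n) :
    ∑ a, D a (fun p => ep a * (Q p * V a p * w p ^ 2)) p
      = (∑ a, ep a * (D a Q p * V a p)) * w p ^ 2 + Q p * dv V p * w p ^ 2
        + 2 * Q p * w p * MM V w p := by
  unfold dv MM
  rw [Finset.sum_mul, Finset.mul_sum, Finset.sum_mul, Finset.mul_sum, ← Finset.sum_add_distrib,
    ← Finset.sum_add_distrib]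
  refine Finset.sum_congr rfl fun a _ => ?_
  rw [D_cmul ((hQ.mul (hV a)).mul (h.pow 2)), D_mul (hQ.mul (hV a)) (h.pow 2), D_mul hQ (hV a),
    D_sq h]
  ring

/-- the shifted gradient field -/
noncomputable def VV {n : ℕ} (φ : X n → ℝ) (τ : ℝ) (a : Option (Fin n)) : X n → ℝ :=
  fun p => D a φ p + τ * (if a = none then 1 else 0)

lemma Sm.VV {n : ℕ} {φ : X n → ℝ} (h : Sm φ) (τ : ℝ) (a : Option (Fin n)) : Sm (VV φ τ a) := by
  unfold Carl.VV
  exact (h.D a).add contDiff_const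

lemma D_VV {n : ℕ} {φ : X n → ℝ} (h : Sm φ) (τ : ℝ) (a b : Option (Fin n)) (p : X n) :
    D a (VV φ τ b) p = D a (D b φ) p := by
  unfold VV
  rw [D_add (h.D b) contDiff_const]
  simp [D]

/-- the flux -/
noncomputable def JJ {n : ℕ} (s τ : ℝ) (φ θ w : X n → ℝ) (a : Option (Fin n)) : X n → ℝ :=
  fun p => -2 * s * (ep a * (D a w p * MM (VV φ τ) w p - 1 / 2 * (VV φ τ a p * GG w p)))
    - s * (ep a * (D a w p * (θ p * w p) - 1 / 2 * (D a θ p * w p ^ 2)))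
    - s ^ 3 * (ep a * (GG φ p * VV φ τ a p * w p ^ 2))

/-- the Hessian form with signature -/
noncomputable def HH {n : ℕ} (φ w : X n → ℝ) : X n → ℝ :=
  fun p => ∑ a, ∑ b, ep a * ep b * (D a (D b φ) p * D a w p * D b w p)

lemma Sm.JJ {n : ℕ} {φ θ w : X n → ℝ} (hφ : Sm φ) (hθ : Sm θ) (h : Sm w) (s τ : ℝ)
    (a : Option (Fin n)) : Sm (JJ s τ φ θ w a) := by
  have hV := fun a => hφ.VV τ a
  have hM := Sm.MM hV h
  have hG := h.GG
  have hQ := hφ.GG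
  unfold Carl.JJ
  exact ((contDiff_const.mul (contDiff_const.mul (((h.D a).mul hM).sub
    (contDiff_const.mul ((hV a).mul hG))))).sub (contDiff_const.mul (contDiff_const.mul
    (((h.D a).mul (hθ.mul h)).sub (contDiff_const.mul ((hθ.D a).mul (h.pow 2))))))).sub
    (contDiff_const.mul (contDiff_const.mul ((hQ.mul (hV a)).mul (h.pow 2))))

lemma main_id {n : ℕ} {φ θ w : X n → ℝ} (hφ : Sm φ) (hθ : Sm θ) (h : Sm w) (s τ : ℝ) (p : X n) :
    (box w p + s ^ 2 * GG φ p * w p) *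
      (-2 * s * MM (fun a => D a φ) w p - s * (θ p * w p) - 2 * s * τ * D none w p)
    = ∑ a, D a (JJ s τ φ θ w a) p + 2 * s * HH φ w p + s * (θ p - box φ p) * GG w p
      + s ^ 3 * (2 * HH φ φ p + τ * D none (GG φ) p - GG φ p * (θ p - box φ p)) * w p ^ 2
      - 1 / 2 * s * box θ p * w p ^ 2 := by
  have hV := fun a => hφ.VV τ a
  have hM := Sm.MM hV h
  have hG := h.GG
  have hQ := hφ.GG
  have hJ : ∑ a, D a (JJ s τ φ θ w a) p =
      -2 * s * ∑ a, D a (fun p => ep a * (D a w p * MM (VV φ τ) w p - 1 / 2 * (VV φ τ a p * GG w p))) p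
      - s * ∑ a, D a (fun p => ep a * (D a w p * (θ p * w p) - 1 / 2 * (D a θ p * w p ^ 2))) p
      - s ^ 3 * ∑ a, D a (fun p => ep a * (GG φ p * VV φ τ a p * w p ^ 2)) p := by
    rw [Finset.mul_sum, Finset.mul_sum, Finset.mul_sum, ← Finset.sum_sub_distrib,
      ← Finset.sum_sub_distrib]
    refine Finset.sum_congr rfl fun a _ => ?_
    have q1 : Sm (fun p => ep a * (D a w p * MM (VV φ τ) w p - 1 / 2 * (VV φ τ a p * GG w p))) :=
      contDiff_const.mul (((h.D a).mul hM).sub (contDiff_const.mul ((hV a).mul hG)))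
    have q2 : Sm (fun p => ep a * (D a w p * (θ p * w p) - 1 / 2 * (D a θ p * w p ^ 2))) :=
      contDiff_const.mul (((h.D a).mul (hθ.mul h)).sub (contDiff_const.mul ((hθ.D a).mul (h.pow 2))))
    have q3 : Sm (fun p => ep a * (GG φ p * VV φ τ a p * w p ^ 2)) :=
      contDiff_const.mul ((hQ.mul (hV a)).mul (h.pow 2))
    unfold JJ
    rw [D_sub ((contDiff_const.mul q1).sub (contDiff_const.mul q2)) (contDiff_const.mul q3),
      D_sub (contDiff_const.mul q1) (contDiff_const.mul q2), D_cmul q1, D_cmul q2, D_cmul q3]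
  have hMM : MM (VV φ τ) w p = MM (fun a => D a φ) w p + τ * D none w p := by
    unfold MM VV
    simp [ep, Fintype.sum_option]
    ring
  have hdv : dv (VV φ τ) p = box φ p := by
    unfold dv box
    simp_rw [D_VV hφ]
  have hQV : ∑ a, ep a * (D a (GG φ) p * VV φ τ a p) = 2 * HH φ φ p + τ * D none (GG φ) p := by
    have : ∑ a, ep a * (D a (GG φ) p * VV φ τ a p)
        = ∑ a, ep a * (D a (GG φ) p * D a φ p) + τ * D none (GG φ) p := by
      unfold VV
      simp [ep, Fintype.sum_option]
      ring
    rw [this]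
    congr 1
    unfold HH
    rw [Finset.mul_sum]
    refine Finset.sum_congr rfl fun a _ => ?_
    rw [D_GG hφ, Finset.sum_mul, Finset.mul_sum, Finset.mul_sum]
    refine Finset.sum_congr rfl fun b _ => ?_
    ring
  rw [hJ, idA hV h, idB hθ h, idC hV hQ h, hQV, hdv, hMM]
  simp_rw [D_VV hφ]
  unfold HH
  ring

lemma conj_id {n : ℕ} {φ z : X n → ℝ} (hφ : Sm φ) (h : Sm z) (s : ℝ) (w : X n → ℝ)
    (hw : w = fun p => Real.exp (s * φ p) * z p) (p : X n) :
    Real.exp (s * φ p) * box z p = box w p + s ^ 2 * GG φ p * w p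
      - 2 * s * MM (fun a => D a φ) w p - s * (box φ p * w p) := by
  have hE : Sm (fun p => Real.exp (s * φ p)) := (contDiff_const.mul hφ).exp
  have hDE : ∀ a p, D a (fun p => Real.exp (s * φ p)) p = Real.exp (s * φ p) * (s * D a φ p) := by
    intro a p
    rw [D_exp (contDiff_const.mul hφ), D_cmul hφ]
  have hDw : ∀ a, D a w = fun p => Real.exp (s * φ p) * (D a z p + s * (D a φ p * z p)) := by
    intro a
    funext p
    rw [hw, D_mul hE h, hDE]; ring
  unfold box GG MM
  rw [Finset.mul_sum, Finset.mul_sum, Finset.sum_mul, Finset.mul_sum, Finset.sum_mul,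
    Finset.mul_sum, ← Finset.sum_add_distrib, ← Finset.sum_sub_distrib, ← Finset.sum_sub_distrib]
  refine Finset.sum_congr rfl fun a _ => ?_
  have h2 : D a (D a w) p = Real.exp (s * φ p) * (D a (D a z) p + 2 * s * D a φ p * D a z p
      + s * D a (D a φ) p * z p + s ^ 2 * (D a φ p) ^ 2 * z p) := by
    rw [hDw, D_mul hE ((h.D a).add (contDiff_const.mul ((hφ.D a).mul h))),
      D_add (h.D a) (contDiff_const.mul ((hφ.D a).mul h)), D_cmul ((hφ.D a).mul h),
      D_mul (hφ.D a) h, hDE]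
    ring
  rw [h2, hDw, hw]
  ring

lemma pw_num (s τ c1 c2 B m qx W S γ w0 P1 P2 Y H G HF Q Qt bT u : ℝ) (hs : 0 < s) (hτ : 0 < τ)
    (hY : Y = P1 + P2 + (s * γ + qx) * u)
    (id1 : P1 * (P2 - 2 * s * τ * w0) = S + 2 * s * H + s * γ * G
      + s ^ 3 * (2 * HF + τ * Qt - Q * γ) * u ^ 2 - 1 / 2 * s * bT * u ^ 2)
    (hw0 : w0 ^ 2 ≤ W)
    (h1 : c1 * W ≤ 2 * H + γ * G)
    (h2 : c2 ≤ 2 * HF - Q * γ)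
    (hB1 : |Qt| ≤ B) (hB2 : |bT| ≤ B) (hB3 : |γ| ≤ B)
    (hq : |qx| ≤ m) (hsτ : 4 * s * τ ^ 2 ≤ c1)
    (hbig : 2 * s ^ 3 * τ * B + s * B + 4 * s ^ 2 * B ^ 2 + 4 * m ^ 2 ≤ s ^ 3 * c2) :
    2 * S + s * (c1 * W) + s ^ 3 * c2 * u ^ 2 ≤ 2 * Y ^ 2 := by
  have g2 : γ ^ 2 ≤ B ^ 2 := sq_le_sq' (by linarith [abs_le.1 hB3]) (abs_le.1 hB3).2
  have q2 : qx ^ 2 ≤ m ^ 2 := sq_le_sq' (by linarith [abs_le.1 hq]) (abs_le.1 hq).2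
  have k1 : (s * γ + qx) ^ 2 ≤ 2 * s ^ 2 * B ^ 2 + 2 * m ^ 2 := by
    have a1 := mul_le_mul_of_nonneg_left g2 (sq_nonneg s)
    linarith [sq_nonneg (s * γ - qx)]
  have k2 : (P1 + P2) ^ 2 ≤ 2 * Y ^ 2 + 2 * ((s * γ + qx) ^ 2 * u ^ 2) := by
    rw [hY]
    linarith [sq_nonneg (P1 + P2 + 2 * ((s * γ + qx) * u))]
  have k3 : 2 * (P1 * (P2 - 2 * s * τ * w0)) - 4 * s ^ 2 * τ ^ 2 * w0 ^ 2 ≤ (P1 + P2) ^ 2 := by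
    linarith [sq_nonneg (P1 + 2 * s * τ * w0), sq_nonneg P2]
  have k4 : 4 * s ^ 2 * τ ^ 2 * w0 ^ 2 ≤ s * (c1 * W) := by
    have a1 : 4 * s * τ ^ 2 * w0 ^ 2 ≤ c1 * W := by
      have : 0 ≤ 4 * s * τ ^ 2 := by positivity
      calc 4 * s * τ ^ 2 * w0 ^ 2 ≤ 4 * s * τ ^ 2 * W := mul_le_mul_of_nonneg_left hw0 this
        _ ≤ c1 * W := mul_le_mul_of_nonneg_right hsτ (le_trans (sq_nonneg _) hw0)
    calc 4 * s ^ 2 * τ ^ 2 * w0 ^ 2 = s * (4 * s * τ ^ 2 * w0 ^ 2) := by ring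
      _ ≤ _ := mul_le_mul_of_nonneg_left a1 hs.le
  have hw2 : 0 ≤ u ^ 2 := sq_nonneg _
  have k5 : (2 * s ^ 3 * c2 - 2 * s ^ 3 * τ * B) * u ^ 2 ≤
      2 * s ^ 3 * (2 * HF + τ * Qt - Q * γ) * u ^ 2 := by
    refine mul_le_mul_of_nonneg_right ?_ hw2
    have : -(τ * B) ≤ τ * Qt := by
      have := mul_le_mul_of_nonneg_left (abs_le.1 hB1).1 hτ.le
      linarith
    have h3 : 0 < 2 * s ^ 3 := by positivity
    have := mul_le_mul_of_nonneg_left (add_le_add h2 this) h3.le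
    linarith
  have k6 : s * bT * u ^ 2 ≤ s * B * u ^ 2 := by
    refine mul_le_mul_of_nonneg_right ?_ hw2
    exact mul_le_mul_of_nonneg_left (abs_le.1 hB2).2 hs.le
  have k7 : 2 * ((s * γ + qx) ^ 2 * u ^ 2) ≤ (4 * s ^ 2 * B ^ 2 + 4 * m ^ 2) * u ^ 2 := by
    linarith [mul_le_mul_of_nonneg_right k1 hw2]
  have k8 := mul_le_mul_of_nonneg_right hbig hw2
  have k9 := mul_le_mul_of_nonneg_left h1 hs.le
  rw [id1] at k3
  linarith

/-- pointwise Carleman inequality -/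
lemma pointwise {n : ℕ} {φ θ z : X n → ℝ} (hφ : Sm φ) (hθ : Sm θ) (h : Sm z) (s τ : ℝ)
    (w : X n → ℝ) (hw : w = fun p => Real.exp (s * φ p) * z p) (p : X n)
    (c1 c2 B m qx : ℝ) (hs : 0 < s) (hτ : 0 < τ)
    (h1 : c1 * ∑ a, (D a w p) ^ 2 ≤ 2 * HH φ w p + (θ p - box φ p) * GG w p)
    (h2 : c2 ≤ 2 * HH φ φ p - GG φ p * (θ p - box φ p))
    (hB1 : |D none (GG φ) p| ≤ B) (hB2 : |box θ p| ≤ B) (hB3 : |θ p - box φ p| ≤ B)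
    (hq : |qx| ≤ m) (hsτ : 4 * s * τ ^ 2 ≤ c1)
    (hbig : 2 * s ^ 3 * τ * B + s * B + 4 * s ^ 2 * B ^ 2 + 4 * m ^ 2 ≤ s ^ 3 * c2) :
    2 * ∑ a, D a (JJ s τ φ θ w a) p + s * (c1 * ∑ a, (D a w p) ^ 2) + s ^ 3 * c2 * w p ^ 2
      ≤ 2 * (Real.exp (s * φ p) ^ 2 * (box z p + qx * z p) ^ 2) := by
  have hE : Sm (fun p => Real.exp (s * φ p)) := (contDiff_const.mul hφ).exp
  have hws : Sm w := by rw [hw]; exact hE.mul h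
  have id1 := main_id hφ hθ hws s τ p
  have id2 := conj_id hφ h s w hw p
  have hwp : w p = Real.exp (s * φ p) * z p := by rw [hw]
  have hw0 : (D none w p) ^ 2 ≤ ∑ a, (D a w p) ^ 2 :=
    Finset.single_le_sum (f := fun a => (D a w p) ^ 2) (fun a _ => sq_nonneg _) (Finset.mem_univ _)
  have e2 : Real.exp (s * φ p) ^ 2 * (box z p + qx * z p) ^ 2
      = (Real.exp (s * φ p) * (box z p + qx * z p)) ^ 2 := by ring
  rw [e2]
  refine pw_num s τ c1 c2 B m qx _ _ (θ p - box φ p) _ (box w p + s ^ 2 * GG φ p * w p)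
    (-2 * s * MM (fun a => D a φ) w p - s * (θ p * w p)) _ _ _ _ _ _ _ _ hs hτ ?_ id1 hw0 h1 h2
    hB1 hB2 hB3 hq hsτ hbig
  rw [mul_add, id2, hwp]
  ring

lemma ft_num (s τ c3 B N g Φ n2 w0 ft u t t0 : ℝ) (hs : 0 < s) (hc3 : 0 < c3) (hτ : τ ≤ c3)
    (hN : 0 ≤ N) (hφN : n2 ≤ N ^ 2) (hφt : ft ≤ -(N + 2 * c3)) (hB1 : |t| ≤ B) (hB2 : |t0| ≤ B)
    (hbig : B ^ 2 / (4 * c3) + B / 2 ≤ s ^ 2 * (4 * c3 ^ 3)) (hg : 0 ≤ g) (hCS : Φ ^ 2 ≤ n2 * g) :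
    0 ≤ -2 * s * (1 * (w0 * ((ft + τ) * w0 - Φ) - 1 / 2 * ((ft + τ) * (w0 ^ 2 - g))))
      - s * (1 * (w0 * (t * u) - 1 / 2 * (t0 * u ^ 2)))
      - s ^ 3 * (1 * ((ft ^ 2 - n2) * (ft + τ) * u ^ 2)) := by
  have hΦ : Φ ^ 2 ≤ N ^ 2 * g := hCS.trans (mul_le_mul_of_nonneg_right hφN hg)
  have a1 : -(N * (w0 ^ 2 + g)) ≤ 2 * (w0 * Φ) := by
    have hsq : (2 * (w0 * Φ)) ^ 2 ≤ (N * (w0 ^ 2 + g)) ^ 2 := by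
      have := mul_le_mul_of_nonneg_left hΦ (sq_nonneg w0)
      nlinarith [mul_nonneg (sq_nonneg N) (sq_nonneg (w0 ^ 2 - g))]
    have := abs_le_of_sq_le_sq hsq (by positivity)
    exact (abs_le.1 this).1
  have a2 : (N + c3) * (w0 ^ 2 + g) ≤ -(ft + τ) * (w0 ^ 2 + g) :=
    mul_le_mul_of_nonneg_right (by linarith) (by positivity)
  have a3 : 4 * c3 ^ 2 ≤ ft ^ 2 - n2 := by nlinarith
  have a4 : 4 * c3 ^ 3 * u ^ 2 ≤ (ft ^ 2 - n2) * (-(ft + τ)) * u ^ 2 := by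
    refine mul_le_mul_of_nonneg_right ?_ (sq_nonneg _)
    have : c3 ≤ -(ft + τ) := by linarith
    calc 4 * c3 ^ 3 = 4 * c3 ^ 2 * c3 := by ring
      _ ≤ _ := mul_le_mul a3 this hc3.le (by nlinarith [sq_nonneg c3])
  have t2 : t ^ 2 ≤ B ^ 2 := sq_le_sq' (by linarith [abs_le.1 hB1]) (abs_le.1 hB1).2
  have a5 : w0 * (t * u) ≤ c3 * w0 ^ 2 + B ^ 2 / (4 * c3) * u ^ 2 := by
    have : B ^ 2 / (4 * c3) * u ^ 2 = (B ^ 2 * u ^ 2) / (4 * c3) := by ring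
    have h2 : w0 * (t * u) - c3 * w0 ^ 2 ≤ (B ^ 2 * u ^ 2) / (4 * c3) := by
      rw [le_div_iff₀ (by positivity)]
      nlinarith [sq_nonneg (2 * c3 * w0 - t * u), mul_le_mul_of_nonneg_right t2 (sq_nonneg u)]
    linarith
  have a6 : -(B / 2 * u ^ 2) ≤ 1 / 2 * (t0 * u ^ 2) := by
    nlinarith [mul_le_mul_of_nonneg_right (abs_le.1 hB2).1 (sq_nonneg u)]
  have a7 := mul_le_mul_of_nonneg_right hbig (sq_nonneg u)
  have a8 : s ^ 2 * (4 * c3 ^ 3 * u ^ 2) ≤ s ^ 2 * ((ft ^ 2 - n2) * (-(ft + τ)) * u ^ 2) :=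
    mul_le_mul_of_nonneg_left a4 (sq_nonneg s)
  have key : 0 ≤ -(ft + τ) * (w0 ^ 2 + g) + 2 * (w0 * Φ) - w0 * (t * u)
      + 1 / 2 * (t0 * u ^ 2) + s ^ 2 * ((ft ^ 2 - n2) * (-(ft + τ)) * u ^ 2) := by
    linarith [mul_nonneg hc3.le hg]
  have := mul_nonneg hs.le key
  linarith

lemma flux_T {n : ℕ} (φ θ w : X n → ℝ) (s τ : ℝ) (p : X n) (c3 B N : ℝ) (hs : 0 < s)
    (hc3 : 0 < c3) (hτ : τ ≤ c3) (hN : 0 ≤ N) (hφN : ∑ i : Fin n, (D (some i) φ p) ^ 2 ≤ N ^ 2)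
    (hφt : D none φ p ≤ -(N + 2 * c3)) (hB1 : |θ p| ≤ B) (hB2 : |D none θ p| ≤ B)
    (hbig : B ^ 2 / (4 * c3) + B / 2 ≤ s ^ 2 * (4 * c3 ^ 3)) :
    0 ≤ JJ s τ φ θ w none p := by
  have hCS := Finset.sum_mul_sq_le_sq_mul_sq Finset.univ (fun i : Fin n => D (some i) φ p)
    (fun i => D (some i) w p)
  have hg : 0 ≤ ∑ i : Fin n, (D (some i) w p) ^ 2 := Finset.sum_nonneg fun i _ => sq_nonneg _
  have eM : MM (VV φ τ) w p = (D none φ p + τ) * D none w p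
      - ∑ i : Fin n, D (some i) φ p * D (some i) w p := by
    unfold MM VV
    simp [ep, Fintype.sum_option]
    ring
  have eG : GG w p = (D none w p) ^ 2 - ∑ i : Fin n, (D (some i) w p) ^ 2 := by
    unfold GG
    simp [ep, Fintype.sum_option]
    ring
  have eQ : GG φ p = (D none φ p) ^ 2 - ∑ i : Fin n, (D (some i) φ p) ^ 2 := by
    unfold GG
    simp [ep, Fintype.sum_option]
    ring
  have eV : VV φ τ none p = D none φ p + τ := by unfold VV; simp
  unfold JJ
  rw [eM, eG, eQ, eV]
  simp only [ep]
  exact ft_num s τ c3 B N _ _ _ _ _ _ _ _ hs hc3 hτ hN hφN hφt hB1 hB2 hbig hg hCS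

lemma flux_0 {n : ℕ} (φ θ w : X n → ℝ) (s τ : ℝ) (p : X n) (hw : w p = 0)
    (hwi : ∀ i, D (some i) w p = 0) (hφ : D none φ p = 0) :
    JJ s τ φ θ w none p = -(s * τ * (D none w p) ^ 2) := by
  have eM : MM (VV φ τ) w p = τ * D none w p := by
    unfold MM VV
    simp [ep, Fintype.sum_option, hφ, hwi]
  have eG : GG w p = (D none w p) ^ 2 := by
    unfold GG
    simp [ep, Fintype.sum_option, hwi]
  have eV : VV φ τ none p = τ := by unfold VV; simp [hφ]
  unfold JJ
  rw [eM, eG, eV, hw]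
  simp only [ep]
  ring

noncomputable def mu {n : ℕ} (T : ℝ) (Ω : Set (EuclideanSpace ℝ (Fin n))) : Measure (X n) :=
  ((volume : Measure ℝ).restrict (Set.Ioo 0 T)).prod
    ((volume : Measure (EuclideanSpace ℝ (Fin n))).restrict Ω)

lemma mu_fin {n : ℕ} (T : ℝ) {Ω : Set (EuclideanSpace ℝ (Fin n))} (hΩb : Bornology.IsBounded Ω) :
    IsFiniteMeasure (mu T Ω) := by
  have : Fact ((volume : Measure (EuclideanSpace ℝ (Fin n))) Ω < ⊤) := ⟨hΩb.measure_lt_top⟩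
  unfold mu
  infer_instance

lemma mu_mem {n : ℕ} (T : ℝ) {Ω : Set (EuclideanSpace ℝ (Fin n))} (hΩo : IsOpen Ω) :
    ∀ᵐ p ∂(mu T Ω), p.1 ∈ Set.Ioo 0 T ∧ p.2 ∈ Ω := by
  unfold mu
  rw [Measure.prod_restrict]
  exact ae_restrict_mem (measurableSet_Ioo.prod hΩo.measurableSet)

lemma cpt {n : ℕ} (T : ℝ) {Ω : Set (EuclideanSpace ℝ (Fin n))} (hΩb : Bornology.IsBounded Ω) :
    IsCompact (Set.Icc 0 T ×ˢ closure Ω) :=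
  isCompact_Icc.prod hΩb.isCompact_closure

lemma cont_bdd {n : ℕ} (T : ℝ) {Ω : Set (EuclideanSpace ℝ (Fin n))} (hΩb : Bornology.IsBounded Ω)
    {f : X n → ℝ} (hf : Continuous f) :
    ∃ B > 0, ∀ p : X n, p.1 ∈ Set.Icc 0 T → p.2 ∈ closure Ω → |f p| ≤ B := by
  obtain ⟨C, hC⟩ := (cpt T hΩb).exists_bound_of_continuousOn hf.continuousOn
  refine ⟨max C 1, by positivity, fun p h1 h2 => ?_⟩
  have := hC p ⟨h1, h2⟩
  rw [Real.norm_eq_abs] at this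
  exact this.trans (le_max_left _ _)

lemma cont_int {n : ℕ} (T : ℝ) {Ω : Set (EuclideanSpace ℝ (Fin n))} (hΩo : IsOpen Ω)
    (hΩb : Bornology.IsBounded Ω)
    {f : X n → ℝ} (hf : Continuous f) : Integrable f (mu T Ω) := by
  have := mu_fin T hΩb
  obtain ⟨B, _, hB⟩ := cont_bdd T hΩb hf
  refine Integrable.of_bound hf.aestronglyMeasurable B ?_
  filter_upwards [mu_mem T hΩo] with p hp
  exact hB p (Set.Ioo_subset_Icc_self hp.1) (subset_closure hp.2)

lemma iter {n : ℕ} (T : ℝ) {Ω : Set (EuclideanSpace ℝ (Fin n))}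
    {f : X n → ℝ} (hf : Integrable f (mu T Ω)) :
    ∫ t in Set.Ioo (0:ℝ) T, ∫ x in Ω, f (t, x) = ∫ p, f p ∂(mu T Ω) := by
  unfold mu at *
  exact (integral_prod f hf).symm

/-- vanishing outside `K` in the space variable -/
def Van {n : ℕ} (K : Set (EuclideanSpace ℝ (Fin n))) (f : X n → ℝ) : Prop :=
  ∀ p : X n, p.2 ∉ K → f p = 0

lemma Van.D {n : ℕ} {K : Set (EuclideanSpace ℝ (Fin n))} (hK : IsClosed K) {f : X n → ℝ}
    (h : Van K f) (a : Option (Fin n)) : Van K (D a f) := by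
  intro p hp
  have : f =ᶠ[nhds p] fun _ => 0 := by
    have : {p : X n | p.2 ∉ K} ∈ nhds p :=
      (hK.isOpen_compl.preimage continuous_snd).mem_nhds hp
    filter_upwards [this] with q hq using h q hq
  unfold Carl.D
  rw [this.fderiv_eq]
  simp

lemma D_some {n : ℕ} {f : X n → ℝ} (hf : Sm f) (i : Fin n) (t : ℝ)
    (x : EuclideanSpace ℝ (Fin n)) :
    D (some i) f (t, x) = fderiv ℝ (fun y => f (t, y)) x (EuclideanSpace.single i 1) := by
  have h1 : HasFDerivAt (fun y : EuclideanSpace ℝ (Fin n) => ((t, y) : X n))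
      (ContinuousLinearMap.inr ℝ ℝ (EuclideanSpace ℝ (Fin n))) x := hasFDerivAt_prodMk_right t x
  have h2 := ((hf.da (t, x)).hasFDerivAt).comp x h1
  have h3 : fderiv ℝ (fun y => f (t, y)) x = _ := h2.fderiv
  rw [h3]
  simp [D, e]

lemma D_none {n : ℕ} {f : X n → ℝ} (hf : Sm f) (t : ℝ)
    (x : EuclideanSpace ℝ (Fin n)) :
    HasDerivAt (fun r => f (r, x)) (D none f (t, x)) t := by
  have h1 : HasFDerivAt (fun r : ℝ => ((r, x) : X n))
      (ContinuousLinearMap.inl ℝ ℝ (EuclideanSpace ℝ (Fin n))) t := hasFDerivAt_prodMk_left t x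
  have h2 := (((hf.da (t, x)).hasFDerivAt).comp t h1).hasDerivAt
  simpa [D, e, Function.comp_def] using h2

lemma div_x {n : ℕ} (T : ℝ) {Ω K : Set (EuclideanSpace ℝ (Fin n))} (hΩo : IsOpen Ω)
    (hΩb : Bornology.IsBounded Ω) (hK : IsCompact K) (hKΩ : K ⊆ Ω)
    {f : X n → ℝ} (hf : Sm f) (hv : Van K f) (i : Fin n) :
    ∫ p, D (some i) f p ∂(mu T Ω) = 0 := by
  rw [← iter T (cont_int T hΩo hΩb (hf.D _).continuous)]
  have : ∀ t : ℝ, ∫ x in Ω, D (some i) f (t, x) = 0 := by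
    intro t
    rw [setIntegral_eq_integral_of_forall_compl_eq_zero
      (fun x hx => hv.D hK.isClosed (some i) (t, x) (fun h => hx (hKΩ h)))]
    have hft : ContDiff ℝ (⊤ : ℕ∞) (fun y => f (t, y)) := hf.comp (contDiff_const.prodMk contDiff_id)
    have hcs : HasCompactSupport (fun y => f (t, y)) :=
      HasCompactSupport.intro hK (fun x hx => hv (t, x) hx)
    have hcd : HasCompactSupport (fun x => D (some i) f (t, x)) :=
      HasCompactSupport.intro hK (fun x hx => hv.D hK.isClosed (some i) (t, x) hx)
    have hi1 : Integrable (fun x => D (some i) f (t, x)) :=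
      Continuous.integrable_of_hasCompactSupport
        ((hf.D (some i)).continuous.comp (by fun_prop)) hcd
    have hi2 : Integrable (fun y => f (t, y)) :=
      Continuous.integrable_of_hasCompactSupport hft.continuous hcs
    have hde : (fun x => D (some i) f (t, x))
        = fun x => fderiv ℝ (fun y => f (t, y)) x (EuclideanSpace.single i 1) := by
      funext x; exact D_some hf i t x
    rw [hde] at hi1 ⊢
    have := integral_mul_fderiv_eq_neg_fderiv_mul_of_integrable
      (μ := (volume : Measure (EuclideanSpace ℝ (Fin n))))
      (f := fun _ : EuclideanSpace ℝ (Fin n) => (1 : ℝ)) (g := fun y => f (t, y))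
      (v := EuclideanSpace.single i 1) (by simp) (by simpa using hi1) (by simpa using hi2)
      (fun x _ => differentiableAt_const _) (fun x _ => hft.differentiable (by simp) x)
    simpa using this
  simp [this]

lemma div_t {n : ℕ} (T : ℝ) (hT : 0 < T) {Ω : Set (EuclideanSpace ℝ (Fin n))} (hΩo : IsOpen Ω)
    (hΩb : Bornology.IsBounded Ω) {f : X n → ℝ} (hf : Sm f) :
    ∫ p, D none f p ∂(mu T Ω) = ∫ x in Ω, (f (T, x) - f (0, x)) := by
  have hi := cont_int T hΩo hΩb (hf.D none).continuous
  unfold mu at *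
  rw [integral_prod_symm _ hi]
  refine integral_congr_ae (Filter.Eventually.of_forall fun x => ?_)
  show ∫ t in Set.Ioo (0:ℝ) T, D none f (t, x) = _
  rw [← integral_Ioc_eq_integral_Ioo, ← intervalIntegral.integral_of_le hT.le]
  rw [intervalIntegral.integral_eq_sub_of_hasDerivAt (f := fun r => f (r, x))
    (fun t _ => D_none hf t x)]
  exact ((hf.D none).continuous.comp (by fun_prop : Continuous fun t : ℝ => ((t, x) : X n))).intervalIntegrable _ _

lemma contx_int {n : ℕ} {Ω : Set (EuclideanSpace ℝ (Fin n))}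
    (hΩb : Bornology.IsBounded Ω) {f : EuclideanSpace ℝ (Fin n) → ℝ} (hf : Continuous f) :
    IntegrableOn f Ω :=
  (hf.continuousOn.integrableOn_compact hΩb.isCompact_closure).mono_set subset_closure

lemma JJ_van {n : ℕ} {K : Set (EuclideanSpace ℝ (Fin n))} (hK : IsClosed K) {φ θ w : X n → ℝ}
    (h : Van K w) (s τ : ℝ) (a : Option (Fin n)) : Van K (JJ s τ φ θ w a) := by
  intro p hp
  have h1 : ∀ a, D a w p = 0 := fun a => h.D hK a p hp
  have h0 : w p = 0 := h p hp
  unfold JJ GG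
  simp [h1, h0]

lemma choose_s (c1 c2 c3 B m : ℝ) (h1 : 0 < c1) (h2 : 0 < c2) (h3 : 0 < c3) (hB : 0 < B) :
    ∃ s₀ > (0 : ℝ), ∀ s ≥ s₀, ∀ τ, τ = Real.sqrt c1 / 2 / Real.sqrt s →
      0 < τ ∧ 4 * s * τ ^ 2 ≤ c1 ∧ τ ≤ c3 ∧
      B ^ 2 / (4 * c3) + B / 2 ≤ s ^ 2 * (4 * c3 ^ 3) ∧
      2 * s ^ 3 * τ * B + s * B + 4 * s ^ 2 * B ^ 2 + 4 * m ^ 2 ≤ s ^ 3 * c2 := by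
  set κ := Real.sqrt c1 / 2 with hκ
  have hκ0 : 0 < κ := by positivity
  set t0 := min c3 (c2 / (8 * B)) with ht0
  have ht00 : 0 < t0 := lt_min h3 (by positivity)
  set A1 := (B ^ 2 / (4 * c3) + B / 2) / (4 * c3 ^ 3) with hA1
  set A2 := (2 * (B + 4 * B ^ 2 + 4 * m ^ 2)) / c2 with hA2
  have hA10 : 0 ≤ A1 := by positivity
  have hA20 : 0 ≤ A2 := by positivity
  refine ⟨1 + (κ / t0) ^ 2 + A1 + A2, by positivity, fun s hs τ hτ => ?_⟩
  have q0 : 0 ≤ (κ / t0) ^ 2 := sq_nonneg _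
  have hs1 : 1 ≤ s := by linarith
  have hs0 : 0 < s := by linarith
  have hsq : 0 < Real.sqrt s := Real.sqrt_pos.2 hs0
  have hτ0 : 0 < τ := by rw [hτ]; positivity
  have hτt : τ ≤ t0 := by
    rw [hτ, div_le_iff₀ hsq]
    have : κ / t0 ≤ Real.sqrt s := Real.le_sqrt_of_sq_le (by linarith)
    rw [div_le_iff₀ ht00] at this
    linarith
  have hτB : 8 * B * τ ≤ c2 := by
    have := hτt.trans (min_le_right _ _)
    rw [le_div_iff₀ (by positivity)] at this
    linarith
  refine ⟨hτ0, ?_, hτt.trans (min_le_left _ _), ?_, ?_⟩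
  · rw [hτ, hκ, div_pow, div_pow, Real.sq_sqrt hs0.le, Real.sq_sqrt h1.le]
    apply le_of_eq
    field_simp
    ring
  · have : A1 ≤ s ^ 2 := by nlinarith
    rw [hA1, div_le_iff₀ (by positivity)] at this
    exact this
  · have : A2 ≤ s := by linarith
    rw [hA2, div_le_iff₀ h2] at this
    have b1 : 2 * s ^ 3 * τ * B ≤ s ^ 3 * c2 / 4 := by
      have := mul_le_mul_of_nonneg_left hτB (by positivity : 0 ≤ s ^ 3)
      linarith
    have b2 : s * B ≤ s ^ 2 * B := mul_le_mul_of_nonneg_right (by nlinarith) hB.le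
    have b3 : 4 * m ^ 2 ≤ s ^ 2 * (4 * m ^ 2) := by
      have : 1 ≤ s ^ 2 := by nlinarith
      nlinarith [sq_nonneg m]
    have b4 := mul_le_mul_of_nonneg_left this (by positivity : 0 ≤ s ^ 2)
    have b5 : 0 < s ^ 3 * c2 := by positivity
    nlinarith

lemma final_num (s κ c1 c2 N A Wi C Bz F : ℝ) (hs : 0 < s) (hκ : 0 < κ) (h1 : 0 < c1) (h2 : 0 < c2)
    (hN : 0 ≤ N) (hA : 0 ≤ A) (hW : 0 ≤ Wi) (hC : 0 ≤ C)
    (hBz : Bz ≤ 2 * Wi + 2 * s ^ 2 * N * C)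
    (hF : 2 * (κ * Real.sqrt s * A) + s * (c1 * Wi) + s ^ 3 * c2 * C ≤ 2 * F) :
    Real.sqrt s * A + s * Bz + s ^ 3 * C ≤ (2 * (1 / (2 * κ) + 2 / c1 + (2 * N + 1) / c2)) * F := by
  have a1 : 0 ≤ 2 * (κ * Real.sqrt s * A) := by positivity
  have a2 : 0 ≤ s * (c1 * Wi) := by positivity
  have a3 : 0 ≤ s ^ 3 * c2 * C := by positivity
  have e1 : Real.sqrt s * A = 1 / (2 * κ) * (2 * (κ * Real.sqrt s * A)) := by field_simp
  have e2 : 2 * (s * Wi) = 2 / c1 * (s * (c1 * Wi)) := by field_simp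
  have e3 : (2 * N + 1) * (s ^ 3 * C) = (2 * N + 1) / c2 * (s ^ 3 * c2 * C) := by field_simp
  have f1 : Real.sqrt s * A ≤ 1 / (2 * κ) * (2 * F) := by
    rw [e1]; exact mul_le_mul_of_nonneg_left (by linarith) (by positivity)
  have f2 : 2 * (s * Wi) ≤ 2 / c1 * (2 * F) := by
    rw [e2]; exact mul_le_mul_of_nonneg_left (by linarith) (by positivity)
  have f3 : (2 * N + 1) * (s ^ 3 * C) ≤ (2 * N + 1) / c2 * (2 * F) := by
    rw [e3]; exact mul_le_mul_of_nonneg_left (by linarith) (by positivity)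
  have f4 := mul_le_mul_of_nonneg_left hBz hs.le
  linarith

lemma sub_sq_num (a s b u : ℝ) :
    (a - s * (b * u)) ^ 2 ≤ 2 * a ^ 2 + 2 * s ^ 2 * u ^ 2 * b ^ 2 := by
  linarith [sq_nonneg (a + s * (b * u))]

set_option maxHeartbeats 1000000 in
lemma core {n : ℕ} (T : ℝ) (hT : 0 < T) {Ω : Set (EuclideanSpace ℝ (Fin n))} (hΩo : IsOpen Ω)
    (hΩb : Bornology.IsBounded Ω) {φ θ : X n → ℝ} (hφ : Sm φ) (hθ : Sm θ) (c1 c2 c3 : ℝ)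
    (hc1 : 0 < c1) (hc2 : 0 < c2) (hc3 : 0 < c3)
    (H1 : ∀ p : X n, p.1 ∈ Set.Icc 0 T → p.2 ∈ closure Ω → ∀ ξ : Option (Fin n) → ℝ,
      c1 * ∑ a, ξ a ^ 2 ≤ 2 * ∑ a, ∑ b, ep a * ep b * (D a (D b φ) p * ξ a * ξ b)
        + (θ p - box φ p) * ∑ a, ep a * ξ a ^ 2)
    (H2 : ∀ p : X n, p.1 ∈ Set.Icc 0 T → p.2 ∈ closure Ω →
      c2 ≤ 2 * HH φ φ p - GG φ p * (θ p - box φ p))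
    (H3 : ∀ x ∈ Ω, ∃ N, 0 ≤ N ∧ ∑ i : Fin n, (D (some i) φ (T, x)) ^ 2 ≤ N ^ 2 ∧
      D none φ (T, x) ≤ -(N + 2 * c3))
    (H4 : ∀ x, D none φ (0, x) = 0) (m : ℝ) :
    ∃ s₀ > (0:ℝ), ∃ M > (0:ℝ), ∀ q : EuclideanSpace ℝ (Fin n) → ℝ, Measurable q →
      (∀ᵐ x ∂((volume : Measure (EuclideanSpace ℝ (Fin n))).restrict Ω), |q x| ≤ m) →
      ∀ s ≥ s₀, ∀ z : X n → ℝ, Sm z → ∀ K : Set (EuclideanSpace ℝ (Fin n)), IsCompact K → K ⊆ Ω →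
      Van K z → (∀ x, z (0, x) = 0) →
      Integrable (fun p => Real.exp (s * φ p) ^ 2 * (box z p + q p.2 * z p) ^ 2) (mu T Ω) ∧
      Real.sqrt s * (∫ x in Ω, Real.exp (s * φ (0, x)) ^ 2 * (D none z (0, x)) ^ 2)
        + s * (∫ p, Real.exp (s * φ p) ^ 2 * ∑ a, (D a z p) ^ 2 ∂(mu T Ω))
        + s ^ 3 * (∫ p, Real.exp (s * φ p) ^ 2 * (z p) ^ 2 ∂(mu T Ω))
      ≤ M * ∫ p, Real.exp (s * φ p) ^ 2 * (box z p + q p.2 * z p) ^ 2 ∂(mu T Ω) := by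
  have hfin := mu_fin T hΩb
  obtain ⟨B1, hB10, hB1⟩ := cont_bdd T hΩb (hφ.GG.D none).continuous
  obtain ⟨B2, hB20, hB2⟩ := cont_bdd T hΩb hθ.box.continuous
  obtain ⟨B3, hB30, hB3⟩ := cont_bdd T hΩb (hθ.sub hφ.box).continuous
  obtain ⟨B4, hB40, hB4⟩ := cont_bdd T hΩb hθ.continuous
  obtain ⟨B5, hB50, hB5⟩ := cont_bdd T hΩb (hθ.D none).continuous
  have hgc : Sm (fun p => ∑ a, (D a φ p) ^ 2) := ContDiff.sum fun a _ => (hφ.D a).pow 2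
  obtain ⟨N, hN0, hN⟩ := cont_bdd T hΩb hgc.continuous
  set B := B1 + B2 + B3 + B4 + B5 with hB
  have hB0 : 0 < B := by positivity
  obtain ⟨s₀, hs₀, hsc⟩ := choose_s c1 c2 c3 B m hc1 hc2 hc3 hB0
  set κ := Real.sqrt c1 / 2 with hκ
  have hκ0 : 0 < κ := by positivity
  refine ⟨s₀, hs₀, 2 * (1 / (2 * κ) + 2 / c1 + (2 * N + 1) / c2), by positivity, ?_⟩
  intro q hqm hq s hs z hz K hK hKΩ hv hz0
  have hspos : 0 < s := lt_of_lt_of_le hs₀ hs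
  obtain ⟨hτ0, hsτ, hτc3, hbig1, hbig2⟩ := hsc s hs _ rfl
  set τ := κ / Real.sqrt s with hτ
  have hsτe : s * τ = κ * Real.sqrt s := by
    rw [hτ]
    have h1 : Real.sqrt s * Real.sqrt s = s := Real.mul_self_sqrt hspos.le
    have h2 : 0 < Real.sqrt s := Real.sqrt_pos.2 hspos
    field_simp
    nlinarith
  have hE : Sm (fun p => Real.exp (s * φ p)) := (contDiff_const.mul hφ).exp
  set w : X n → ℝ := fun p => Real.exp (s * φ p) * z p with hw
  have hws : Sm w := hE.mul hz
  have hwv : Van K w := fun p hp => by simp [hw, hv p hp]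
  have hDw : ∀ a p, D a w p = Real.exp (s * φ p) * (D a z p + s * (D a φ p * z p)) := by
    intro a p
    rw [hw, D_mul hE hz, D_exp (contDiff_const.mul hφ), D_cmul hφ]; ring
  have hqp : ∀ᵐ p ∂(mu T Ω), |q p.2| ≤ m := by
    unfold mu
    exact Measure.quasiMeasurePreserving_snd.ae hq
  -- integrability of the right-hand side
  have hFi : Integrable (fun p => Real.exp (s * φ p) ^ 2 * (box z p + q p.2 * z p) ^ 2) (mu T Ω) := by
    obtain ⟨b1, hb10, hb1⟩ := cont_bdd T hΩb hE.continuous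
    obtain ⟨b2, hb20, hb2⟩ := cont_bdd T hΩb hz.box.continuous
    obtain ⟨b3, hb30, hb3⟩ := cont_bdd T hΩb hz.continuous
    refine Integrable.of_bound ?_ (b1 ^ 2 * (b2 + |m| * b3) ^ 2) ?_
    · have m1 : Measurable (fun p => Real.exp (s * φ p)) := hE.continuous.measurable
      have m2 : Measurable (box z) := hz.box.continuous.measurable
      have m3 : Measurable z := hz.continuous.measurable
      have m4 : Measurable (fun p : X n => q p.2) := hqm.comp measurable_snd
      exact ((m1.pow_const 2).mul ((m2.add (m4.mul m3)).pow_const 2)).aestronglyMeasurable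
    · filter_upwards [mu_mem T hΩo, hqp] with p hp hpq
      have g1 := hb1 p (Set.Ioo_subset_Icc_self hp.1) (subset_closure hp.2)
      have g2 := hb2 p (Set.Ioo_subset_Icc_self hp.1) (subset_closure hp.2)
      have g3 := hb3 p (Set.Ioo_subset_Icc_self hp.1) (subset_closure hp.2)
      rw [norm_mul, norm_pow, norm_pow, Real.norm_eq_abs, Real.norm_eq_abs]
      have g4 : |box z p + q p.2 * z p| ≤ b2 + |m| * b3 := by
        refine (abs_add_le _ _).trans (add_le_add g2 ?_)
        rw [abs_mul]
        exact mul_le_mul (hpq.trans (le_abs_self m)) g3 (abs_nonneg _) (abs_nonneg _)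
      gcongr
  refine ⟨hFi, ?_⟩
  have hWs : Sm (fun p => ∑ a, (D a w p) ^ 2) := ContDiff.sum fun a _ => (hws.D a).pow 2
  have hWi := cont_int T hΩo hΩb hWs.continuous
  have hCi := cont_int T hΩo hΩb (hws.pow 2).continuous
  have hJs := fun a => Sm.JJ hφ hθ hws s τ a
  have hJi := fun a => cont_int T hΩo hΩb ((hJs a).D a).continuous
  have hSi : Integrable (fun p => ∑ a, D a (JJ s τ φ θ w a) p) (mu T Ω) :=
    integrable_finsetSum _ fun a _ => hJi a
  -- boundary terms
  have hS : s * τ * (∫ x in Ω, (D none w (0, x)) ^ 2)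
      ≤ ∫ p, ∑ a, D a (JJ s τ φ θ w a) p ∂(mu T Ω) := by
    rw [integral_finsetSum _ fun a _ => hJi a, Fintype.sum_option]
    have hz' : ∀ i : Fin n, ∫ p, D (some i) (JJ s τ φ θ w (some i)) p ∂(mu T Ω) = 0 := fun i =>
      div_x T hΩo hΩb hK hKΩ (hJs (some i)) (JJ_van hK.isClosed hwv s τ (some i)) i
    rw [Finset.sum_congr rfl fun i _ => hz' i, Finset.sum_const_zero, add_zero,
      div_t T hT hΩo hΩb (hJs none), ← integral_const_mul]
    have hc0 : Continuous fun x : EuclideanSpace ℝ (Fin n) => ((0, x) : X n) := by fun_prop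
    have hcT : Continuous fun x : EuclideanSpace ℝ (Fin n) => ((T, x) : X n) := by fun_prop
    refine setIntegral_mono_on ?_ ?_ hΩo.measurableSet ?_
    · exact contx_int hΩb
        (continuous_const.mul (((hws.D none).continuous.comp hc0).pow 2))
    · exact contx_int hΩb (((hJs none).continuous.comp hcT).sub ((hJs none).continuous.comp hc0))
    · intro x hx
      have hx' : x ∈ closure Ω := subset_closure hx
      have hw0 : w (0, x) = 0 := by simp [hw, hz0]
      have hwi : ∀ i, D (some i) w (0, x) = 0 := by
        intro i
        rw [D_some hws]
        have : (fun y => w (0, y)) = fun _ => 0 := by funext y; simp [hw, hz0]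
        rw [this]; simp
      rw [flux_0 φ θ w s τ (0, x) hw0 hwi (H4 x)]
      obtain ⟨N', hN', hN2, hN3⟩ := H3 x hx
      have hTm : ((T, x) : X n).1 ∈ Set.Icc 0 T := ⟨hT.le, le_rfl⟩
      have := flux_T φ θ w s τ (T, x) c3 B N' hspos hc3 hτc3 hN' hN2 hN3
        ((hB4 (T, x) hTm hx').trans (by rw [hB]; linarith))
        ((hB5 (T, x) hTm hx').trans (by rw [hB]; linarith)) hbig1
      linarith
  -- the integrated pointwise inequality
  have hmain : 2 * (∫ p, ∑ a, D a (JJ s τ φ θ w a) p ∂(mu T Ω))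
      + s * (c1 * ∫ p, ∑ a, (D a w p) ^ 2 ∂(mu T Ω)) + s ^ 3 * c2 * ∫ p, w p ^ 2 ∂(mu T Ω)
      ≤ 2 * ∫ p, Real.exp (s * φ p) ^ 2 * (box z p + q p.2 * z p) ^ 2 ∂(mu T Ω) := by
    have i1 := hSi.const_mul 2
    have i2 := (hWi.const_mul c1).const_mul s
    have i3 := hCi.const_mul (s ^ 3 * c2)
    have i12 : Integrable (fun p => 2 * ∑ a, D a (JJ s τ φ θ w a) p
      + s * (c1 * ∑ a, (D a w p) ^ 2)) (mu T Ω) := i1.add i2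
    rw [← integral_const_mul, ← integral_const_mul, ← integral_const_mul, ← integral_const_mul,
      ← integral_const_mul, ← integral_add i1 i2, ← integral_add i12 i3]
    refine integral_mono_ae (i12.add i3) (hFi.const_mul 2) ?_
    filter_upwards [mu_mem T hΩo, hqp] with p hp hpq
    have p1 := Set.Ioo_subset_Icc_self hp.1
    have p2 := subset_closure hp.2
    exact pointwise hφ hθ hz s τ w hw p c1 c2 B m (q p.2) hspos hτ0
      (H1 p p1 p2 (fun a => D a w p)) (H2 p p1 p2)
      ((hB1 p p1 p2).trans (by rw [hB]; linarith)) ((hB2 p p1 p2).trans (by rw [hB]; linarith))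
      ((hB3 p p1 p2).trans (by rw [hB]; linarith)) hpq hsτ hbig2
  have hA : ∀ x, Real.exp (s * φ (0, x)) ^ 2 * (D none z (0, x)) ^ 2 = (D none w (0, x)) ^ 2 := by
    intro x; rw [hDw, hz0]; ring
  have hC : ∀ p, Real.exp (s * φ p) ^ 2 * (z p) ^ 2 = w p ^ 2 := by
    intro p; rw [hw]; ring
  simp_rw [hA, hC]
  have hzs : Sm (fun p => Real.exp (s * φ p) ^ 2 * ∑ a, (D a z p) ^ 2) :=
    (hE.pow 2).mul (ContDiff.sum fun a _ => (hz.D a).pow 2)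
  have hBz : ∫ p, Real.exp (s * φ p) ^ 2 * ∑ a, (D a z p) ^ 2 ∂(mu T Ω)
      ≤ 2 * (∫ p, ∑ a, (D a w p) ^ 2 ∂(mu T Ω)) + 2 * s ^ 2 * N * ∫ p, w p ^ 2 ∂(mu T Ω) := by
    have i2 := hWi.const_mul 2
    have i3 := hCi.const_mul (2 * s ^ 2 * N)
    rw [← integral_const_mul, ← integral_const_mul, ← integral_add i2 i3]
    refine integral_mono_ae (cont_int T hΩo hΩb hzs.continuous) (i2.add i3) ?_
    filter_upwards [mu_mem T hΩo] with p hp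
    have p1 := Set.Ioo_subset_Icc_self hp.1
    have p2 := subset_closure hp.2
    have hNp := (le_abs_self _).trans (hN p p1 p2)
    have k1 : Real.exp (s * φ p) ^ 2 * ∑ a, (D a z p) ^ 2
        ≤ 2 * ∑ a, (D a w p) ^ 2 + 2 * s ^ 2 * w p ^ 2 * ∑ a, (D a φ p) ^ 2 := by
      rw [Finset.mul_sum, Finset.mul_sum, Finset.mul_sum, ← Finset.sum_add_distrib]
      refine Finset.sum_le_sum fun a _ => ?_
      have : Real.exp (s * φ p) ^ 2 * (D a z p) ^ 2 = (D a w p - s * (D a φ p * w p)) ^ 2 := by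
        rw [hDw, hw]; ring
      rw [this]
      exact sub_sq_num _ _ _ _
    have k2 := mul_le_mul_of_nonneg_left hNp (by positivity : 0 ≤ 2 * s ^ 2 * w p ^ 2)
    refine k1.trans ?_
    linarith
  refine final_num s κ c1 c2 N _ _ _ _ _ hspos hκ0 hc1 hc2 hN0.le ?_ ?_ ?_ hBz ?_
  · exact integral_nonneg fun x => sq_nonneg _
  · exact integral_nonneg fun x => Finset.sum_nonneg fun a _ => sq_nonneg _
  · exact integral_nonneg fun x => sq_nonneg _
  · rw [← hsτe]
    linarith

noncomputable def yy {n : ℕ} (x₀ : EuclideanSpace ℝ (Fin n)) : Option (Fin n) → X n → ℝ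
  | none => fun p => p.1
  | some i => fun p => p.2 i - x₀ i

def et {n : ℕ} (β : ℝ) : Option (Fin n) → ℝ
  | none => -β
  | some _ => 1

lemma yy_sm {n : ℕ} (x₀ : EuclideanSpace ℝ (Fin n)) (a : Option (Fin n)) : Sm (yy x₀ a) := by
  cases a with
  | none => exact contDiff_fst
  | some i =>
    have : Sm (fun p : X n => (EuclideanSpace.proj i : EuclideanSpace ℝ (Fin n) →L[ℝ] ℝ) p.2) :=
      (EuclideanSpace.proj i : EuclideanSpace ℝ (Fin n) →L[ℝ] ℝ).contDiff.comp contDiff_snd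
    exact this.sub contDiff_const

lemma D_yy {n : ℕ} (x₀ : EuclideanSpace ℝ (Fin n)) (a b : Option (Fin n)) (p : X n) :
    D a (yy x₀ b) p = if a = b then 1 else 0 := by
  cases b with
  | none =>
    have : HasFDerivAt (yy x₀ none) (ContinuousLinearMap.fst ℝ ℝ (EuclideanSpace ℝ (Fin n))) p :=
      hasFDerivAt_fst
    unfold D
    rw [this.fderiv]
    cases a <;> simp [e]
  | some j =>
    have : HasFDerivAt (yy x₀ (some j))
        ((EuclideanSpace.proj j : EuclideanSpace ℝ (Fin n) →L[ℝ] ℝ).comp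
          (ContinuousLinearMap.snd ℝ ℝ (EuclideanSpace ℝ (Fin n)))) p :=
      ((EuclideanSpace.proj j : EuclideanSpace ℝ (Fin n) →L[ℝ] ℝ).comp
          (ContinuousLinearMap.snd ℝ ℝ (EuclideanSpace ℝ (Fin n)))).hasFDerivAt.sub_const _
    unfold D
    rw [this.fderiv]
    cases a with
    | none => simp [e]
    | some i => 
      simp [e, Pi.single_apply, eq_comm]

lemma psi_eq {n : ℕ} (x₀ : EuclideanSpace ℝ (Fin n)) (β C₀ : ℝ) (p : X n) :
    psi x₀ β C₀ p.2 p.1 = (∑ a, et β a * yy x₀ a p ^ 2) + C₀ := by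
  unfold psi
  rw [EuclideanSpace.real_norm_sq_eq, Fintype.sum_option]
  simp [et, yy]
  ring

noncomputable def ph {n : ℕ} (x₀ : EuclideanSpace ℝ (Fin n)) (β C₀ l : ℝ) : X n → ℝ :=
  fun p => phi x₀ β C₀ l p.2 p.1

lemma ph_eq {n : ℕ} (x₀ : EuclideanSpace ℝ (Fin n)) (β C₀ l : ℝ) :
    ph x₀ β C₀ l = fun p => Real.exp (l * ((∑ a, et β a * yy x₀ a p ^ 2) + C₀)) := by
  funext p
  unfold ph phi
  rw [psi_eq]

lemma psi_sm {n : ℕ} (x₀ : EuclideanSpace ℝ (Fin n)) (β C₀ : ℝ) :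
    Sm (fun p : X n => (∑ a, et β a * yy x₀ a p ^ 2) + C₀) :=
  (ContDiff.sum fun a _ => contDiff_const.mul ((yy_sm x₀ a).pow 2)).add contDiff_const

lemma ph_sm {n : ℕ} (x₀ : EuclideanSpace ℝ (Fin n)) (β C₀ l : ℝ) : Sm (ph x₀ β C₀ l) := by
  rw [ph_eq]
  exact (contDiff_const.mul (psi_sm x₀ β C₀)).exp

lemma D_ph {n : ℕ} (x₀ : EuclideanSpace ℝ (Fin n)) (β C₀ l : ℝ) (a : Option (Fin n)) :
    D a (ph x₀ β C₀ l) = fun p => (2 * l * et β a) * (ph x₀ β C₀ l p * yy x₀ a p) := by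
  funext p
  have h1 : Sm (fun p : X n => ∑ a, et β a * yy x₀ a p ^ 2) :=
    ContDiff.sum fun a _ => contDiff_const.mul ((yy_sm x₀ a).pow 2)
  rw [ph_eq, D_exp (contDiff_const.mul (psi_sm x₀ β C₀)), D_cmul (psi_sm x₀ β C₀),
    D_add h1 contDiff_const, D_sum _ (fun b => contDiff_const.mul ((yy_sm x₀ b).pow 2))]
  have h2 : ∀ b, D a (fun p => et β b * yy x₀ b p ^ 2) p
      = if a = b then et β a * (2 * yy x₀ a p) else 0 := by
    intro b
    rw [D_cmul ((yy_sm x₀ b).pow 2), D_sq (yy_sm x₀ b), D_yy]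
    split_ifs with h
    · subst h; ring
    · ring
  have h3 : D a (fun _ : X n => C₀) p = 0 := by simp [D]
  simp_rw [h2]
  rw [h3, Finset.sum_ite_eq, if_pos (Finset.mem_univ _)]
  ring

lemma DD_ph {n : ℕ} (x₀ : EuclideanSpace ℝ (Fin n)) (β C₀ l : ℝ) (a b : Option (Fin n)) (p : X n) :
    D a (D b (ph x₀ β C₀ l)) p = ph x₀ β C₀ l p * (4 * l ^ 2 * ((et β a * yy x₀ a p) *
      (et β b * yy x₀ b p)) + if a = b then 2 * l * et β a else 0) := by
  have hp := ph_sm x₀ β C₀ l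
  rw [D_ph, D_cmul (hp.mul (yy_sm x₀ b)), D_mul hp (yy_sm x₀ b), D_ph, D_yy]
  split_ifs with h
  · subst h; ring
  · ring

lemma Hform {n : ℕ} (x₀ : EuclideanSpace ℝ (Fin n)) (β C₀ l : ℝ) (p : X n)
    (ξ : Option (Fin n) → ℝ) :
    ∑ a, ∑ b, ep a * ep b * (D a (D b (ph x₀ β C₀ l)) p * ξ a * ξ b)
      = ph x₀ β C₀ l p * (4 * l ^ 2 * (∑ a, ep a * (et β a * yy x₀ a p) * ξ a) ^ 2
        + 2 * l * ∑ a, et β a * ξ a ^ 2) := by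
  have h1 : ∀ a, ∑ b, ep a * ep b * (D a (D b (ph x₀ β C₀ l)) p * ξ a * ξ b)
      = ph x₀ β C₀ l p * (4 * l ^ 2 * ((ep a * (et β a * yy x₀ a p) * ξ a) *
          ∑ b, ep b * (et β b * yy x₀ b p) * ξ b) + 2 * l * (et β a * ξ a ^ 2)) := by
    intro a
    have h2 : ∀ b, ep a * ep b * (D a (D b (ph x₀ β C₀ l)) p * ξ a * ξ b)
        = ph x₀ β C₀ l p * (4 * l ^ 2 * (ep a * (et β a * yy x₀ a p) * ξ a)) *
            (ep b * (et β b * yy x₀ b p) * ξ b)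
          + if a = b then ph x₀ β C₀ l p * (2 * l * (et β a * ξ a ^ 2)) else 0 := by
      intro b
      rw [DD_ph]
      split_ifs with h
      · subst h
        have : ep a * ep a = 1 := by cases a <;> simp [ep]
        linear_combination (ph x₀ β C₀ l p * (2 * l * et β a) * ξ a ^ 2) * this
      · ring
    simp_rw [h2]
    rw [Finset.sum_add_distrib, ← Finset.mul_sum, Finset.sum_ite_eq, if_pos (Finset.mem_univ _)]
    ring
  simp_rw [h1]
  rw [← Finset.mul_sum, Finset.sum_add_distrib, ← Finset.mul_sum, ← Finset.mul_sum,
    ← Finset.sum_mul]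
  ring

lemma ph_pos {n : ℕ} (x₀ : EuclideanSpace ℝ (Fin n)) (β C₀ l : ℝ) (p : X n) :
    0 < ph x₀ β C₀ l p := Real.exp_pos _

/-- convexity of the weight -/
lemma H1w {n : ℕ} (x₀ : EuclideanSpace ℝ (Fin n)) (β C₀ l : ℝ) (hl : 0 < l) (hβ : β < 1) (p : X n)
    (f0 : ℝ) (hf0 : f0 ≤ ph x₀ β C₀ l p)
    (ξ : Option (Fin n) → ℝ) :
    (2 * (1 - β) * l * f0) * ∑ a, ξ a ^ 2
      ≤ 2 * ∑ a, ∑ b, ep a * ep b * (D a (D b (ph x₀ β C₀ l)) p * ξ a * ξ b)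
        + (2 * (1 + β) * l * ph x₀ β C₀ l p) * ∑ a, ep a * ξ a ^ 2 := by
  rw [Hform]
  set f := ph x₀ β C₀ l p
  have hf : 0 < f := ph_pos x₀ β C₀ l p
  set S := ∑ a, ep a * (et β a * yy x₀ a p) * ξ a
  have h1 : 4 * ∑ a, et β a * ξ a ^ 2 + 2 * (1 + β) * ∑ a, ep a * ξ a ^ 2
      = 2 * (1 - β) * ∑ a, ξ a ^ 2 := by
    rw [Finset.mul_sum, Finset.mul_sum, Finset.mul_sum, ← Finset.sum_add_distrib]
    refine Finset.sum_congr rfl fun a _ => ?_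
    cases a <;> simp only [et, ep] <;> ring
  have h2 : 0 ≤ ∑ a, ξ a ^ 2 := Finset.sum_nonneg fun a _ => sq_nonneg _
  have h3 : 2 * (f * (4 * l ^ 2 * S ^ 2 + 2 * l * ∑ a, et β a * ξ a ^ 2))
      + 2 * (1 + β) * l * f * ∑ a, ep a * ξ a ^ 2
      = 8 * f * l ^ 2 * S ^ 2 + (2 * (1 - β) * l * f) * ∑ a, ξ a ^ 2 := by
    linear_combination l * f * h1
  rw [h3]
  have h4 : (2 * (1 - β) * l * f0) * ∑ a, ξ a ^ 2 ≤ (2 * (1 - β) * l * f) * ∑ a, ξ a ^ 2 := by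
    refine mul_le_mul_of_nonneg_right ?_ h2
    have : 0 ≤ 2 * (1 - β) * l := mul_nonneg (by linarith) hl.le
    exact mul_le_mul_of_nonneg_left hf0 this
  have h5 : 0 ≤ 8 * f * l ^ 2 * S ^ 2 := by positivity
  linarith

lemma H2w {n : ℕ} (x₀ : EuclideanSpace ℝ (Fin n)) (β C₀ l δ : ℝ) (hβ0 : 0 < β) (hβ : β < 1)
    (hδ : 0 < δ) (hl : l = 1 / ((1 - β) * δ ^ 2)) (p : X n)
    (f0 : ℝ) (hf00 : 0 < f0) (hf0 : f0 ≤ ph x₀ β C₀ l p) (hp : δ ^ 2 ≤ ∑ i : Fin n, (p.2 i - x₀ i) ^ 2) :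
    8 * l ^ 3 * f0 ^ 3 * ((1 - β) * δ ^ 2) ≤ 2 * HH (ph x₀ β C₀ l) (ph x₀ β C₀ l) p
      - GG (ph x₀ β C₀ l) p * (2 * (1 + β) * l * ph x₀ β C₀ l p) := by
  have hb : 0 < 1 - β := by linarith
  have hl0 : 0 < l := by rw [hl]; positivity
  unfold HH GG
  rw [Hform]
  simp_rw [D_ph]
  simp only [Fintype.sum_option, ep, et, yy]
  set f := ph x₀ β C₀ l p
  have hf : 0 < f := ph_pos x₀ β C₀ l p
  set r := ∑ i : Fin n, (p.2 i - x₀ i) ^ 2 with hr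
  have e1 : ∑ i : Fin n, -1 * (1 * (p.2 i - x₀ i)) * (2 * l * 1 * (f * (p.2 i - x₀ i)))
      = -(2 * l * f * r) := by
    rw [hr, Finset.mul_sum, ← Finset.sum_neg_distrib]
    exact Finset.sum_congr rfl fun i _ => by ring
  have e2 : ∑ i : Fin n, 1 * (2 * l * 1 * (f * (p.2 i - x₀ i))) ^ 2 = 4 * l ^ 2 * f ^ 2 * r := by
    rw [hr, Finset.mul_sum]
    exact Finset.sum_congr rfl fun i _ => by ring
  have e3 : ∑ i : Fin n, -1 * (2 * l * 1 * (f * (p.2 i - x₀ i))) ^ 2 = -(4 * l ^ 2 * f ^ 2 * r) := by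
    rw [hr, Finset.mul_sum, ← Finset.sum_neg_distrib]
    exact Finset.sum_congr rfl fun i _ => by ring
  rw [e1, e2, e3]
  obtain ⟨k, hk⟩ : ∃ k, k = β ^ 2 * p.1 ^ 2 - r := ⟨_, rfl⟩
  have e4 : 2 * (f * (4 * l ^ 2 * (1 * (-β * p.1) * (2 * l * -β * (f * p.1)) + -(2 * l * f * r)) ^ 2 +
        2 * l * (-β * (2 * l * -β * (f * p.1)) ^ 2 + 4 * l ^ 2 * f ^ 2 * r))) -
      (1 * (2 * l * -β * (f * p.1)) ^ 2 + -(4 * l ^ 2 * f ^ 2 * r)) * (2 * (1 + β) * l * f)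
      = 8 * l ^ 3 * f ^ 3 * (4 * l * k ^ 2 - (1 + 3 * β) * k + 2 * (1 - β) * r) := by
    rw [hk]; ring
  rw [e4]
  have e5 : l * ((1 - β) * δ ^ 2) = 1 := by rw [hl]; field_simp
  have e6 : (1 - β) * δ ^ 2 ≤ 4 * l * k ^ 2 - (1 + 3 * β) * k + 2 * (1 - β) * r := by
    have h1 : -((1 - β) * δ ^ 2) ≤ 4 * l * k ^ 2 - (1 + 3 * β) * k := by
      obtain ⟨d, hd⟩ : ∃ d, d = (1 - β) * δ ^ 2 := ⟨_, rfl⟩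
      rw [← hd] at e5 ⊢
      have hd0 : 0 < d := by rw [hd]; positivity
      have h16 : (1 + 3 * β) ^ 2 ≤ 16 := by nlinarith
      have h2 : 0 ≤ l * (4 * l * k ^ 2 - (1 + 3 * β) * k + d) := by
        have : l * (4 * l * k ^ 2 - (1 + 3 * β) * k + d)
          = (2 * (l * k) - (1 + 3 * β) / 4) ^ 2 + (1 - (1 + 3 * β) ^ 2 / 16) := by
          linear_combination e5
        rw [this]
        have := sq_nonneg (2 * (l * k) - (1 + 3 * β) / 4)
        linarith
      have := nonneg_of_mul_nonneg_right h2 hl0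
      linarith
    have h2 := mul_le_mul_of_nonneg_left hp hb.le
    linarith
  have h0 : 0 < (1 - β) * δ ^ 2 := by positivity
  have h7 : 8 * l ^ 3 * f0 ^ 3 ≤ 8 * l ^ 3 * f ^ 3 := by gcongr
  exact mul_le_mul h7 e6 h0.le (by positivity)

lemma grad_sq {n : ℕ} (f : EuclideanSpace ℝ (Fin n) → ℝ) (x : EuclideanSpace ℝ (Fin n)) :
    ‖gradient f x‖ ^ 2 = ∑ i : Fin n, (fderiv ℝ f x (EuclideanSpace.single i 1)) ^ 2 := by
  rw [EuclideanSpace.real_norm_sq_eq]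
  refine Finset.sum_congr rfl fun i _ => ?_
  congr 1
  have : inner ℝ (gradient f x) (EuclideanSpace.single i (1:ℝ))
      = fderiv ℝ f x (EuclideanSpace.single i 1) := by
    unfold gradient
    rw [InnerProductSpace.toDual_symm_apply]
  rw [← this, EuclideanSpace.inner_single_right]
  simp

end Carl

/-- **One-sided-in-time Carleman estimate for a time-independent potential** (estimate (1.9) of
Theorem 1.2), specialized to functions supported, in the space variable, in a compact subset of
`Ω` and satisfying `z(·,0) = 0` on `Ω`:
`s^{1/2}∫_Ω e^{2sφ(0)}|∂ₜz(0)|² + s∫_0^T∫_Ω e^{2sφ}(|∂ₜz|² + |∇z|²) + s³∫_0^T∫_Ω e^{2sφ}z²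
  ≤ M∫_0^T∫_Ω e^{2sφ}|∂ₜ²z - Δz + qz|²`. -/
theorem carleman_one_sided_time_independent_potential
    (n : ℕ) (hn : 1 ≤ n)
    (Ω : Set (EuclideanSpace ℝ (Fin n))) (hΩo : IsOpen Ω) (hΩb : Bornology.IsBounded Ω)
    (T : ℝ) (hT : 0 < T)
    (x₀ : EuclideanSpace ℝ (Fin n)) (hx₀ : x₀ ∉ closure Ω)
    (β : ℝ) (hβ : β ∈ Set.Ioo (0:ℝ) 1)
    (htime : sSup ((fun x => ‖x - x₀‖) '' Ω) < β * T)
    (C₀ : ℝ) (hC₀ : 0 < C₀)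
    (hψ : ∀ x ∈ Ω, ∀ t ∈ Set.Ioo (-T) T, 1 ≤ psi x₀ β C₀ x t) :
    ∃ l > (0:ℝ), ∀ m > (0:ℝ), ∃ s₀ > (0:ℝ), ∃ M > (0:ℝ),
      ∀ q : EuclideanSpace ℝ (Fin n) → ℝ, Measurable q →
        (∀ᵐ x ∂((volume : Measure (EuclideanSpace ℝ (Fin n))).restrict Ω), |q x| ≤ m) →
      ∀ s ≥ s₀,
      ∀ z : EuclideanSpace ℝ (Fin n) → ℝ → ℝ,
        ContDiff ℝ (⊤ : ℕ∞) (fun p : EuclideanSpace ℝ (Fin n) × ℝ => z p.1 p.2) →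
        (∃ K : Set (EuclideanSpace ℝ (Fin n)), IsCompact K ∧ K ⊆ Ω ∧
          ∀ x ∉ K, ∀ t : ℝ, z x t = 0) →
        (∀ x ∈ Ω, z x 0 = 0) →
        Real.sqrt s * (∫ x in Ω,
              Real.exp (2 * s * phi x₀ β C₀ l x 0) * (deriv (z x) 0) ^ 2)
          + s * (∫ t in Set.Ioo (0:ℝ) T, ∫ x in Ω, Real.exp (2 * s * phi x₀ β C₀ l x t) *
              ((deriv (z x) t) ^ 2 + ‖gradient (fun y => z y t) x‖ ^ 2))
          + s ^ 3 * (∫ t in Set.Ioo (0:ℝ) T, ∫ x in Ω,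
              Real.exp (2 * s * phi x₀ β C₀ l x t) * (z x t) ^ 2)
        ≤ M * ∫ t in Set.Ioo (0:ℝ) T, ∫ x in Ω, Real.exp (2 * s * phi x₀ β C₀ l x t) *
            (deriv (deriv (z x)) t - lap (fun y => z y t) x + q x * z x t) ^ 2 := by
  obtain ⟨hβ0, hβ1⟩ := hβ
  -- distance to x₀
  obtain ⟨δ, hδ0, hδ⟩ : ∃ δ > (0:ℝ), ∀ x ∈ closure Ω, δ ≤ ‖x - x₀‖ := by
    obtain ⟨δ, hδ0, hδ⟩ := Metric.isOpen_iff.1 isClosed_closure.isOpen_compl x₀ hx₀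
    refine ⟨δ, hδ0, fun x hx => ?_⟩
    by_contra hlt
    push Not at hlt
    exact hδ (by rwa [Metric.mem_ball, dist_eq_norm]) hx
  set R := sSup ((fun x => ‖x - x₀‖) '' Ω) with hR
  have hRx : ∀ x ∈ Ω, ‖x - x₀‖ ≤ R := by
    intro x hx
    refine le_csSup ?_ ⟨x, hx, rfl⟩
    obtain ⟨C, hC⟩ := hΩb.exists_norm_le
    refine ⟨C + ‖x₀‖, ?_⟩
    rintro _ ⟨y, hy, rfl⟩
    exact (norm_sub_le _ _).trans (by linarith [hC y hy])
  have hb : 0 < 1 - β := by linarith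
  obtain ⟨l, hl⟩ : ∃ l, l = 1 / ((1 - β) * δ ^ 2) := ⟨_, rfl⟩
  have hl0 : 0 < l := by rw [hl]; positivity
  refine ⟨l, hl0, fun m hm => ?_⟩
  set φ := Carl.ph x₀ β C₀ l with hφdef
  have hφ : Carl.Sm φ := Carl.ph_sm x₀ β C₀ l
  -- lower bound for φ
  obtain ⟨f0, hf00, hf0⟩ : ∃ f0 > (0:ℝ), ∀ p : Carl.X n, p.1 ∈ Set.Icc 0 T → p.2 ∈ closure Ω →
      f0 ≤ φ p := by
    obtain ⟨B, hB0, hB⟩ := Carl.cont_bdd T hΩb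
      (hφ.continuous.inv₀ (fun p => (Carl.ph_pos x₀ β C₀ l p).ne'))
    refine ⟨B⁻¹, by positivity, fun p h1 h2 => ?_⟩
    have hpos : 0 < φ p := Carl.ph_pos x₀ β C₀ l p
    have := (le_abs_self _).trans (hB p h1 h2)
    exact inv_le_of_inv_le₀ hpos this
  have hθ : Carl.Sm (fun p => Carl.box φ p + 2 * (1 + β) * l * φ p) :=
    hφ.box.add (contDiff_const.mul hφ)
  have hsub : ∀ p, (fun p => Carl.box φ p + 2 * (1 + β) * l * φ p) p - Carl.box φ p
      = 2 * (1 + β) * l * φ p := fun p => by simp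
  have hnorm : ∀ x : EuclideanSpace ℝ (Fin n), ‖x - x₀‖ ^ 2 = ∑ i : Fin n, (x i - x₀ i) ^ 2 := by
    intro x
    rw [EuclideanSpace.real_norm_sq_eq]
    simp
  obtain ⟨s₀, hs₀, M, hM, H⟩ := Carl.core T hT hΩo hΩb hφ hθ (2 * (1 - β) * l * f0)
    (8 * l ^ 3 * f0 ^ 3 * ((1 - β) * δ ^ 2)) (l * f0 * (β * T - R)) (by positivity) (by positivity)
    (mul_pos (by positivity) (by linarith))
    (fun p h1 h2 ξ => by
      rw [hsub]
      exact Carl.H1w x₀ β C₀ l hl0 hβ1 p f0 (hf0 p h1 h2) ξ)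
    (fun p h1 h2 => by
      rw [hsub]
      refine Carl.H2w x₀ β C₀ l δ hβ0 hβ1 hδ0 hl p f0 hf00 (hf0 p h1 h2) ?_
      rw [← hnorm]
      exact pow_le_pow_left₀ hδ0.le (hδ _ h2) 2)
    (fun x hx => by
      have hfx := hf0 (T, x) ⟨hT.le, le_rfl⟩ (subset_closure hx)
      have hfp : 0 < φ (T, x) := Carl.ph_pos x₀ β C₀ l (T, x)
      refine ⟨2 * l * φ (T, x) * ‖x - x₀‖, by positivity, ?_, ?_⟩
      · rw [mul_pow, hnorm, Finset.mul_sum]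
        refine le_of_eq (Finset.sum_congr rfl fun i _ => ?_)
        rw [hφdef, Carl.D_ph]
        simp only [Carl.et, Carl.yy]
        ring
      · rw [hφdef, Carl.D_ph]
        simp only [Carl.et, Carl.yy]
        rw [← hφdef]
        have h1 : 0 ≤ β * T - R := by linarith
        have h2 : l * f0 * (β * T - R) ≤ l * φ (T, x) * (β * T - R) := by gcongr
        have h3 : l * φ (T, x) * ‖x - x₀‖ ≤ l * φ (T, x) * R :=
          mul_le_mul_of_nonneg_left (hRx x hx) (by positivity)
        linarith)
    (fun x => by
      rw [hφdef, Carl.D_ph]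
      simp only [Carl.et, Carl.yy]
      ring) m
  refine ⟨s₀, hs₀, M, hM, ?_⟩
  intro q hqm hq s hs z hz hK hz0
  obtain ⟨K, hKc, hKΩ, hKz⟩ := hK
  obtain ⟨z', hz'⟩ : ∃ z' : Carl.X n → ℝ, z' = fun p => z p.2 p.1 := ⟨_, rfl⟩
  have hzS : Carl.Sm z' := by
    rw [hz']
    exact hz.comp (contDiff_snd.prodMk contDiff_fst)
  have hzv : Carl.Van K z' := fun p hp => by rw [hz']; exact hKz _ hp _
  have hz0' : ∀ x, z' (0, x) = 0 := by
    intro x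
    rw [hz']
    by_cases hx : x ∈ Ω
    · exact hz0 x hx
    · exact hKz x (fun h => hx (hKΩ h)) 0
  obtain ⟨hFi, hmain⟩ := H q hqm hq s hs z' hzS K hKc hKΩ hzv hz0'
  have hE : Carl.Sm (fun p => Real.exp (s * φ p)) := (contDiff_const.mul hφ).exp
  have hexp : ∀ x t, Real.exp (2 * s * phi x₀ β C₀ l x t) = Real.exp (s * φ (t, x)) ^ 2 := by
    intro x t
    rw [← Real.exp_nat_mul]
    congr 1
    simp only [hφdef, Carl.ph]
    push_cast
    ring
  have hd : ∀ x, deriv (z x) = fun t => Carl.D none z' (t, x) := by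
    intro x
    funext t
    have := (Carl.D_none hzS t x).deriv
    rw [← this, hz']
  have hdd : ∀ x t, deriv (deriv (z x)) t = Carl.D none (Carl.D none z') (t, x) := by
    intro x t
    rw [hd]
    exact (Carl.D_none (hzS.D none) t x).deriv
  have hsl : ∀ (i : Fin n) (x) (t : ℝ), fderiv ℝ (fun y => z y t) x (EuclideanSpace.single i 1)
      = Carl.D (some i) z' (t, x) := by
    intro i x t
    rw [Carl.D_some hzS, hz']
  have hlap : ∀ x t, lap (fun y => z y t) x = ∑ i : Fin n, Carl.D (some i) (Carl.D (some i) z') (t, x) := by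
    intro x t
    unfold lap
    refine Finset.sum_congr rfl fun i _ => ?_
    rw [Carl.D_some (hzS.D (some i))]
    simp_rw [hsl]
  have hbox : ∀ x t, deriv (deriv (z x)) t - lap (fun y => z y t) x = Carl.box z' (t, x) := by
    intro x t
    rw [hdd, hlap]
    unfold Carl.box
    rw [Fintype.sum_option]
    simp [Carl.ep, sub_eq_add_neg]
  have hgr : ∀ x t, (deriv (z x) t) ^ 2 + ‖gradient (fun y => z y t) x‖ ^ 2
      = ∑ a, (Carl.D a z' (t, x)) ^ 2 := by
    intro x t
    rw [Carl.grad_sq, Fintype.sum_option, hd]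
    simp_rw [hsl]
  have hzz : ∀ x t, z x t = z' (t, x) := by intro x t; rw [hz']
  have i1 : Integrable (fun p => Real.exp (s * φ p) ^ 2 * ∑ a, (Carl.D a z' p) ^ 2) (Carl.mu T Ω) :=
    Carl.cont_int T hΩo hΩb
      ((hE.pow 2).mul (ContDiff.sum fun a _ => (hzS.D a).pow 2)).continuous
  have i2 : Integrable (fun p => Real.exp (s * φ p) ^ 2 * (z' p) ^ 2) (Carl.mu T Ω) :=
    Carl.cont_int T hΩo hΩb ((hE.pow 2).mul (hzS.pow 2)).continuous
  rw [← Carl.iter T i1, ← Carl.iter T i2, ← Carl.iter T hFi] at hmain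
  have hd0 : ∀ x, deriv (z x) 0 = Carl.D none z' (0, x) := fun x => by rw [hd]
  simp_rw [hexp, hbox, hgr, hd0, hzz]
  exact hmain
end
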